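/- arXiv:math/0304462 — 2 statements merged into one kernel-verified Lean document; each statement's English description precedes it below -/
import Mathlib

section
/- For every convex body K in R^d there exist constants n_0, c_1, c_2 > 0 depending only on d such that for all n ≥ n_0, c_1 < n^{2/(d-1)} · (p(n,K))^{1/n} < c_2. -/
open MeasureTheory Set Filter
noncomputable section

/-- Euclidean space `ℝ^d`. -/
abbrev E (d : ℕ) := EuclideanSpace ℝ (Fin d)

/-- A set of points is in convex position if no point lies in the convex hull of the others. -/
def ConvexPosition {d : ℕ} (X : Set (E d)) : Prop :=
  ∀ x ∈ X, x ∉ convexHull ℝ (X \ {x})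

/-- The uniform (normalized Lebesgue) measure on `K`. -/
def unifOn (d : ℕ) (K : Set (E d)) : Measure (E d) :=
  (volume K)⁻¹ • volume.restrict K

/-- The distribution of `n` independent uniform points in `K`. -/
def sampleMeasure (d n : ℕ) (K : Set (E d)) : Measure (Fin n → E d) :=
  Measure.pi fun _ => unifOn d K

/-- `p(n,K)`: probability that `n` i.i.d. uniform points in `K` are in convex position. -/
def pConvex (d n : ℕ) (K : Set (E d)) : ℝ :=
  (sampleMeasure d n K {x | ConvexPosition (Set.range x)}).toReal

lemma exists_normalization (d : ℕ) (K : Set (E d)) (hK : IsCompact K) 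
    (hc : Convex ℝ K) (hi : (interior K).Nonempty) :
    ∃ (A : E d ≃ₗ[ℝ] E d) (v : E d),
      (∀ x : E d, (∀ i, 0 ≤ x i) → ∑ i, x i ≤ 1 → A x + v ∈ K) ∧
      (∀ x ∈ K, ∀ i, |A.symm (x - v) i| ≤ 1) := by
  classical
  obtain ⟨v, hv⟩ := hi
  have hvK : v ∈ K := interior_subset hv
  let b := (EuclideanSpace.basisFun (Fin d) ℝ).toBasis
  let G : (Fin d → E d) → ℝ := fun w => |b.det (fun i => w i - v)|
  have hG : Continuous G := by
    apply Continuous.abs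
    simp only [b, Module.Basis.det_apply]
    apply Continuous.matrix_det
    refine continuous_matrix fun i j => ?_
    simp [Module.Basis.toMatrix_apply]
    fun_prop
  have hcomp : IsCompact (Set.univ.pi fun _ : Fin d => K) := isCompact_univ_pi fun _ => hK
  obtain ⟨w, hw, hmax⟩ := hcomp.exists_isMaxOn ⟨fun _ => v, fun _ _ => hvK⟩ hG.continuousOn
  have hpos : 0 < G w := by
    obtain ⟨r, hr, hball⟩ := Metric.isOpen_iff.1 isOpen_interior v hv
    have h1 : (fun i => v + (r/2) • b i) ∈ (Set.univ.pi fun _ : Fin d => K) := by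
      intro i _
      apply interior_subset
      apply hball
      simp [b, norm_smul, abs_of_pos hr]
      linarith
    have h2 := hmax h1
    refine lt_of_lt_of_le ?_ h2
    simp only [G, add_sub_cancel_left]
    have : (fun i => (r/2) • b i) = fun i => (fun _ => r/2 : Fin d → ℝ) i • b i := rfl
    rw [this, AlternatingMap.map_smul_univ, Module.Basis.det_self]
    simp only [Finset.prod_const, smul_eq_mul, mul_one]
    exact abs_pos.2 (pow_ne_zero _ (by positivity))
  have hdet : b.det (fun i => w i - v) ≠ 0 := by
    intro h; simp [G, h] at hpos
  obtain ⟨hli, hsp⟩ := (Module.Basis.is_basis_iff_det b (v := fun i => w i - v)).2 (isUnit_iff_ne_zero.2 hdet)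
  let e := Module.Basis.mk hli hsp.ge
  have he : ∀ i, e i = w i - v := fun i => by simp [e]
  refine ⟨b.equiv e (Equiv.refl _), v, ?_, ?_⟩
  · intro x hx0 hx1
    have h1 : (b.equiv e (Equiv.refl _)) x = ∑ i, x i • (w i - v) := by
      conv_lhs => rw [← b.sum_repr x]
      simp only [map_sum, map_smul, Module.Basis.equiv_apply, Equiv.refl_apply, he]
      simp [b]
    rw [h1]
    have h2 : ∑ i, x i • (w i - v) + v = (1 - ∑ i, x i) • v + ∑ i, x i • w i := by
      simp only [smul_sub, Finset.sum_sub_distrib, sub_smul, Finset.sum_smul, one_smul]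
      abel
    rw [h2]
    have := hc.sum_mem (t := (Finset.univ : Finset (Option (Fin d))))
      (w := fun o => o.elim (1 - ∑ i, x i) x) (z := fun o => o.elim v w) ?_ ?_ ?_
    · simpa [Fintype.sum_option] using this
    · rintro (_|i) _
      · simpa using hx1
      · simpa using hx0 i
    · simp [Fintype.sum_option]
    · rintro (_|i) _
      · exact hvK
      · exact hw i trivial
  · intro x hx i
    set y := (b.equiv e (Equiv.refl _)).symm (x - v) with hy
    have h3 : y i = e.repr (x - v) i := by
      have : x - v = b.equiv e (Equiv.refl _) y := by rw [hy, LinearEquiv.apply_symm_apply]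
      rw [this]
      have h4 : (b.equiv e (Equiv.refl _)) y = ∑ i, y i • e i := by
        conv_lhs => rw [← b.sum_repr y]
        simp only [map_sum, map_smul, Module.Basis.equiv_apply, Equiv.refl_apply]
        simp [b]
      rw [h4]
      simp only [map_sum, map_smul, Module.Basis.repr_self]
      simp [Finsupp.single_apply]
    have h5 : b.det (Function.update (fun i => w i - v) i (x - v)) = y i * b.det (fun i => w i - v) := by
      have h6 := Module.Basis.det_smul_mk_coord_eq_det_update b hli hsp.ge i
      have h7 := congrArg (fun f => f (x - v)) h6
      simp only [LinearMap.smul_apply, smul_eq_mul] at h7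
      rw [h3, mul_comm]
      exact h7.symm
    have h8 : Function.update w i x ∈ (Set.univ.pi fun _ : Fin d => K) := by
      intro j _
      by_cases hj : j = i
      · subst hj; simpa using hx
      · simpa [hj] using hw j trivial
    have h9 := hmax h8
    simp only [G, Set.mem_ofPred_eq] at h9
    have h10 : (fun j => Function.update w i x j - v) = Function.update (fun i => w i - v) i (x - v) := by
      ext1 j
      by_cases hj : j = i
      · subst hj; simp
      · simp [hj]
    rw [h10, h5, abs_mul] at h9
    have : 0 < |b.det (fun i => w i - v)| := hpos
    nlinarith

lemma vol_section (k : ℕ) (j : Fin (k+1)) (S : Set (E (k+1))) (hS : MeasurableSet S) :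
    volume S = ∫⁻ y : Fin k → ℝ, volume {t : ℝ | WithLp.toLp 2 (j.insertNth t y) ∈ S} := by
  have h1 := (EuclideanSpace.volume_preserving_symm_measurableEquiv_toLp (Fin (k+1))).symm
  have h2 := (volume_preserving_piFinSuccAbove (fun _ : Fin (k+1) => ℝ) j).symm
  have h3 := h1.comp h2
  rw [← h3.measure_preimage hS.nullMeasurableSet, Measure.volume_eq_prod, Measure.prod_apply_symm]
  · rfl
  · exact h3.measurable hS

lemma lower_sets (k : ℕ) (hk : 1 ≤ k) : ∃ c : ℝ, 0 < c ∧ ∀ m : ℕ, 1 ≤ m →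
    ∃ C : (Fin k → Fin m) → Set (E (k+1)), (∀ g, MeasurableSet (C g)) ∧
      (∀ g, ∀ x ∈ C g, (∀ i, 0 ≤ x i) ∧ ∑ i, x i ≤ 1) ∧
      (∀ g, ENNReal.ofReal (c / (m:ℝ)^(k+2)) ≤ volume (C g)) ∧
      ∀ g, ∃ (f : E (k+1) →ₗ[ℝ] ℝ) (b : ℝ), (∀ x ∈ C g, f x < b) ∧
        ∀ g', g' ≠ g → ∀ x ∈ C g', b < f x := by
  have hd : (2:ℝ) ≤ (k:ℝ) + 1 := by
    have : (1:ℝ) ≤ k := by exact_mod_cast hk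
    linarith
  refine ⟨(1 / ((k:ℝ)+1)^2)^k * (1 / (4 * ((k:ℝ)+1)^3)), by positivity, ?_⟩
  intro m hm
  have hm' : (1:ℝ) ≤ m := by exact_mod_cast hm
  set D : ℝ := (k:ℝ) + 1 with hD
  have hDpos : 0 < D := by linarith
  set δ : ℝ := 1 / (D * m) with hδ
  have hδpos : 0 < δ := by positivity
  set a : ℝ := δ / (2 * D) with ha
  have hapos : 0 < a := by positivity
  set h : ℝ := δ^2 / (4 * D) with hh
  have hhpos : 0 < h := by positivity
  have hka : (k:ℝ) * a^2 ≤ δ^2 / 8 := by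
    have : (k:ℝ) * a^2 = δ^2 * (k / (4 * D^2)) := by rw [ha]; field_simp; norm_num
    rw [this]
    have : (k:ℝ) / (4 * D^2) ≤ 1/8 := by
      rw [div_le_div_iff₀ (by positivity) (by norm_num)]
      nlinarith
    nlinarith [sq_nonneg δ]
  have hh8 : h ≤ δ^2 / 8 := by
    rw [hh]
    apply div_le_div_of_nonneg_left (by positivity) (by norm_num)
    linarith
  have ha4 : a ≤ δ / 4 := by
    rw [ha]
    apply div_le_div_of_nonneg_left (by positivity) (by norm_num)
    linarith
  let Y : (Fin k → Fin m) → Fin k → ℝ := fun g i => ((g i : ℕ) + 1/2) * δ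
  let C : (Fin k → Fin m) → Set (E (k+1)) := fun g =>
    {x | (∀ i : Fin k, x i.succ ∈ Ioo (Y g i - a) (Y g i + a)) ∧
      x 0 ∈ Ioo (∑ i : Fin k, x i.succ ^ 2) (∑ i : Fin k, x i.succ ^ 2 + h)}
  have hCm : ∀ g, MeasurableSet (C g) := by
    intro g
    apply IsOpen.measurableSet
    have : C g = (⋂ i : Fin k, {x | x i.succ ∈ Ioo (Y g i - a) (Y g i + a)}) ∩
        ({x | ∑ i : Fin k, x i.succ ^ 2 < x 0} ∩ {x | x 0 < ∑ i : Fin k, x i.succ ^ 2 + h}) := by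
      ext x
      simp [C]
    rw [this]
    apply IsOpen.inter
    · apply isOpen_iInter_of_finite
      intro i
      exact isOpen_Ioo.preimage (by fun_prop : Continuous fun x : E (k+1) => x i.succ)
    · exact (isOpen_lt (by fun_prop) (by fun_prop)).inter (isOpen_lt (by fun_prop) (by fun_prop))
  have hmδ : (m:ℝ) * δ = 1 / D := by rw [hδ]; field_simp
  have hbd : ∀ g, ∀ x ∈ C g, ∀ i : Fin k, 0 ≤ x i.succ ∧ x i.succ ≤ 1 / D := by
    intro g x hx i
    have h1 := hx.1 i
    have h2 : ((g i : ℕ) : ℝ) + 1 ≤ m := by exact_mod_cast (g i).2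
    have h3 : (0:ℝ) ≤ ((g i : ℕ) : ℝ) := by positivity
    simp only [Y, mem_Ioo] at h1
    constructor
    · nlinarith
    · rw [← hmδ]; nlinarith
  refine ⟨C, hCm, ?_, ?_, ?_⟩
  · intro g x hx
    have hb := hbd g x hx
    have hs0 : 0 ≤ ∑ i : Fin k, x i.succ ^ 2 := Finset.sum_nonneg fun i _ => sq_nonneg _
    refine ⟨fun i => ?_, ?_⟩
    · refine Fin.cases ?_ (fun i => (hb i).1) i
      exact hs0.trans hx.2.1.le
    · rw [Fin.sum_univ_succ]
      have h1 : ∑ i : Fin k, x i.succ ≤ k * (1 / D) := by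
        have := Finset.sum_le_sum (s := Finset.univ) fun i _ => (hb i).2
        simpa using this
      have h2 : ∑ i : Fin k, x i.succ ^ 2 ≤ k * (1 / D)^2 := by
        have := Finset.sum_le_sum (s := Finset.univ) (f := fun i : Fin k => x i.succ ^ 2)
          (g := fun _ => (1/D)^2) fun i _ => pow_le_pow_left₀ (hb i).1 (hb i).2 2
        simpa using this
      have h3 := hx.2.2
      have h4 : δ ≤ 1 / D := by rw [← hmδ]; nlinarith
      have h5 : δ^2 ≤ (1/D)^2 := pow_le_pow_left₀ hδpos.le h4 2
      have h6 : k * (1/D)^2 + (1/D)^2 = 1/D := by field_simp; exact hD.symm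
      have h7 : k * (1/D) + 1/D = 1 := by field_simp; exact hD.symm
      nlinarith
  · intro g
    rw [vol_section k 0 _ (hCm g)]
    have h1 : ∀ y : Fin k → ℝ, volume {t : ℝ | WithLp.toLp 2 ((0 : Fin (k+1)).insertNth t y) ∈ C g} =
        (Set.univ.pi fun i => Ioo (Y g i - a) (Y g i + a)).indicator (fun _ => ENNReal.ofReal h) y := by
      intro y
      by_cases hy : y ∈ (Set.univ.pi fun i => Ioo (Y g i - a) (Y g i + a))
      · rw [Set.indicator_of_mem hy]
        have : {t : ℝ | WithLp.toLp 2 ((0 : Fin (k+1)).insertNth t y) ∈ C g} =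
            Ioo (∑ i : Fin k, y i ^ 2) (∑ i : Fin k, y i ^ 2 + h) := by
          ext t
          have hy' : ∀ i, y i ∈ Ioo (Y g i - a) (Y g i + a) := fun i => hy i trivial
          simp only [mem_Ioo] at hy'
          simp [C, hy']
        rw [this, Real.volume_Ioo]
        congr 1; ring
      · rw [Set.indicator_of_notMem hy]
        have : {t : ℝ | WithLp.toLp 2 ((0 : Fin (k+1)).insertNth t y) ∈ C g} = ∅ := by
          ext t
          simp only [Set.mem_ofPred_eq, Set.mem_empty_iff_false, iff_false]
          intro hx
          apply hy
          intro i _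
          have := hx.1 i
          simpa using this
        rw [this, measure_empty]
    simp_rw [h1]
    rw [lintegral_indicator (MeasurableSet.univ_pi fun i => measurableSet_Ioo), lintegral_const,
      Measure.restrict_apply_univ, Real.volume_pi_Ioo]
    have h2 : ∀ i, (Y g i + a) - (Y g i - a) = 2 * a := fun i => by ring
    simp_rw [h2]
    rw [← ENNReal.ofReal_prod_of_nonneg (fun _ _ => by positivity), ← ENNReal.ofReal_mul hhpos.le]
    apply ENNReal.ofReal_le_ofReal
    apply le_of_eq
    simp only [Finset.prod_const, Finset.card_univ, Fintype.card_fin]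
    have e1 : 2 * a = (1 / D^2) * (1/m) := by rw [ha, hδ]; field_simp
    have e2 : h = (1 / (4 * D^3)) * (1/m)^2 := by rw [hh, hδ]; field_simp
    rw [e1, e2, mul_pow, pow_add, div_eq_mul_inv, mul_inv]
    simp only [one_div, inv_pow]
    ring
  · intro g
    let p : Fin (k+1) → (E (k+1) →ₗ[ℝ] ℝ) := fun i => (EuclideanSpace.proj i : E (k+1) →L[ℝ] ℝ).toLinearMap
    have hp : ∀ i x, p i x = x i := fun i x => rfl
    refine ⟨p 0 - ∑ i : Fin k, (2 * Y g i) • p i.succ, δ^2/4 - ∑ i, Y g i ^ 2, ?_, ?_⟩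
    · intro x hx
      simp only [LinearMap.sub_apply, LinearMap.sum_apply, LinearMap.smul_apply, hp, smul_eq_mul]
      have h1 : ∑ i : Fin k, (x i.succ - Y g i)^2 ≤ k * a^2 := by
        have := Finset.sum_le_sum (s := Finset.univ) (f := fun i : Fin k => (x i.succ - Y g i)^2)
          (g := fun _ => a^2) fun i _ => by
            have := hx.1 i
            simp only [mem_Ioo] at this
            apply sq_le_sq'  <;> linarith
        simpa using this
      have h2 : ∑ i : Fin k, (x i.succ - Y g i)^2 =
          ∑ i : Fin k, x i.succ ^ 2 - ∑ i : Fin k, 2 * Y g i * x i.succ + ∑ i, Y g i ^ 2 := by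
        rw [← Finset.sum_sub_distrib, ← Finset.sum_add_distrib]
        exact Finset.sum_congr rfl fun i _ => by ring
      have := hx.2.2
      linarith
    · intro g' hg' x hx
      simp only [LinearMap.sub_apply, LinearMap.sum_apply, LinearMap.smul_apply, hp, smul_eq_mul]
      obtain ⟨i, hi⟩ := Function.ne_iff.1 hg'
      have h0 : δ^2/4 < (x i.succ - Y g i)^2 := by
        have h1 := hx.1 i
        simp only [mem_Ioo, Y] at h1 ⊢
        rcases lt_or_gt_of_ne hi with hlt | hlt
        · have : ((g' i : ℕ) : ℝ) + 1 ≤ (g i : ℕ) := by exact_mod_cast hlt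
          have : x i.succ ≤ ((g i : ℕ) + 1/2) * δ - 3/4 * δ := by nlinarith
          nlinarith
        · have : ((g i : ℕ) : ℝ) + 1 ≤ (g' i : ℕ) := by exact_mod_cast hlt
          have : ((g i : ℕ) + 1/2) * δ + 3/4 * δ ≤ x i.succ := by nlinarith
          nlinarith
      have h1 : (x i.succ - Y g i)^2 ≤ ∑ i : Fin k, (x i.succ - Y g i)^2 :=
        Finset.single_le_sum (f := fun i : Fin k => (x i.succ - Y g i)^2)
          (fun i _ => sq_nonneg _) (Finset.mem_univ i)
      have h2 : ∑ i : Fin k, (x i.succ - Y g i)^2 =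
          ∑ i : Fin k, x i.succ ^ 2 - ∑ i : Fin k, 2 * Y g i * x i.succ + ∑ i, Y g i ^ 2 := by
        rw [← Finset.sum_sub_distrib, ← Finset.sum_add_distrib]
        exact Finset.sum_congr rfl fun i _ => by ring
      have := hx.2.1
      linarith

lemma vol_affine (d : ℕ) (A : E d ≃ₗ[ℝ] E d) (v : E d) (S : Set (E d)) :
    volume {x | A.symm (x - v) ∈ S} =
      ENNReal.ofReal |LinearMap.det (A : E d →ₗ[ℝ] E d)| * volume S := by
  rw [← Measure.addHaar_image_linearMap]
  have : {x | A.symm (x - v) ∈ S} = (fun x => x + (-v)) ⁻¹' ((A : E d →ₗ[ℝ] E d) '' S) := by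
    ext x
    simp only [Set.mem_ofPred_eq, Set.mem_preimage, Set.mem_image, LinearEquiv.coe_coe, ← sub_eq_add_neg]
    constructor
    · intro h
      exact ⟨_, h, by simp⟩
    · rintro ⟨y, hy, h⟩
      rw [← h]
      simpa using hy
  rw [this, measure_preimage_add_right]

lemma meas_affine (d : ℕ) (A : E d ≃ₗ[ℝ] E d) (v : E d) (S : Set (E d)) (hS : MeasurableSet S) :
    MeasurableSet {x | A.symm (x - v) ∈ S} := by
  have hc : Continuous (fun x => A.symm (x - v)) :=
    (LinearMap.continuous_of_finiteDimensional (A.symm : E d →ₗ[ℝ] E d)).comp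
      (continuous_id.sub continuous_const)
  exact hc.measurable hS

lemma vol_box (d : ℕ) (a b : ℝ) :
    volume {x : E d | ∀ i, x i ∈ Icc a b} = ENNReal.ofReal (b - a) ^ d := by
  have h1 := EuclideanSpace.volume_preserving_symm_measurableEquiv_toLp (Fin d)
  have h2 : {x : E d | ∀ i, x i ∈ Icc a b} =
      (MeasurableEquiv.toLp 2 (Fin d → ℝ)).symm ⁻¹' (Set.univ.pi fun _ => Icc a b) := by
    ext x
    exact ⟨fun h i _ => h i, fun h i => h i trivial⟩
  rw [h2, h1.measure_preimage (MeasurableSet.univ_pi fun _ => measurableSet_Icc).nullMeasurableSet,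
    volume_pi_pi]
  simp

lemma exists_normalization' (d : ℕ) (hd : 1 ≤ d) (K : Set (E d)) (hK : IsCompact K)
    (hc : Convex ℝ K) (hi : (interior K).Nonempty) :
    IsProbabilityMeasure (unifOn d K) ∧ ∃ (A : E d ≃ₗ[ℝ] E d) (v : E d),
      (∀ x ∈ K, ∀ i, |A.symm (x - v) i| ≤ 1) ∧
      (∀ S, MeasurableSet S → (∀ x ∈ S, (∀ i, 0 ≤ x i) ∧ ∑ i, x i ≤ 1) →
        ENNReal.ofReal ((1/2)^d) * volume S ≤ unifOn d K {x | A.symm (x - v) ∈ S}) ∧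
      (∀ S, MeasurableSet S → 
        unifOn d K {x | A.symm (x - v) ∈ S} ≤ ENNReal.ofReal ((d:ℝ)^d) * volume S) := by
  have h0 : volume K ≠ 0 := by
    have := (isOpen_interior.measure_pos volume hi)
    exact (this.trans_le (measure_mono interior_subset)).ne'
  have htop : volume K ≠ ⊤ := hK.measure_lt_top.ne
  obtain ⟨A, v, hin, hout⟩ := exists_normalization d K hK hc hi
  set δ := ENNReal.ofReal |LinearMap.det (A : E d →ₗ[ℝ] E d)| with hδ
  have hle : volume K ≤ δ * 2 ^ d := by
    have h1 : K ⊆ {x | A.symm (x - v) ∈ {x : E d | ∀ i, x i ∈ Icc (-1) 1}} := by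
      intro x hx i
      exact abs_le.1 (hout x hx i)
    have h2 := measure_mono (μ := volume) h1
    rw [vol_affine, vol_box] at h2
    refine h2.trans (le_of_eq ?_)
    norm_num
    rfl
  have hge : δ ≤ ENNReal.ofReal ((d:ℝ)^d) * volume K := by
    have h1 : {x | A.symm (x - v) ∈ {x : E d | ∀ i, x i ∈ Icc 0 (1/(d:ℝ))}} ⊆ K := by
      intro x hx
      have := hin (A.symm (x - v)) (fun i => (hx i).1) ?_
      · simpa using this
      · have h3 := Finset.sum_le_sum (s := Finset.univ) fun i _ => (hx i).2
        have hd' : (d:ℝ) ≠ 0 := by positivity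
        simpa [hd'] using h3
    have h2 := measure_mono (μ := volume) h1
    rw [vol_affine, vol_box, ← hδ] at h2
    calc δ = ENNReal.ofReal ((d:ℝ)^d) * (δ * ENNReal.ofReal (1 / (d:ℝ) - 0) ^ d) := by
          rw [sub_zero, mul_left_comm, ← ENNReal.ofReal_pow (by positivity), ← ENNReal.ofReal_mul (by positivity),
            ← mul_pow]
          have hd' : (d:ℝ) ≠ 0 := by positivity
          simp [hd']
      _ ≤ _ := by gcongr
  refine ⟨⟨?_⟩, A, v, hout, ?_, ?_⟩
  · simp [unifOn, ENNReal.inv_mul_cancel h0 htop]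
  · intro S hS hsub
    have hsubK : {x | A.symm (x - v) ∈ S} ⊆ K := by
      intro x hx
      have := hin (A.symm (x - v)) (hsub _ hx).1 (hsub _ hx).2
      simpa using this
    rw [unifOn, Measure.smul_apply, smul_eq_mul, Measure.restrict_apply (meas_affine d A v S hS),
      Set.inter_eq_left.2 hsubK, vol_affine, ← hδ, ← mul_assoc]
    gcongr
    rw [← ENNReal.div_eq_inv_mul, ENNReal.le_div_iff_mul_le (Or.inl h0) (Or.inl htop)]
    calc ENNReal.ofReal ((1/2)^d) * volume K ≤ ENNReal.ofReal ((1/2)^d) * (δ * 2^d) := by gcongr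
      _ = δ := by
        rw [mul_left_comm]
        have : (2:ENNReal)^d = ENNReal.ofReal (2^d) := by
          rw [ENNReal.ofReal_pow (by norm_num)]; norm_num
        rw [this, ← ENNReal.ofReal_mul (by positivity), ← mul_pow]
        norm_num
  · intro S hS
    rw [unifOn, Measure.smul_apply, smul_eq_mul]
    calc (volume K)⁻¹ * (volume.restrict K) {x | A.symm (x - v) ∈ S}
        ≤ (volume K)⁻¹ * volume {x | A.symm (x - v) ∈ S} := by
          gcongr; exact Measure.restrict_le_self
      _ = (volume K)⁻¹ * δ * volume S := by rw [vol_affine, ← hδ, mul_assoc]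
      _ ≤ (volume K)⁻¹ * (ENNReal.ofReal ((d:ℝ)^d) * volume K) * volume S := by gcongr
      _ = _ := by
        rw [mul_left_comm, ENNReal.inv_mul_cancel h0 htop, mul_one]

lemma lower_aux (k : ℕ) (hk : 1 ≤ k) : ∃ c : ℝ, 0 < c ∧ ∀ K : Set (E (k+1)), IsCompact K →
    Convex ℝ K → (interior K).Nonempty → ∀ m n : ℕ, 1 ≤ m → n ≤ m^k →
      (n.factorial : ℝ) * (c / (m:ℝ)^(k+2))^n ≤ pConvex (k+1) n K := by
  obtain ⟨c, hc, H⟩ := lower_sets k hk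
  refine ⟨(1/2)^(k+1) * c, by positivity, ?_⟩
  intro K hK hcv hi m n hm hn
  obtain ⟨C, hCm, hCs, hCv, hCf⟩ := H m hm
  obtain ⟨hprob, A, v, hout, hlow, -⟩ := exists_normalization' (k+1) (by omega) K hK hcv hi
  let T : (Fin k → Fin m) → Set (E (k+1)) := fun g => {x | A.symm (x - v) ∈ C g}
  have hTm : ∀ g, MeasurableSet (T g) := fun g => meas_affine _ A v _ (hCm g)
  have hTv : ∀ g, ENNReal.ofReal ((1/2)^(k+1) * c / (m:ℝ)^(k+2)) ≤ unifOn (k+1) K (T g) := by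
    intro g
    refine le_trans ?_ (hlow (C g) (hCm g) (hCs g))
    rw [mul_div_assoc, ENNReal.ofReal_mul (by positivity)]
    gcongr
    exact hCv g
  have hdisj : ∀ g g' x, x ∈ T g → x ∈ T g' → g = g' := by
    intro g g' x h1 h2
    by_contra hne
    obtain ⟨f, b, hf1, hf2⟩ := hCf g
    exact absurd (hf1 _ h1) (not_lt.2 (hf2 g' (Ne.symm hne) _ h2).le)
  let Ev : (Fin n ↪ (Fin k → Fin m)) → Set (Fin n → E (k+1)) := fun σ => Set.univ.pi fun i => T (σ i)
  have hEv : (⋃ σ, Ev σ) ⊆ {x | ConvexPosition (Set.range x)} := by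
    intro x hx
    obtain ⟨σ, hσ⟩ := Set.mem_iUnion.1 hx
    rintro _ ⟨i, rfl⟩ hmem
    obtain ⟨f, b, hf1, hf2⟩ := hCf (σ i)
    have hsub : Set.range x \ {x i} ⊆ {y | b < (f ∘ₗ (A.symm : E (k+1) →ₗ[ℝ] E (k+1))) y - f (A.symm v)} := by
      rintro _ ⟨⟨j, rfl⟩, hj⟩
      have hne : j ≠ i := fun h => hj (by simp [h])
      have := hf2 (σ j) (fun h => hne (σ.injective h)) _ (hσ j trivial)
      simpa using this
    have hconv : Convex ℝ {y | b < (f ∘ₗ (A.symm : E (k+1) →ₗ[ℝ] E (k+1))) y - f (A.symm v)} := by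
      have := convex_halfSpace_gt (𝕜 := ℝ) (f ∘ₗ (A.symm : E (k+1) →ₗ[ℝ] E (k+1))).isLinear (b + f (A.symm v))
      simp only [lt_sub_iff_add_lt]
      exact this
    have h1 := convexHull_min hsub hconv hmem
    have h2 := hf1 _ (hσ i trivial)
    simp at h1 h2
    linarith
  have hfin : sampleMeasure (k+1) n K {x | ConvexPosition (Set.range x)} ≠ ⊤ := by
    have : IsProbabilityMeasure (sampleMeasure (k+1) n K) := by
      unfold sampleMeasure; infer_instance
    exact measure_ne_top _ _
  rw [pConvex, ← ENNReal.ofReal_le_iff_le_toReal hfin]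
  refine le_trans ?_ (measure_mono hEv)
  rw [measure_iUnion]
  · have h1 : ∀ σ, ENNReal.ofReal (((1/2)^(k+1) * c / (m:ℝ)^(k+2))^n) ≤ sampleMeasure (k+1) n K (Ev σ) := by
      intro σ
      simp only [sampleMeasure, Ev]
      rw [Measure.pi_pi, ENNReal.ofReal_pow (by positivity)]
      have := Finset.prod_le_prod' (s := Finset.univ) (f := fun _ : Fin n => ENNReal.ofReal ((1/2)^(k+1) * c / (m:ℝ)^(k+2)))
        (g := fun i => unifOn (k+1) K (T (σ i))) fun i _ => hTv (σ i)
      simpa using this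
    rw [tsum_fintype]
    refine le_trans ?_ (Finset.sum_le_sum fun σ _ => h1 σ)
    rw [Finset.sum_const, Finset.card_univ, Fintype.card_embedding_eq, nsmul_eq_mul,
      ENNReal.ofReal_mul (by positivity), ENNReal.ofReal_natCast]
    gcongr
    simp only [Fintype.card_fun, Fintype.card_fin]
    rw [Nat.descFactorial_eq_factorial_mul_choose]
    exact Nat.le_mul_of_pos_right _ (Nat.choose_pos hn)
  · intro σ τ hne
    rw [Function.onFun, Set.disjoint_left]
    intro x h1 h2
    apply hne
    ext1 i
    exact hdisj _ _ _ (h1 i trivial) (h2 i trivial)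
  · intro σ
    exact MeasurableSet.univ_pi fun i => hTm _

lemma lower_main (k : ℕ) (hk : 1 ≤ k) : ∃ c : ℝ, 0 < c ∧ ∀ K : Set (E (k+1)), IsCompact K →
    Convex ℝ K → (interior K).Nonempty → ∀ n : ℕ, 1 ≤ n →
      c < (n:ℝ)^((2:ℝ)/k) * (pConvex (k+1) n K)^((1:ℝ)/n) := by
  obtain ⟨c, hc, H⟩ := lower_aux k hk
  refine ⟨c / (Real.exp 1 * 2^(k+2)) / 2, by positivity, ?_⟩
  intro K hK hcv hi n hn
  have hk' : (0:ℝ) < k := by exact_mod_cast hk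
  have hn' : (1:ℝ) ≤ n := by exact_mod_cast hn
  have hn0 : (0:ℝ) < n := by linarith
  set q : ℝ := (n:ℝ)^((1:ℝ)/k) with hq
  have hq1 : 1 ≤ q := Real.one_le_rpow hn' (by positivity)
  have hqk : q ^ k = n := by
    rw [hq, ← Real.rpow_natCast, ← Real.rpow_mul hn0.le, one_div, inv_mul_cancel₀ hk'.ne', Real.rpow_one]
  have hq2 : (n:ℝ)^((2:ℝ)/k) = q^2 := by
    rw [hq, ← Real.rpow_natCast, ← Real.rpow_mul hn0.le]; congr 1; push_cast; ring
  set m := ⌈q⌉₊ with hm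
  have hmq : q ≤ m := Nat.le_ceil q
  have hm2 : (m:ℝ) ≤ 2 * q := by
    have := Nat.ceil_lt_add_one (a := q) (by linarith)
    linarith
  have hm1 : 1 ≤ m := by
    have : (1:ℝ) ≤ m := by linarith
    exact_mod_cast this
  have hnm : n ≤ m^k := by
    have : (n:ℝ) ≤ (m:ℝ)^k := by rw [← hqk]; gcongr
    exact_mod_cast this
  have h1 := H K hK hcv hi m n hm1 hnm
  have hfac : ((n:ℝ) / Real.exp 1)^n ≤ n.factorial := by
    have := Real.pow_div_factorial_le_exp (n:ℝ) hn0.le n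
    rw [div_le_iff₀ (by positivity)] at this
    rw [div_pow, ← Real.exp_nat_mul, mul_one, div_le_iff₀ (by positivity), mul_comm]
    exact this
  have h2 : (c / (Real.exp 1 * 2^(k+2)) / q^2)^n ≤ pConvex (k+1) n K := by
    refine le_trans ?_ h1
    calc (c / (Real.exp 1 * 2^(k+2)) / q^2)^n = ((n:ℝ) / Real.exp 1)^n * (c / (2 * q)^(k+2))^n := by
          rw [← mul_pow]; congr 1
          rw [mul_pow, pow_add q, hqk]; field_simp
      _ ≤ n.factorial * (c / (m:ℝ)^(k+2))^n := by
          gcongr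
  have h3 : c / (Real.exp 1 * 2^(k+2)) / q^2 ≤ (pConvex (k+1) n K)^((1:ℝ)/n) := by
    have := Real.rpow_le_rpow (by positivity) h2 (by positivity : (0:ℝ) ≤ 1 / n)
    rwa [← Real.rpow_natCast, ← Real.rpow_mul (by positivity), mul_one_div_cancel hn0.ne', Real.rpow_one] at this
  rw [hq2]
  have hq0 : 0 < q^2 := by positivity
  rw [div_le_iff₀ hq0] at h3
  have : 0 < c / (Real.exp 1 * 2^(k+2)) := by positivity
  rw [mul_comm (q^2)]
  linarith

/-- Squared distance to a set. -/
def distSq {d : ℕ} (L : Set (E d)) (z : E d) : ℝ := (Metric.infDist z L)^2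

lemma distSq_le {d : ℕ} (L : Set (E d)) (z p : E d) (hp : p ∈ L) : distSq L z ≤ ‖z - p‖^2 := by
  rw [distSq, ← dist_eq_norm]
  exact pow_le_pow_left₀ Metric.infDist_nonneg (Metric.infDist_le_dist_of_mem hp) 2

lemma distSq_attained {d : ℕ} (L : Set (E d)) (hL : IsCompact L) (hne : L.Nonempty) (z : E d) :
    ∃ p ∈ L, distSq L z = ‖z - p‖^2 := by
  obtain ⟨p, hp, h⟩ := hL.exists_infDist_eq_dist hne z
  exact ⟨p, hp, by rw [distSq, h, dist_eq_norm]⟩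

lemma distSq_secdiff {d : ℕ} (L : Set (E d)) (hL : IsCompact L) (hc : Convex ℝ L) (hne : L.Nonempty)
    (z h : E d) : 0 ≤ distSq L (z + h) - 2 * distSq L z + distSq L (z - h) ∧
      distSq L (z + h) - 2 * distSq L z + distSq L (z - h) ≤ 2 * ‖h‖^2 := by
  constructor
  · obtain ⟨p, hp, h1⟩ := distSq_attained L hL hne (z + h)
    obtain ⟨q, hq, h2⟩ := distSq_attained L hL hne (z - h)
    have hm : (1/2:ℝ) • p + (1/2:ℝ) • q ∈ L := hc hp hq (by norm_num) (by norm_num) (by norm_num)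
    have h3 := distSq_le L z _ hm
    have h4 : z - ((1/2:ℝ) • p + (1/2:ℝ) • q) = (1/2:ℝ) • ((z + h - p) + (z - h - q)) := by
      module
    rw [h4, norm_smul, mul_pow] at h3
    have h5 := parallelogram_law_with_norm ℝ (z + h - p) (z - h - q)
    have h6 := norm_nonneg ((z + h - p) - (z - h - q))
    rw [h1, h2]
    norm_num at h3
    nlinarith
  · obtain ⟨p, hp, h1⟩ := distSq_attained L hL hne z
    have h2 := distSq_le L (z + h) p hp
    have h3 := distSq_le L (z - h) p hp
    have h5 := parallelogram_law_with_norm ℝ (z - p) h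
    have e1 : z + h - p = z - p + h := by abel
    have e2 : z - h - p = z - p - h := by abel
    rw [e1] at h2
    rw [e2] at h3
    rw [h1]
    nlinarith

/-- Grid points on the boundary of the cube `[-2,2]^d`. -/
def gridPt (k m : ℕ) (l : Fin (k+2) × Bool × (Fin k → Fin (4*m+1))) (a : ℕ) : E (k+2) :=
  WithLp.toLp 2 (l.1.insertNth (if l.2.1 then (2:ℝ) else -2)
    (Fin.cons (-2 + (a:ℝ)/m) (fun i => -2 + ((l.2.2 i : ℕ):ℝ)/m) : Fin (k+1) → ℝ))

lemma gridPt_step (k m : ℕ) (l : Fin (k+2) × Bool × (Fin k → Fin (4*m+1))) (a : ℕ) :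
    gridPt k m l (a+1) = gridPt k m l a + EuclideanSpace.single (l.1.succAbove 0) (1/(m:ℝ)) := by
  ext i
  refine Fin.succAboveCases l.1 ?_ (fun i => ?_) i
  · simp [gridPt, (Fin.succAbove_ne _ _).symm]
  · refine Fin.cases ?_ (fun i => ?_) i
    · simp [gridPt]; ring
    · simp [gridPt]

/-- Discretised squared distance function. -/
def discr (k m : ℕ) (L : Set (E (k+2))) (l : Fin (k+2) × Bool × (Fin k → Fin (4*m+1))) (a : ℕ) : ℤ :=
  ⌊(m:ℝ)^2 * distSq L (gridPt k m l a)⌋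

lemma discr_secdiff (k m : ℕ) (hm : 1 ≤ m) (L : Set (E (k+2))) (hL : IsCompact L) (hc : Convex ℝ L)
    (hne : L.Nonempty) (l : Fin (k+2) × Bool × (Fin k → Fin (4*m+1))) (a : ℕ) :
    discr k m L l (a+2) - 2 * discr k m L l (a+1) + discr k m L l a ∈ Finset.Icc (-1:ℤ) 3 := by
  have hm' : (0:ℝ) < m := by exact_mod_cast hm
  set h : E (k+2) := EuclideanSpace.single (l.1.succAbove 0) (1/(m:ℝ)) with hh
  have e1 : gridPt k m l (a+2) = gridPt k m l (a+1) + h := gridPt_step k m l (a+1)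
  have e2 : gridPt k m l a = gridPt k m l (a+1) - h := by rw [gridPt_step k m l a]; simp [hh]
  have hn : (m:ℝ)^2 * ‖h‖^2 = 1 := by
    rw [hh, PiLp.norm_single, Real.norm_eq_abs, sq_abs]; field_simp
  obtain ⟨h1, h2⟩ := distSq_secdiff L hL hc hne (gridPt k m l (a+1)) h
  simp only [discr]
  rw [e1, e2]
  set z := gridPt k m l (a+1)
  have f1 := Int.floor_le ((m:ℝ)^2 * distSq L (z + h))
  have f2 := Int.lt_floor_add_one ((m:ℝ)^2 * distSq L (z + h))
  have f3 := Int.floor_le ((m:ℝ)^2 * distSq L z)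
  have f4 := Int.lt_floor_add_one ((m:ℝ)^2 * distSq L z)
  have f5 := Int.floor_le ((m:ℝ)^2 * distSq L (z - h))
  have f6 := Int.lt_floor_add_one ((m:ℝ)^2 * distSq L (z - h))
  have hm2 : (0:ℝ) < (m:ℝ)^2 := by positivity
  have g1 := mul_nonneg hm2.le h1
  have g2 := mul_le_mul_of_nonneg_left h2 hm2.le
  rw [Finset.mem_Icc]
  constructor
  · rw [← Int.sub_one_lt_iff]
    have : ((-1 - 1 : ℤ):ℝ) < ((⌊(m:ℝ)^2 * distSq L (z + h)⌋ - 2 * ⌊(m:ℝ)^2 * distSq L z⌋ + ⌊(m:ℝ)^2 * distSq L (z - h)⌋ : ℤ) : ℝ) := by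
      push_cast; nlinarith
    exact_mod_cast this
  · rw [← Int.lt_add_one_iff]
    have : ((⌊(m:ℝ)^2 * distSq L (z + h)⌋ - 2 * ⌊(m:ℝ)^2 * distSq L z⌋ + ⌊(m:ℝ)^2 * distSq L (z - h)⌋ : ℤ) : ℝ) < ((3 + 1 : ℤ):ℝ) := by
      push_cast; nlinarith
    exact_mod_cast this

lemma gridPt_bound (k m : ℕ) (hm : 1 ≤ m) (l : Fin (k+2) × Bool × (Fin k → Fin (4*m+1))) (a : ℕ)
    (ha : a ≤ 4*m) (i) : |gridPt k m l a i| ≤ 2 := by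
  have hm' : (0:ℝ) < m := by exact_mod_cast hm
  have key : ∀ b : ℕ, b ≤ 4*m → |-2 + (b:ℝ)/m| ≤ 2 := by
    intro b hb
    have hb' : (b:ℝ) ≤ 4*m := by exact_mod_cast hb
    have h1 : (b:ℝ)/m ≤ 4 := by rw [div_le_iff₀ hm']; exact hb'
    have h2 : 0 ≤ (b:ℝ)/m := by positivity
    rw [abs_le]; constructor <;> linarith
  refine Fin.succAboveCases l.1 ?_ (fun i => ?_) i
  · simp only [gridPt, Fin.insertNth_apply_same]
    split_ifs <;> norm_num
  · refine Fin.cases ?_ (fun i => ?_) i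
    · simpa [gridPt] using key a ha
    · simpa [gridPt] using key (l.2.2 i) (by omega)

lemma discr_bound (k m : ℕ) (hm : 1 ≤ m) (L : Set (E (k+2))) (hne : L.Nonempty)
    (hcube : ∀ x ∈ L, ∀ i, |x i| ≤ 1)
    (l : Fin (k+2) × Bool × (Fin k → Fin (4*m+1))) (a : ℕ) (ha : a ≤ 4*m) :
    discr k m L l a ∈ Finset.Icc (0:ℤ) (9 * (k+2) * m^2) := by
  obtain ⟨x, hx⟩ := hne
  rw [Finset.mem_Icc]
  constructor
  · apply Int.floor_nonneg.2
    rw [distSq]; positivity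
  · have h1 := distSq_le L (gridPt k m l a) x hx
    have h2 : ‖gridPt k m l a - x‖^2 ≤ 9 * (k+2) := by
      rw [EuclideanSpace.norm_sq_eq]
      have := Finset.sum_le_sum (s := Finset.univ) (f := fun i => ‖(gridPt k m l a - x) i‖^2)
        (g := fun _ : Fin (k+2) => (9:ℝ)) fun i _ => by
          have h3 := abs_le.1 (gridPt_bound k m hm l a ha i)
          have h4 := abs_le.1 (hcube x hx i)
          simp only [PiLp.sub_apply, Real.norm_eq_abs, sq_abs]
          nlinarith
      refine this.trans (le_of_eq ?_)
      simp; ring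
    have h3 : ((⌊(m:ℝ)^2 * distSq L (gridPt k m l a)⌋ : ℤ) : ℝ) ≤ ((9 * (k+2) * m^2 : ℤ) : ℝ) := by
      refine (Int.floor_le _).trans ?_
      push_cast
      rw [mul_comm]
      gcongr
      exact h1.trans h2
    exact Int.cast_le.1 h3

lemma seq_eq (F G : ℕ → ℤ) (N : ℕ) (h0 : F 0 = G 0) (h1 : F 1 = G 1)
    (h2 : ∀ a < N, F (a+2) - 2 * F (a+1) + F a = G (a+2) - 2 * G (a+1) + G a) :
    ∀ a, a < N + 2 → F a = G a := by
  intro a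
  induction a using Nat.strong_induction_on with
  | _ a ih =>
    intro ha
    match a with
    | 0 => exact h0
    | 1 => exact h1
    | a+2 =>
      have := h2 a (by omega)
      have := ih a (by omega) (by omega)
      have := ih (a+1) (by omega) (by omega)
      omega

lemma exists_grid (k m : ℕ) (hm : 1 ≤ m) (z : E (k+2)) (hz : ∀ i, |z i| ≤ 2) (j : Fin (k+2))
    (hj : 2 ≤ |z j|) : ∃ (l : Fin (k+2) × Bool × (Fin k → Fin (4*m+1))) (a : ℕ), a ≤ 4*m ∧
      ‖gridPt k m l a - z‖^2 ≤ ((k:ℝ)+2) / (m:ℝ)^2 := by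
  have hm' : (0:ℝ) < m := by exact_mod_cast hm
  let r : Fin (k+2) → ℕ := fun i => ⌊(z i + 2) * m⌋₊
  have hr0 : ∀ i, 0 ≤ (z i + 2) * m := fun i => by
    have := (abs_le.1 (hz i)).1
    exact mul_nonneg (by linarith) hm'.le
  have hr : ∀ i, r i ≤ 4*m := fun i => by
    have h1 := Nat.floor_le (hr0 i)
    have h2 := (abs_le.1 (hz i)).2
    have : ((r i : ℕ):ℝ) ≤ ((4*m : ℕ):ℝ) := by push_cast; nlinarith
    exact_mod_cast this
  have hr2 : ∀ i, |-2 + (r i : ℝ)/m - z i| ≤ 1/m := fun i => by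
    have h1 := Nat.floor_le (hr0 i)
    have h2 := Nat.lt_floor_add_one ((z i + 2) * m)
    have h3 : -2 + (r i : ℝ)/m - z i = ((r i : ℝ) - (z i + 2) * m) / m := by field_simp; ring
    rw [h3, abs_div, abs_of_pos hm']
    gcongr
    rw [abs_le]
    constructor <;> simp only [r] <;> linarith
  refine ⟨(j, decide (0 ≤ z j), fun i => ⟨r (j.succAbove i.succ), by have := hr (j.succAbove i.succ); omega⟩),
    r (j.succAbove 0), hr _, ?_⟩
  rw [EuclideanSpace.norm_sq_eq]
  have : ∀ i, ‖(gridPt k m (j, decide (0 ≤ z j), fun i => ⟨r (j.succAbove i.succ), by have := hr (j.succAbove i.succ); omega⟩)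
      (r (j.succAbove 0)) - z) i‖^2 ≤ (1/(m:ℝ))^2 := by
    intro i
    apply pow_le_pow_left₀ (norm_nonneg _)
    rw [Real.norm_eq_abs, PiLp.sub_apply]
    refine Fin.succAboveCases j ?_ (fun i => ?_) i
    · have hp : 0 ≤ 1/(m:ℝ) := by positivity
      have h2 := abs_le.1 (hz j)
      simp only [gridPt, Fin.insertNth_apply_same, decide_eq_true_eq]
      split_ifs with h
      · rw [abs_of_nonneg h] at hj
        have : z j = 2 := by linarith
        simp [this]
      · rw [abs_of_neg (by linarith)] at hj
        have : z j = -2 := by linarith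
        simp [this]
    · refine Fin.cases ?_ (fun i => ?_) i
      · simpa [gridPt] using hr2 (j.succAbove 0)
      · simpa [gridPt] using hr2 (j.succAbove i.succ)
  refine (Finset.sum_le_sum fun i _ => this i).trans (le_of_eq ?_)
  simp
  ring

lemma exists_ray {d : ℕ} (y u : E d) (hy : ∀ i, |y i| ≤ 1) (hu : ‖u‖ = 1) :
    ∃ t : ℝ, 1 ≤ t ∧ (∀ i, |(y + t • u) i| ≤ 2) ∧ ∃ j, 2 ≤ |(y + t • u) j| := by
  have hne : ∃ i, u i ≠ 0 := by
    by_contra h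
    push Not at h
    have : u = 0 := by ext i; simpa using h i
    simp [this] at hu
  obtain ⟨i, hi⟩ := hne
  let f : ℝ → ℝ := fun t => ‖(fun i => y i + t * u i : Fin d → ℝ)‖
  have hf : Continuous f := by fun_prop
  have hi' : 0 < |u i| := abs_pos.2 hi
  have h0 : f 0 ≤ 2 := by
    simp only [f, zero_mul, add_zero]
    rw [pi_norm_le_iff_of_nonneg (by norm_num)]
    intro i; rw [Real.norm_eq_abs]; linarith [hy i]
  have h1 : 2 ≤ f (3/|u i|) := by
    have h2 := norm_le_pi_norm (fun i' => y i' + 3/|u i| * u i' : Fin d → ℝ) i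
    refine le_trans ?_ h2
    simp only [Real.norm_eq_abs]
    have h3 : |3/|u i| * u i| = 3 := by
      rw [abs_mul, abs_div, abs_abs]; field_simp; norm_num
    have h4 := abs_sub_abs_le_abs_sub (3/|u i| * u i) (-y i)
    rw [h3, abs_neg] at h4
    have := hy i
    rw [show y i + 3/|u i| * u i = 3/|u i| * u i - (-y i) by ring]
    linarith
  obtain ⟨t, ht, hft⟩ := intermediate_value_Icc (by positivity : (0:ℝ) ≤ 3/|u i|) hf.continuousOn ⟨h0, h1⟩
  have hle : ∀ i, |(y + t • u) i| ≤ 2 := by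
    intro i
    have h2 := norm_le_pi_norm (fun i' => y i' + t * u i' : Fin d → ℝ) i
    simp only [f] at hft
    rw [hft] at h2
    simpa using h2
  have hex : ∃ j, 2 ≤ |(y + t • u) j| := by
    by_contra h
    push Not at h
    have : f t < 2 := by
      simp only [f]
      rw [pi_norm_lt_iff (by norm_num)]
      intro i
      simpa using h i
    linarith
  refine ⟨t, ?_, hle, hex⟩
  obtain ⟨j, hj⟩ := hex
  have h5 : |u j| ≤ 1 := by
    have := PiLp.norm_apply_le u j
    rw [hu] at this
    simpa using this
  have h6 : |(y + t • u) j| ≤ |y j| + |t * u j| := by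
    simpa using abs_add_le (y j) (t * u j)
  rw [abs_mul, abs_of_nonneg ht.1] at h6
  have := hy j
  nlinarith [ht.1]

lemma key_close (k m : ℕ) (hm : 1 ≤ m) (hm2 : 4 * ((k:ℝ)+2) ≤ (m:ℝ)^2) (L L' : Set (E (k+2)))
    (hL : IsCompact L) (hc : Convex ℝ L) (hne : L.Nonempty)
    (hcube' : ∀ x ∈ L', ∀ i, |x i| ≤ 1)
    (heq : ∀ l, ∀ a ≤ 4*m, discr k m L l a = discr k m L' l a) (y : E (k+2)) (hy : y ∈ L') :
    ∃ p ∈ L, ‖y - p‖ ≤ ((k:ℝ)+3)/(m:ℝ)^2 := by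
  have hm' : (0:ℝ) < m := by exact_mod_cast hm
  have hmm : (0:ℝ) < (m:ℝ)^2 := by positivity
  obtain ⟨p, hp, hpmin⟩ := exists_norm_eq_iInf_of_complete_convex hne hL.isComplete hc y
  have hin := (norm_eq_iInf_iff_real_inner_le_zero hc hp).1 hpmin
  refine ⟨p, hp, ?_⟩
  rcases eq_or_ne y p with rfl | hyp
  · simp; positivity
  set s := ‖y - p‖ with hs
  have hs0 : 0 < s := norm_pos_iff.2 (sub_ne_zero.2 hyp)
  set u := s⁻¹ • (y - p) with hu
  have hu1 : ‖u‖ = 1 := by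
    rw [hu, norm_smul, norm_inv, norm_norm, ← hs, inv_mul_cancel₀ hs0.ne']
  have hyu : y - p = s • u := by rw [hu, smul_smul, mul_inv_cancel₀ hs0.ne', one_smul]
  obtain ⟨t, ht, hz, j, hj⟩ := exists_ray y u (hcube' y hy) hu1
  obtain ⟨l, a, ha, hg⟩ := exists_grid k m hm (y + t • u) hz j hj
  set z' := gridPt k m l a with hz'
  set h := z' - (y + t • u) with hh
  have huu : inner ℝ u u = (1:ℝ) := by rw [real_inner_self_eq_norm_sq, hu1]; norm_num
  set q := inner ℝ h u with hq
  have hh2 : ‖h‖ ≤ 1/2 := by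
    have : ‖h‖^2 ≤ (1/2)^2 := by
      refine hg.trans ?_
      rw [div_le_iff₀ hmm]; linarith
    exact le_of_sq_le_sq this (by norm_num)
  have hqb : |q| ≤ 1/2 := by
    have := abs_real_inner_le_norm h u
    rw [hu1, mul_one] at this
    linarith
  have hq1 := (abs_le.1 hqb).1
  have e1 : z' - p = h + (s + t) • u := by
    rw [add_smul, ← hyu, hh]; abel
  have e2 : z' - y = h + t • u := by rw [hh]; abel
  have i1 : inner ℝ (z' - p) u = q + (s + t) := by
    rw [e1, inner_add_left, real_inner_smul_left, huu, mul_one]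
  have i2 : ‖z' - y‖^2 = ‖h‖^2 + 2 * t * q + t^2 := by
    rw [e2, norm_add_sq_real, real_inner_smul_right, norm_smul, hu1, mul_one, Real.norm_eq_abs, sq_abs]
    ring
  have i3 : (q + (s + t))^2 ≤ distSq L z' := by
    obtain ⟨x, hx, hxe⟩ := distSq_attained L hL hne z'
    rw [hxe]
    apply pow_le_pow_left₀ (by linarith)
    have h1 : inner ℝ (z' - x) u ≤ ‖z' - x‖ := by
      have := real_inner_le_norm (z' - x) u
      rwa [hu1, mul_one] at this
    have h2 : inner ℝ (x - p) u ≤ 0 := by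
      rw [hu, real_inner_smul_right, real_inner_comm]
      exact mul_nonpos_of_nonneg_of_nonpos (by positivity) (hin x hx)
    have h3 : inner ℝ (z' - x) u = inner ℝ (z' - p) u - inner ℝ (x - p) u := by
      rw [← inner_sub_left]; congr 1; abel
    rw [h3, i1] at h1
    linarith
  have i4 : distSq L z' ≤ ‖z' - y‖^2 + 1/(m:ℝ)^2 := by
    have h1 := Int.lt_floor_add_one ((m:ℝ)^2 * distSq L z')
    have h2 := Int.floor_le ((m:ℝ)^2 * distSq L' z')
    have h3 : ⌊(m:ℝ)^2 * distSq L z'⌋ = ⌊(m:ℝ)^2 * distSq L' z'⌋ := heq l a ha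
    have h4 := distSq_le L' z' y hy
    rw [h3] at h1
    have h5 : (m:ℝ)^2 * distSq L z' ≤ (m:ℝ)^2 * (‖z' - y‖^2 + 1/(m:ℝ)^2) := by
      rw [mul_add, mul_one_div_cancel hmm.ne']
      nlinarith
    exact le_of_mul_le_mul_left h5 hmm
  have e3 : ((k:ℝ)+3)/(m:ℝ)^2 = ((k:ℝ)+2)/(m:ℝ)^2 + 1/(m:ℝ)^2 := by ring
  rw [e3]
  have f1 : s * 1 ≤ s * (2 * t + 2 * q) := mul_le_mul_of_nonneg_left (by linarith) hs0.le
  have f2 : (q + (s + t))^2 = q^2 + s^2 + t^2 + 2 * t * q + s * (2 * t + 2 * q) := by ring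
  rw [f2] at i3
  rw [i2] at i4
  linarith [sq_nonneg q, sq_nonneg s]

/-- Codes for discretised distance functions. -/
abbrev Code (k m : ℕ) : Type :=
  (Fin (k+2) × Bool × (Fin k → Fin (4*m+1))) →
    (↥(Finset.Icc (0:ℤ) (9 * (k+2) * m^2)) × ↥(Finset.Icc (0:ℤ) (9 * (k+2) * m^2)) ×
      (Fin (4*m+1) → ↥(Finset.Icc (-1:ℤ) 3)))

/-- The set `L` has code `c`. -/
def HasCode (k m : ℕ) (L : Set (E (k+2))) (c : Code k m) : Prop :=
  ∀ l, ((c l).1 : ℤ) = discr k m L l 0 ∧ ((c l).2.1 : ℤ) = discr k m L l 1 ∧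
    ∀ a : Fin (4*m+1), ((c l).2.2 a : ℤ) =
      discr k m L l (a+2) - 2 * discr k m L l (a+1) + discr k m L l a

lemma exists_code (k m : ℕ) (hm : 1 ≤ m) (L : Set (E (k+2))) (hL : IsCompact L) (hc : Convex ℝ L)
    (hne : L.Nonempty) (hcube : ∀ x ∈ L, ∀ i, |x i| ≤ 1) : ∃ c, HasCode k m L c := by
  refine ⟨fun l => (⟨_, discr_bound k m hm L hne hcube l 0 (by omega)⟩,
    ⟨_, discr_bound k m hm L hne hcube l 1 (by omega)⟩,
    fun a => ⟨_, discr_secdiff k m hm L hL hc hne l a⟩), ?_⟩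
  intro l
  exact ⟨rfl, rfl, fun a => rfl⟩

lemma code_eq (k m : ℕ) (L L' : Set (E (k+2))) (c : Code k m) (h : HasCode k m L c)
    (h' : HasCode k m L' c) : ∀ l, ∀ a ≤ 4*m, discr k m L l a = discr k m L' l a := by
  intro l a ha
  obtain ⟨h0, h1, h2⟩ := h l
  obtain ⟨h0', h1', h2'⟩ := h' l
  refine seq_eq _ _ (4*m) (h0.symm.trans h0') (h1.symm.trans h1') ?_ a (by omega)
  intro b hb
  exact (h2 ⟨b, by omega⟩).symm.trans (h2' ⟨b, by omega⟩)

/-- Pieces of the container of a code. -/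
def piece (k m : ℕ) (c : Code k m) (j : Fin (k+2)) (s : Bool) : Set (E (k+2)) :=
  {x | ∃ X : Set (E (k+2)), X.Finite ∧ (∀ x ∈ X, ∀ i, |x i| ≤ 1) ∧
    HasCode k m (convexHull ℝ X) c ∧ x ∈ X ∧ ∃ u : E (k+2), ‖u‖ = 1 ∧
      (∀ y ∈ X, inner ℝ (y - x) u ≤ 0) ∧ 1 / ((k:ℝ)+2) ≤ (if s then u j else - u j)}

lemma cube_convexHull {d : ℕ} (X : Set (E d)) (hX : ∀ x ∈ X, ∀ i, |x i| ≤ 1) :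
    ∀ x ∈ convexHull ℝ X, ∀ i, |x i| ≤ 1 := by
  have hconv : Convex ℝ {x : E d | ∀ i, |x i| ≤ 1} := by
    intro x hx y hy a b ha hb hab i
    have h1 := hx i
    have h2 := hy i
    simp only [PiLp.add_apply, PiLp.smul_apply, smul_eq_mul]
    calc |a * x i + b * y i| ≤ |a * x i| + |b * y i| := abs_add_le _ _
      _ = a * |x i| + b * |y i| := by rw [abs_mul, abs_mul, abs_of_nonneg ha, abs_of_nonneg hb]
      _ ≤ a * 1 + b * 1 := by gcongr
      _ = 1 := by linarith
  intro x hx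
  exact convexHull_min (t := {x : E d | ∀ i, |x i| ≤ 1}) hX hconv hx

lemma piece_one (k m : ℕ) (hm : 1 ≤ m) (hm2 : 4 * ((k:ℝ)+2) ≤ (m:ℝ)^2) (c : Code k m)
    (j : Fin (k+2)) (s : Bool) (x x' : E (k+2)) (hx : x ∈ piece k m c j s) (hx' : x' ∈ piece k m c j s) :
    (if s then x' j - x j else x j - x' j) ≤ ((k:ℝ)+2) * (((k:ℝ)+3)/(m:ℝ)^2 +
      ∑ i : Fin (k+1), |x' (j.succAbove i) - x (j.succAbove i)|) := by
  obtain ⟨X, hXf, hXc, hcode, hxX, u, hu1, hu2, hu3⟩ := hx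
  obtain ⟨X', hXf', hXc', hcode', hxX', -⟩ := hx'
  have hm' : (0:ℝ) < m := by exact_mod_cast hm
  have hsub := subset_convexHull ℝ X'
  obtain ⟨p, hp, hpn⟩ := key_close k m hm hm2 (convexHull ℝ X) (convexHull ℝ X')
    (hXf.isCompact_convexHull (𝕜 := ℝ)) (convex_convexHull ℝ X) ⟨x, subset_convexHull ℝ X hxX⟩
    (cube_convexHull X' hXc') (code_eq k m _ _ c hcode hcode') x' (subset_convexHull ℝ X' hxX')
  have hpu : inner ℝ (p - x) u ≤ 0 := by
    have hconv : Convex ℝ {y : E (k+2) | inner ℝ (y - x) u ≤ 0} := by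
      intro y hy z hz a b ha hb hab
      simp only [Set.mem_ofPred_eq] at *
      have : a • y + b • z - x = a • (y - x) + b • (z - x) := by
        have hx1 : x = (a + b) • x := by rw [hab, one_smul]
        conv_lhs => rw [hx1]
        module
      rw [this, inner_add_left, real_inner_smul_left, real_inner_smul_left]
      nlinarith
    exact convexHull_min (t := {y : E (k+2) | inner ℝ (y - x) u ≤ 0}) hu2 hconv hp
  have h1 : inner ℝ (x' - x) u ≤ ((k:ℝ)+3)/(m:ℝ)^2 := by
    have e : x' - x = (x' - p) + (p - x) := by abel
    rw [e, inner_add_left]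
    have := real_inner_le_norm (x' - p) u
    rw [hu1, mul_one] at this
    linarith
  have h2 : inner ℝ (x' - x) u = (x' j - x j) * u j +
      ∑ i : Fin (k+1), (x' (j.succAbove i) - x (j.succAbove i)) * u (j.succAbove i) := by
    rw [PiLp.inner_apply, Fin.sum_univ_succAbove _ j]
    simp [mul_comm]
  have h3 : -∑ i : Fin (k+1), |x' (j.succAbove i) - x (j.succAbove i)| ≤
      ∑ i : Fin (k+1), (x' (j.succAbove i) - x (j.succAbove i)) * u (j.succAbove i) := by
    rw [← Finset.sum_neg_distrib]
    apply Finset.sum_le_sum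
    intro i _
    have h5 : |u (j.succAbove i)| ≤ 1 := by
      have := PiLp.norm_apply_le u (j.succAbove i)
      rw [hu1] at this
      simpa using this
    have h6 := neg_abs_le ((x' (j.succAbove i) - x (j.succAbove i)) * u (j.succAbove i))
    rw [abs_mul] at h6
    nlinarith [abs_nonneg (x' (j.succAbove i) - x (j.succAbove i))]
  set R := ∑ i : Fin (k+1), |x' (j.succAbove i) - x (j.succAbove i)| with hR
  have hR0 : 0 ≤ R := Finset.sum_nonneg fun i _ => abs_nonneg _
  have hk : (0:ℝ) < (k:ℝ)+2 := by positivity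
  have he : 0 ≤ ((k:ℝ)+3)/(m:ℝ)^2 := by positivity
  set ε := ((k:ℝ)+3)/(m:ℝ)^2 with hε
  have key : ∀ lam w : ℝ, 1/((k:ℝ)+2) ≤ w → lam * w ≤ ε + R → lam ≤ ((k:ℝ)+2) * (ε + R) := by
    intro lam w hw hl
    rcases le_or_gt lam 0 with h0 | h0
    · have : 0 ≤ ((k:ℝ)+2) * (ε + R) := by positivity
      linarith
    · have h7 : lam * (1/((k:ℝ)+2)) ≤ ε + R := le_trans (by gcongr) hl
      rw [mul_one_div, div_le_iff₀ hk] at h7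
      linarith
  cases s
  · simp only [Bool.false_eq_true, if_false] at hu3 ⊢
    apply key _ _ hu3
    nlinarith
  · simp only [if_true] at hu3 ⊢
    apply key _ _ hu3
    linarith

lemma piece_closure (k m : ℕ) (hm : 1 ≤ m) (hm2 : 4 * ((k:ℝ)+2) ≤ (m:ℝ)^2) (c : Code k m)
    (j : Fin (k+2)) (s : Bool) (x x' : E (k+2)) (hx : x ∈ closure (piece k m c j s))
    (hx' : x' ∈ closure (piece k m c j s)) :
    |x' j - x j| ≤ ((k:ℝ)+2) * (((k:ℝ)+3)/(m:ℝ)^2 +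
      ∑ i : Fin (k+1), |x' (j.succAbove i) - x (j.succAbove i)|) := by
  let W : Set (E (k+2) × E (k+2)) := {p | |p.2 j - p.1 j| ≤ ((k:ℝ)+2) * (((k:ℝ)+3)/(m:ℝ)^2 +
      ∑ i : Fin (k+1), |p.2 (j.succAbove i) - p.1 (j.succAbove i)|)}
  have hW : IsClosed W := isClosed_le (by fun_prop) (by fun_prop)
  have hsub : piece k m c j s ×ˢ piece k m c j s ⊆ W := by
    rintro ⟨y, y'⟩ ⟨hy, hy'⟩
    have h1 := piece_one k m hm hm2 c j s y y' hy hy'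
    have h2 := piece_one k m hm hm2 c j s y' y hy' hy
    simp only [abs_sub_comm (y _) (y' _)] at h2
    simp only [W, Set.mem_ofPred_eq]
    cases s
    · simp only [Bool.false_eq_true, if_false] at h1 h2
      exact abs_le.2 ⟨by linarith, by linarith⟩
    · simp only [if_true] at h1 h2
      exact abs_le.2 ⟨by linarith, by linarith⟩
  have := closure_minimal hsub hW
  rw [closure_prod_eq] at this
  exact this (Set.mk_mem_prod hx hx')

lemma piece_cube (k m : ℕ) (c : Code k m) (j : Fin (k+2)) (s : Bool) :
    closure (piece k m c j s) ⊆ {x | ∀ i, x i ∈ Icc (-1:ℝ) 1} := by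
  apply closure_minimal
  · rintro x ⟨X, -, hX, -, hx, -⟩ i
    exact abs_le.1 (hX x hx i)
  · have : {x : E (k+2) | ∀ i, x i ∈ Icc (-1:ℝ) 1} = ⋂ i, {x | x i ∈ Icc (-1:ℝ) 1} := by
      ext x; simp
    rw [this]
    exact isClosed_iInter fun i => isClosed_Icc.preimage (by fun_prop : Continuous fun x : E (k+2) => x i)

lemma piece_vol (k m : ℕ) (hm : 1 ≤ m) (hm2 : 4 * ((k:ℝ)+2) ≤ (m:ℝ)^2) (c : Code k m)
    (j : Fin (k+2)) (s : Bool) : volume (closure (piece k m c j s)) ≤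
      ENNReal.ofReal (2^(k+1) * (((k:ℝ)+2) * ((k:ℝ)+3)) / (m:ℝ)^2) := by
  have hm' : (0:ℝ) < m := by exact_mod_cast hm
  rw [vol_section (k+1) j _ isClosed_closure.measurableSet]
  set P := closure (piece k m c j s) with hP
  set r : ℝ := ((k:ℝ)+2) * (((k:ℝ)+3)/(m:ℝ)^2) with hr
  have h1 : ∀ y : Fin (k+1) → ℝ, volume {t : ℝ | WithLp.toLp 2 (j.insertNth t y) ∈ P} ≤
      (Set.univ.pi fun _ => Icc (-1:ℝ) 1).indicator (fun _ => ENNReal.ofReal r) y := by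
    intro y
    by_cases hy : y ∈ (Set.univ.pi fun _ : Fin (k+1) => Icc (-1:ℝ) 1)
    · rw [Set.indicator_of_mem hy]
      refine (Real.volume_le_diam _).trans ?_
      apply Metric.ediam_le
      intro t ht t' ht'
      rw [edist_dist]
      apply ENNReal.ofReal_le_ofReal
      have := piece_closure k m hm hm2 c j s _ _ ht' ht
      simpa [Real.dist_eq, hr] using this
    · rw [Set.indicator_of_notMem hy]
      have : {t : ℝ | WithLp.toLp 2 (j.insertNth t y) ∈ P} = ∅ := by
        ext t
        simp only [Set.mem_ofPred_eq, Set.mem_empty_iff_false, iff_false]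
        intro hx
        apply hy
        intro i _
        have := piece_cube k m c j s hx (j.succAbove i)
        simpa using this
      rw [this, measure_empty]
  refine (lintegral_mono h1).trans ?_
  rw [lintegral_indicator (MeasurableSet.univ_pi fun i => measurableSet_Icc), lintegral_const,
      Measure.restrict_apply_univ, volume_pi_pi]
  simp only [Real.volume_Icc, Finset.prod_const, Finset.card_univ, Fintype.card_fin]
  rw [← ENNReal.ofReal_pow (by norm_num), ← ENNReal.ofReal_mul (by positivity)]
  apply ENNReal.ofReal_le_ofReal
  apply le_of_eq
  rw [hr]; norm_num; ring

lemma exists_normal {d : ℕ} (hd : 1 ≤ d) (X : Set (E d)) (hX : X.Finite) (hcp : ConvexPosition X) (x : E d)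
    (hx : x ∈ X) : ∃ u : E d, ‖u‖ = 1 ∧ ∀ y ∈ X, inner ℝ (y - x) u ≤ 0 := by
  rcases (X \ {x}).eq_empty_or_nonempty with he | hne
  · refine ⟨EuclideanSpace.single ⟨0, hd⟩ 1, by simp, ?_⟩
    intro y hy
    have : y = x := by
      by_contra h
      have : y ∈ X \ {x} := ⟨hy, h⟩
      rw [he] at this
      exact this
    simp [this]
  · set L := convexHull ℝ (X \ {x}) with hL
    have hLc : IsCompact L := (hX.subset Set.sdiff_subset).isCompact_convexHull (𝕜 := ℝ)
    have hLne : L.Nonempty := hne.mono (subset_convexHull ℝ _)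
    obtain ⟨p, hp, hpmin⟩ := exists_norm_eq_iInf_of_complete_convex hLne hLc.isComplete (convex_convexHull ℝ _) x
    have hin := (norm_eq_iInf_iff_real_inner_le_zero (convex_convexHull ℝ _) hp).1 hpmin
    have hxp : x ≠ p := by
      intro h
      apply hcp x hx
      rw [← h] at hp
      exact hp
    have hs0 : 0 < ‖x - p‖ := norm_pos_iff.2 (sub_ne_zero.2 hxp)
    refine ⟨‖x - p‖⁻¹ • (x - p), ?_, ?_⟩
    · rw [norm_smul, norm_inv, norm_norm, inv_mul_cancel₀ hs0.ne']
    · intro y hy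
      rw [real_inner_smul_right]
      apply mul_nonpos_of_nonneg_of_nonpos (by positivity)
      by_cases hyx : y = x
      · simp [hyx]
      · have h1 := hin y (subset_convexHull ℝ _ ⟨hy, hyx⟩)
        have h2 : y - x = (y - p) - (x - p) := by abel
        rw [h2, inner_sub_left, real_inner_self_eq_norm_sq, real_inner_comm]
        nlinarith

lemma exists_big_coord (k : ℕ) (u : E (k+2)) (hu : ‖u‖ = 1) :
    ∃ (j : Fin (k+2)) (s : Bool), 1 / ((k:ℝ)+2) ≤ (if s then u j else - u j) := by
  by_contra h
  push Not at h
  have h1 : ∀ j, |u j| ≤ 1/((k:ℝ)+2) := by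
    intro j
    have h1 := h j true
    have h2 := h j false
    simp only [if_true, Bool.false_eq_true, if_false] at h1 h2
    exact abs_le.2 ⟨by linarith, by linarith⟩
  have h2 : ‖u‖^2 ≤ ((k:ℝ)+2) * (1/((k:ℝ)+2))^2 := by
    rw [EuclideanSpace.norm_sq_eq]
    have := Finset.sum_le_sum (s := Finset.univ) (f := fun i => ‖u i‖^2)
        (g := fun _ : Fin (k+2) => (1/((k:ℝ)+2))^2) fun i _ =>
          pow_le_pow_left₀ (norm_nonneg _) (h1 i) 2
    simpa using this
  rw [hu] at h2
  have h3 : ((k:ℝ)+2) * (1/((k:ℝ)+2))^2 = 1/((k:ℝ)+2) := by field_simp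
  rw [h3, le_div_iff₀ (by positivity)] at h2
  have : (0:ℝ) ≤ k := by positivity
  linarith

lemma code_card (k m : ℕ) (hm : 1 ≤ m) : Fintype.card (Code k m) ≤
    (((40*(k+2))^2*5^5)^(2*(k+2)*5^k))^(m^(k+1)) := by
  have h1 : Fintype.card (Code k m) = ((9*(k+2)*m^2+1) * ((9*(k+2)*m^2+1) * 5^(4*m+1)))^((k+2)*(2*(4*m+1)^k)) := by
    have h2 : Fintype.card ↥(Finset.Icc (0:ℤ) (9 * (k+2) * m^2)) = 9*(k+2)*m^2+1 := by
      rw [Fintype.card_coe, Int.card_Icc]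
      have : (9 * ((k:ℤ)+2) * (m:ℤ)^2 + 1 - 0) = ((9*(k+2)*m^2+1 : ℕ) : ℤ) := by push_cast; ring
      rw [this, Int.toNat_natCast]
    have h3 : Fintype.card ↥(Finset.Icc (-1:ℤ) 3) = 5 := by
      rw [Fintype.card_coe, Int.card_Icc]; rfl
    rw [Fintype.card_fun, Fintype.card_prod, Fintype.card_prod, Fintype.card_fun, h2, h3]
    simp
  rw [h1]
  have hM : 9*(k+2)*m^2+1 ≤ (40*(k+2))^m := by
    have h4 : m^2 ≤ 4^m := by
      have : m < 2^m := Nat.lt_two_pow_self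
      calc m^2 ≤ (2^m)^2 := Nat.pow_le_pow_left this.le 2
        _ = 4^m := by rw [← pow_mul, mul_comm, pow_mul]; norm_num
    have h5 : 10*(k+2) ≤ (10*(k+2))^m := Nat.le_self_pow (by omega) _
    have h6 : 1 ≤ (k+2)*m^2 := Nat.one_le_iff_ne_zero.2 (by positivity)
    calc 9*(k+2)*m^2+1 ≤ 10*(k+2)*m^2 := by nlinarith
      _ ≤ (10*(k+2))^m * 4^m := Nat.mul_le_mul h5 h4
      _ = (40*(k+2))^m := by rw [← mul_pow]; congr 1; ring
  have hB : (9*(k+2)*m^2+1) * ((9*(k+2)*m^2+1) * 5^(4*m+1)) ≤ ((40*(k+2))^2*5^5)^m := by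
    calc (9*(k+2)*m^2+1) * ((9*(k+2)*m^2+1) * 5^(4*m+1))
        ≤ (40*(k+2))^m * ((40*(k+2))^m * 5^(5*m)) := by
          gcongr
          · norm_num
          · omega
      _ = _ := by rw [mul_pow ((40*(k+2))^2), ← pow_mul, ← pow_mul]; ring
  have hE : (k+2)*(2*(4*m+1)^k) ≤ 2*(k+2)*5^k*m^k := by
    have : (4*m+1)^k ≤ (5*m)^k := Nat.pow_le_pow_left (by omega) k
    rw [mul_pow] at this
    nlinarith
  calc _ ≤ (((40*(k+2))^2*5^5)^m)^((k+2)*(2*(4*m+1)^k)) := Nat.pow_le_pow_left hB _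
    _ ≤ (((40*(k+2))^2*5^5)^m)^(2*(k+2)*5^k*m^k) := Nat.pow_le_pow_right (by positivity) hE
    _ = _ := by
      rw [← pow_mul, ← pow_mul]
      congr 1
      ring

lemma upper_sets (k m : ℕ) (hm : 1 ≤ m) (hm2 : 4 * ((k:ℝ)+2) ≤ (m:ℝ)^2) :
    ∃ S : Code k m → Set (E (k+2)), (∀ c, MeasurableSet (S c)) ∧
      (∀ c, volume (S c) ≤ ENNReal.ofReal
        (2 * ((k:ℝ)+2) * (2^(k+1) * (((k:ℝ)+2) * ((k:ℝ)+3))) / (m:ℝ)^2)) ∧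
      ∀ X : Set (E (k+2)), X.Finite → X.Nonempty → (∀ x ∈ X, ∀ i, |x i| ≤ 1) → ConvexPosition X →
        ∃ c, X ⊆ S c := by
  refine ⟨fun c => ⋃ q : Fin (k+2) × Bool, closure (piece k m c q.1 q.2), ?_, ?_, ?_⟩
  · intro c
    exact MeasurableSet.iUnion fun q => isClosed_closure.measurableSet
  · intro c
    refine (measure_iUnion_fintype_le _ _).trans ?_
    refine (Finset.sum_le_sum fun q _ => piece_vol k m hm hm2 c q.1 q.2).trans ?_
    rw [Finset.sum_const, nsmul_eq_mul, ← ENNReal.ofReal_natCast, ← ENNReal.ofReal_mul (by positivity)]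
    apply ENNReal.ofReal_le_ofReal
    apply le_of_eq
    simp
    ring
  · intro X hXf hXne hXc hcp
    obtain ⟨c, hc⟩ := exists_code k m hm (convexHull ℝ X) (hXf.isCompact_convexHull (𝕜 := ℝ))
      (convex_convexHull ℝ X) (hXne.mono (subset_convexHull ℝ X)) (cube_convexHull X hXc)
    refine ⟨c, fun x hx => ?_⟩
    obtain ⟨u, hu1, hu2⟩ := exists_normal (by omega) X hXf hcp x hx
    obtain ⟨j, s, hjs⟩ := exists_big_coord k u hu1
    exact Set.mem_iUnion.2 ⟨(j, s), subset_closure ⟨X, hXf, hXc, hc, hx, u, hu1, hu2, hjs⟩⟩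

lemma convexPosition_affine {d : ℕ} (A : E d ≃ₗ[ℝ] E d) (v : E d) (X : Set (E d))
    (h : ConvexPosition X) : ConvexPosition ((fun x => A.symm (x - v)) '' X) := by
  rintro _ ⟨x, hx, rfl⟩ hmem
  apply h x hx
  let f : E d →ᵃ[ℝ] E d := (A : E d →ₗ[ℝ] E d).toAffineMap + AffineMap.const ℝ (E d) v
  have hf : ∀ y, f y = A y + v := fun y => rfl
  have h1 : f (A.symm (x - v)) = x := by rw [hf]; simp
  have h2 : f (A.symm (x - v)) ∈ f '' (convexHull ℝ ((fun x => A.symm (x - v)) '' X \ {A.symm (x - v)})) :=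
    ⟨_, hmem, rfl⟩
  rw [h1, AffineMap.image_convexHull] at h2
  refine convexHull_mono ?_ h2
  rintro _ ⟨_, ⟨⟨y, hy, rfl⟩, hne⟩, rfl⟩
  have h3 : f (A.symm (y - v)) = y := by rw [hf]; simp
  simp only [h3]
  refine ⟨hy, fun hyx => hne ?_⟩
  rw [Set.mem_singleton_iff] at hyx ⊢
  rw [hyx]

lemma upper_aux (k : ℕ) : ∃ V B : ℝ, 0 < V ∧ 1 ≤ B ∧ ∀ K : Set (E (k+2)), IsCompact K →
    Convex ℝ K → (interior K).Nonempty → ∀ m n : ℕ, 1 ≤ m → 4 * ((k:ℝ)+2) ≤ (m:ℝ)^2 → 1 ≤ n →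
      pConvex (k+2) n K ≤ B^(m^(k+1)) * (V / (m:ℝ)^2)^n := by
  refine ⟨((k+2:ℕ):ℝ)^(k+2) * (2 * ((k:ℝ)+2) * (2^(k+1) * (((k:ℝ)+2) * ((k:ℝ)+3)))),
    (((((40*(k+2))^2*5^5)^(2*(k+2)*5^k)) : ℕ) : ℝ), by positivity, ?_, ?_⟩
  · exact_mod_cast Nat.one_le_iff_ne_zero.2 (by positivity)
  intro K hK hcv hi m n hm hm2 hn
  obtain ⟨S, hSm, hSv, hSX⟩ := upper_sets k m hm hm2
  obtain ⟨hprob, A, v, hout, -, hup⟩ := exists_normalization' (k+2) (by omega) K hK hcv hi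
  set V0 : ℝ := 2 * ((k:ℝ)+2) * (2^(k+1) * (((k:ℝ)+2) * ((k:ℝ)+3))) with hV0
  have hV0pos : 0 < V0 := by positivity
  have hm' : (0:ℝ) < m := by exact_mod_cast hm
  let T : Code k m → Set (E (k+2)) := fun c => {x | A.symm (x - v) ∈ S c}
  have hTv : ∀ c, unifOn (k+2) K (T c) ≤ ENNReal.ofReal (((k+2:ℕ):ℝ)^(k+2) * V0 / (m:ℝ)^2) := by
    intro c
    refine (hup (S c) (hSm c)).trans ?_
    rw [mul_div_assoc, ENNReal.ofReal_mul (by positivity)]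
    gcongr
    exact hSv c
  have hae : ∀ᵐ x ∂(sampleMeasure (k+2) n K), ∀ i, x i ∈ K := by
    rw [ae_all_iff]
    intro i
    have h1 : ∀ᵐ y ∂(unifOn (k+2) K), y ∈ K := by
      unfold unifOn
      exact Measure.ae_smul_measure (ae_restrict_mem hK.measurableSet) _
    exact (Measure.tendsto_eval_ae_ae (μ := fun _ : Fin n => unifOn (k+2) K) (i := i)).eventually h1
  have hcov : sampleMeasure (k+2) n K {x | ConvexPosition (Set.range x)} ≤
      sampleMeasure (k+2) n K (⋃ c, Set.univ.pi fun _ => T c) := by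
    apply measure_mono_ae
    filter_upwards [hae] with x hxK hx
    have hne : (Set.range x).Nonempty := ⟨x ⟨0, hn⟩, Set.mem_range_self _⟩
    obtain ⟨c, hc⟩ := hSX ((fun x => A.symm (x - v)) '' Set.range x) ((Set.finite_range x).image _)
      (hne.image _) (by
        rintro _ ⟨_, ⟨i, rfl⟩, rfl⟩
        exact hout _ (hxK i)) (convexPosition_affine A v _ hx)
    refine Set.mem_iUnion.2 ⟨c, fun i _ => ?_⟩
    exact hc ⟨x i, ⟨i, rfl⟩, rfl⟩
  rw [pConvex]
  apply ENNReal.toReal_le_of_le_ofReal (by positivity)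
  refine hcov.trans ((measure_iUnion_fintype_le _ _).trans ?_)
  have h1 : ∀ c, sampleMeasure (k+2) n K (Set.univ.pi fun _ => T c) ≤
      ENNReal.ofReal ((((k+2:ℕ):ℝ)^(k+2) * V0 / (m:ℝ)^2)^n) := by
    intro c
    rw [sampleMeasure, Measure.pi_pi, ENNReal.ofReal_pow (by positivity)]
    simp only [Finset.prod_const, Finset.card_univ, Fintype.card_fin]
    gcongr
    exact hTv c
  refine (Finset.sum_le_sum fun c _ => h1 c).trans ?_
  rw [Finset.sum_const, nsmul_eq_mul, ← ENNReal.ofReal_natCast, ← ENNReal.ofReal_mul (by positivity)]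
  apply ENNReal.ofReal_le_ofReal
  gcongr
  exact_mod_cast code_card k m hm

lemma upper_main (k : ℕ) : ∃ (n₀ : ℕ) (c : ℝ), 0 < n₀ ∧ 0 < c ∧ ∀ K : Set (E (k+2)), IsCompact K →
    Convex ℝ K → (interior K).Nonempty → ∀ n : ℕ, n₀ ≤ n →
      (n:ℝ)^((2:ℝ)/(k+1)) * (pConvex (k+2) n K)^((1:ℝ)/n) < c := by
  obtain ⟨V, B, hV, hB, H⟩ := upper_aux k
  refine ⟨(4 * (k+2))^(k+1), 4 * B * V + 1, by positivity, by positivity, ?_⟩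
  intro K hK hcv hi n hn
  have hk' : (0:ℝ) < (k:ℝ)+1 := by positivity
  have hn1 : 1 ≤ n := le_trans (Nat.one_le_iff_ne_zero.2 (by positivity)) hn
  have hn' : (1:ℝ) ≤ n := by exact_mod_cast hn1
  have hn0 : (0:ℝ) < n := by linarith
  set q : ℝ := (n:ℝ)^((1:ℝ)/(k+1)) with hq
  have hqk : q ^ (k+1) = n := by
    rw [hq, ← Real.rpow_natCast, ← Real.rpow_mul hn0.le]
    push_cast
    rw [one_div, inv_mul_cancel₀ hk'.ne', Real.rpow_one]
  have hq2 : (n:ℝ)^((2:ℝ)/(k+1)) = q^2 := by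
    rw [hq, ← Real.rpow_natCast, ← Real.rpow_mul hn0.le]; congr 1; push_cast; ring
  have hq0 : 0 ≤ q := by positivity
  have hq4 : 4 * ((k:ℝ)+2) ≤ q := by
    have h1 : (4 * ((k:ℝ)+2))^(k+1) ≤ q^(k+1) := by
      rw [hqk]; exact_mod_cast hn
    exact le_of_pow_le_pow_left₀ (by omega) hq0 h1
  have hk0 : (0:ℝ) ≤ k := by positivity
  set m := ⌊q⌋₊ with hm
  have hmq : (m:ℝ) ≤ q := Nat.floor_le hq0
  have hmN : 4 * (k+2) ≤ m := by
    apply Nat.le_floor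
    push_cast; exact hq4
  have hmR : 4 * ((k:ℝ)+2) ≤ m := by exact_mod_cast hmN
  have hm2 : q ≤ 2 * m := by
    have := Nat.lt_floor_add_one q
    rw [← hm] at this
    linarith
  have hmn : m^(k+1) ≤ n := by
    have : (m:ℝ)^(k+1) ≤ n := by rw [← hqk]; gcongr
    exact_mod_cast this
  have h1 := H K hK hcv hi m n (by omega) (by nlinarith) hn1
  have hp0 : 0 ≤ pConvex (k+2) n K := ENNReal.toReal_nonneg
  have hqpos : 0 < q := by linarith
  have h2 : pConvex (k+2) n K ≤ (4 * B * V / q^2)^n := by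
    calc pConvex (k+2) n K ≤ B^(m^(k+1)) * (V / (m:ℝ)^2)^n := h1
      _ ≤ B^n * (V / (q/2)^2)^n := by
        gcongr
        linarith
      _ = _ := by rw [← mul_pow]; congr 1; field_simp; norm_num
  have h3 : (pConvex (k+2) n K)^((1:ℝ)/n) ≤ 4 * B * V / q^2 := by
    have := Real.rpow_le_rpow hp0 h2 (by positivity : (0:ℝ) ≤ 1 / n)
    rwa [← Real.rpow_natCast, ← Real.rpow_mul (by positivity), mul_one_div_cancel hn0.ne', Real.rpow_one] at this
  rw [hq2]
  rw [le_div_iff₀ (by positivity)] at h3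
  linarith

/-- Theorem 2.1: there are constants `n₀, c₁, c₂ > 0` depending only on `d` such that for
every convex body `K ⊆ ℝ^d` and all `n ≥ n₀`,
`c₁ < n^{2/(d-1)} · p(n,K)^{1/n} < c₂`. -/
theorem pConvex_asymptotics_high_dim (d : ℕ) (hd : 2 ≤ d) :
    ∃ (n₀ : ℕ) (c₁ c₂ : ℝ), 0 < n₀ ∧ 0 < c₁ ∧ 0 < c₂ ∧
      ∀ (K : Set (E d)), IsCompact K → Convex ℝ K → (interior K).Nonempty →
        ∀ n : ℕ, n₀ ≤ n →
          c₁ < (n : ℝ) ^ ((2 : ℝ) / ((d : ℝ) - 1)) * (pConvex d n K) ^ ((1 : ℝ) / n) ∧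
          (n : ℝ) ^ ((2 : ℝ) / ((d : ℝ) - 1)) * (pConvex d n K) ^ ((1 : ℝ) / n) < c₂ := by
  obtain ⟨k, rfl⟩ : ∃ k, d = k + 2 := ⟨d - 2, by omega⟩
  obtain ⟨c₁, hc₁, H1⟩ := lower_main (k+1) (by omega)
  obtain ⟨n₀, c₂, hn₀, hc₂, H2⟩ := upper_main k
  have e : (((k+2 : ℕ) : ℝ) - 1) = (k:ℝ) + 1 := by push_cast; ring
  have e' : (((k+1 : ℕ) : ℝ)) = (k:ℝ) + 1 := by push_cast; ring
  refine ⟨n₀, c₁, c₂, hn₀, hc₁, hc₂, ?_⟩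
  intro K hK hcv hi n hn
  rw [e]
  have h1 := H1 K hK hcv hi n (by omega)
  rw [e'] at h1
  exact ⟨h1, H2 K hK hcv hi n hn⟩
end
end

section
/- For every convex body K in R^d, there exist positive constants c_1, c_2 depending only on d such that c_1 · n^{(d-1)/(d+1)} ≤ log E|Q(X_n)| ≤ c_2 · n^{(d-1)/(d+1)} for all sufficiently large n, where Q(X_n) is the collection of convex polytopes spanned by subsets of an n-point uniform sample from K. -/
open MeasureTheory Set Filter
noncomputable section

/-- The number of convex polytopes spanned by the sample `x`: the number of subsets of
at least 3 of the points that are in convex position. -/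
def numPolytopes (d n : ℕ) (x : Fin n → E d) : ℕ :=
  Set.ncard {s : Finset (Fin n) | 3 ≤ s.card ∧ ConvexPosition (x '' ↑s)}


section

lemma convexHull_range_image {ι : Type*} [Fintype ι] {d : ℕ} (z : ι → E d) :
    convexHull ℝ (range z) = (fun w : ι → ℝ => ∑ j, w j • z j) '' stdSimplex ℝ ι := by
  classical
  rw [← convexHull_basis_eq_stdSimplex]
  have : (fun w : ι → ℝ => ∑ j, w j • z j) = ⇑(Fintype.linearCombination ℝ z) := by
    ext w; simp [Fintype.linearCombination_apply]
  rw [this, LinearMap.image_convexHull, ← range_comp]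
  congr 1
  ext p
  simp [Fintype.linearCombination_apply, ite_smul]

lemma isClosed_mem_hull (d n : ℕ) (t : Finset (Fin n)) (i : Fin n) :
    IsClosed {x : Fin n → E d | x i ∈ convexHull ℝ (x '' ↑t)} := by
  have key : {x : Fin n → E d | x i ∈ convexHull ℝ (x '' ↑t)} =
      Prod.snd '' {q : (stdSimplex ℝ t) × (Fin n → E d) |
        ∑ j : t, (q.1 : t → ℝ) j • q.2 j = q.2 i} := by
    ext x
    have : x '' ↑t = range (fun j : t => x j) := by
      ext p; simp
    constructor
    · intro h
      simp only [mem_ofPred_eq, this, convexHull_range_image] at h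
      obtain ⟨w, hw, h⟩ := h
      exact ⟨(⟨w, hw⟩, x), h, rfl⟩
    · rintro ⟨⟨w, x'⟩, h, rfl⟩
      simp only [mem_ofPred_eq, this, convexHull_range_image]
      exact ⟨w, w.2, h⟩
  rw [key]
  have : CompactSpace (stdSimplex ℝ t) := isCompact_iff_compactSpace.mp (isCompact_stdSimplex ℝ _)
  apply isClosedMap_snd_of_compactSpace
  apply isClosed_eq
  · refine continuous_finsetSum _ fun j _ => ?_
    have h1 : Continuous fun y : (stdSimplex ℝ t) × (Fin n → E d) => (y.1 : t → ℝ) j :=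
      (continuous_apply j).comp (continuous_subtype_val.comp continuous_fst)
    have h2 : Continuous fun y : (stdSimplex ℝ t) × (Fin n → E d) => y.2 (j : Fin n) :=
      (continuous_apply (j : Fin n)).comp continuous_snd
    exact h1.smul h2
  · fun_prop

lemma measurableSet_convexPosition (d n : ℕ) (s : Finset (Fin n)) :
    MeasurableSet {x : Fin n → E d | ConvexPosition (x '' ↑s)} := by
  classical
  have key : {x : Fin n → E d | ConvexPosition (x '' ↑s)} =
      ⋂ i ∈ s, ⋃ t : Finset (Fin n), ((⋂ j : Fin n, {x | j ∈ t ↔ (j ∈ s ∧ x j ≠ x i)}) ∩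
        {x : Fin n → E d | x i ∈ convexHull ℝ (x '' ↑t)}ᶜ) := by
    ext x
    simp only [mem_iInter, mem_iUnion, mem_inter_iff, mem_ofPred_eq, mem_compl_iff, ConvexPosition]
    constructor
    · intro h i hi
      refine ⟨s.filter (fun j => x j ≠ x i), by simp, ?_⟩
      convert h (x i) ⟨i, hi, rfl⟩ using 3
      ext p
      simp only [Finset.coe_filter, mem_image, mem_ofPred_eq, Set.mem_sdiff, mem_singleton_iff,
        Finset.mem_coe]
      constructor
      · rintro ⟨j, ⟨h1, h2⟩, rfl⟩; exact ⟨⟨j, h1, rfl⟩, h2⟩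
      · rintro ⟨⟨j, h1, rfl⟩, h2⟩; exact ⟨j, ⟨h1, h2⟩, rfl⟩
    · rintro h _ ⟨i, hi, rfl⟩
      obtain ⟨t, ht, hx⟩ := h i hi
      convert hx using 3
      ext p
      simp only [mem_image, Set.mem_sdiff, mem_singleton_iff, Finset.mem_coe, ht]
      constructor
      · rintro ⟨⟨j, h1, rfl⟩, h2⟩; exact ⟨j, ⟨h1, h2⟩, rfl⟩
      · rintro ⟨j, ⟨h1, h2⟩, rfl⟩; exact ⟨⟨j, h1, rfl⟩, h2⟩
  rw [key]
  refine MeasurableSet.biInter (to_countable _) fun i _ => MeasurableSet.iUnion fun t => ?_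
  refine MeasurableSet.inter (MeasurableSet.iInter fun j => ?_) (isClosed_mem_hull d n t i).measurableSet.compl
  have hne : MeasurableSet {x : Fin n → E d | x j ≠ x i} :=
    (isClosed_eq (continuous_apply j) (continuous_apply i)).measurableSet.compl
  by_cases h1 : j ∈ t <;> by_cases h2 : j ∈ s
  · simpa [h1, h2] using hne
  · simp [h1, h2]
  · have h3 : MeasurableSet {x : Fin n → E d | x j = x i} :=
      (isClosed_eq (continuous_apply j) (continuous_apply i)).measurableSet
    simpa [h1, h2] using h3
  · simp [h1, h2]

open Classical in
lemma numPolytopes_eq_sum (d n : ℕ) (x : Fin n → E d) :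
    (numPolytopes d n x : ℝ) = ∑ s : Finset (Fin n),
      indicator {x : Fin n → E d | 3 ≤ s.card ∧ ConvexPosition (x '' ↑s)} (fun _ => (1:ℝ)) x := by
  classical
  simp only [indicator_apply, mem_ofPred_eq, numPolytopes]
  rw [Finset.sum_boole, Set.ncard_eq_toFinset_card']
  simp

lemma measurable_numPolytopes (d n : ℕ) :
    Measurable (fun x : Fin n → E d => (numPolytopes d n x : ℝ)) := by
  simp only [numPolytopes_eq_sum]
  refine Finset.measurable_sum _ fun s _ => measurable_const.indicator ?_
  by_cases h : 3 ≤ s.card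
  · simpa [h] using measurableSet_convexPosition d n s
  · simp [h]

lemma unifOn_prob {d : ℕ} {K : Set (E d)} (h0 : volume K ≠ 0) (h1 : volume K ≠ ⊤) :
    IsProbabilityMeasure (unifOn d K) := by
  constructor
  simp [unifOn, ENNReal.inv_mul_cancel h0 h1]

lemma sample_prob {d n : ℕ} {K : Set (E d)} (h0 : volume K ≠ 0) (h1 : volume K ≠ ⊤) :
    IsProbabilityMeasure (sampleMeasure d n K) := by
  have := unifOn_prob h0 h1
  unfold sampleMeasure
  infer_instance

lemma integrable_numPolytopes {d n : ℕ} {K : Set (E d)} (h0 : volume K ≠ 0) (h1 : volume K ≠ ⊤) :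
    Integrable (fun x : Fin n → E d => (numPolytopes d n x : ℝ)) (sampleMeasure d n K) := by
  have := sample_prob (n := n) h0 h1
  refine Integrable.of_bound (measurable_numPolytopes d n).aestronglyMeasurable
    (2 ^ n : ℕ) (Eventually.of_forall fun x => ?_)
  simp only [Real.norm_natCast, Nat.cast_le]
  unfold numPolytopes
  refine (Set.ncard_le_card _).trans ?_
  simp

end


section

/-- the invertible affine map `x ↦ L x + b` -/
def affMap {d : ℕ} (L : E d ≃L[ℝ] E d) (b : E d) (x : E d) : E d := L x + b

lemma affMap_inj {d : ℕ} (L : E d ≃L[ℝ] E d) (b : E d) : Function.Injective (affMap L b) := by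
  intro x y h
  simpa [affMap] using h

lemma affMap_embedding {d : ℕ} (L : E d ≃L[ℝ] E d) (b : E d) :
    MeasurableEmbedding (affMap L b) :=
  (Homeomorph.addRight b).measurableEmbedding.comp L.toHomeomorph.measurableEmbedding

lemma volume_affMap_image {d : ℕ} (L : E d ≃L[ℝ] E d) (b : E d) (S : Set (E d)) :
    volume (affMap L b '' S) = ENNReal.ofReal |LinearMap.det (L : E d →ₗ[ℝ] E d)| * volume S := by
  have : affMap L b '' S = (fun y => y + b) '' (L '' S) := by
    rw [← image_comp]; rfl
  rw [this, image_add_right, measure_preimage_add_right]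
  exact Measure.addHaar_image_continuousLinearEquiv _ L S

lemma unifOn_affMap {d : ℕ} (L : E d ≃L[ℝ] E d) (b : E d) {K : Set (E d)} :
    unifOn d (affMap L b '' K) = (unifOn d K).map (affMap L b) := by
  ext S hS
  rw [(affMap_embedding L b).map_apply]
  simp only [unifOn, Measure.smul_apply, smul_eq_mul]
  rw [Measure.restrict_apply hS, Measure.restrict_apply ((affMap_embedding L b).measurable hS)]
  have : S ∩ affMap L b '' K = affMap L b '' (affMap L b ⁻¹' S ∩ K) := by
    rw [image_preimage_inter]
  rw [this, volume_affMap_image, volume_affMap_image]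
  have hdet : LinearMap.det (L : E d →ₗ[ℝ] E d) ≠ 0 := by
    have := LinearEquiv.isUnit_det' L.toLinearEquiv
    exact this.ne_zero
  set c := ENNReal.ofReal |LinearMap.det (L : E d →ₗ[ℝ] E d)| with hc
  have hc0 : c ≠ 0 := by simp [hc, hdet]
  have hc1 : c ≠ ⊤ := by simp [hc]
  rw [ENNReal.mul_inv (Or.inl hc0) (Or.inl hc1)]
  rw [mul_mul_mul_comm, ENNReal.inv_mul_cancel hc0 hc1, one_mul]

lemma sample_affMap {d n : ℕ} (L : E d ≃L[ℝ] E d) (b : E d) {K : Set (E d)}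
    (h0 : volume K ≠ 0) (h1 : volume K ≠ ⊤) :
    sampleMeasure d n (affMap L b '' K) =
      (sampleMeasure d n K).map (fun x i => affMap L b (x i)) := by
  have := unifOn_prob h0 h1
  have h2 : IsProbabilityMeasure ((unifOn d K).map (affMap L b)) :=
    Measure.isProbabilityMeasure_map (affMap_embedding L b).measurable.aemeasurable
  unfold sampleMeasure
  rw [unifOn_affMap, Measure.pi_map_pi (μ := fun _ : Fin n => unifOn d K)
    (f := fun _ => affMap L b) (fun _ => (affMap_embedding L b).measurable.aemeasurable)]

lemma convexPosition_affMap {d : ℕ} (L : E d ≃L[ℝ] E d) (b : E d) (X : Set (E d)) :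
    ConvexPosition (affMap L b '' X) ↔ ConvexPosition X := by
  have hull : ∀ Y : Set (E d), convexHull ℝ (affMap L b '' Y) = affMap L b '' convexHull ℝ Y := by
    intro Y
    have : affMap L b =
        ⇑((AffineEquiv.constVAdd ℝ (E d) b).toAffineMap.comp (L : E d →ₗ[ℝ] E d).toAffineMap) := by
      ext x; simp [affMap, add_comm]
    rw [this, AffineMap.image_convexHull]
  unfold ConvexPosition
  rw [forall_mem_image]
  refine forall₂_congr fun x hx => ?_
  rw [← image_singleton, ← image_sdiff (affMap_inj L b), hull, (affMap_inj L b).mem_set_image]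

lemma integral_affMap {d n : ℕ} (L : E d ≃L[ℝ] E d) (b : E d) {K : Set (E d)}
    (h0 : volume K ≠ 0) (h1 : volume K ≠ ⊤) :
    ∫ x, (numPolytopes d n x : ℝ) ∂(sampleMeasure d n (affMap L b '' K)) =
      ∫ x, (numPolytopes d n x : ℝ) ∂(sampleMeasure d n K) := by
  rw [sample_affMap L b h0 h1, integral_map]
  · congr 1
    ext x
    unfold numPolytopes
    congr 3
    ext s
    have : (fun i => affMap L b (x i)) '' (s : Set (Fin n)) = affMap L b '' (x '' s) := by
      rw [← image_comp]; rfl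
    rw [this, convexPosition_affMap]
  · have := (affMap_embedding L b).measurable
    apply Measurable.aemeasurable
    fun_prop
  · exact (measurable_numPolytopes d n).aestronglyMeasurable

end


section

open scoped Pointwise

lemma exists_auerbach {d : ℕ} {D : Set (E d)} (hD : IsCompact D) (h0 : (0 : E d) ∈ interior D) :
    ∃ b : Module.Basis (Fin d) ℝ (E d), (∀ i, b i ∈ D) ∧ ∀ x ∈ D, ∀ i, |b.repr x i| ≤ 1 := by
  classical
  set e := (EuclideanSpace.basisFun (Fin d) ℝ).toBasis with he
  have hcont : Continuous (fun v : Fin d → E d => |e.det v|) := by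
    have : ∀ v : Fin d → E d, e.det v = (Matrix.of (fun i j => v j i)).det := by
      intro v
      rw [Module.Basis.det_apply]
      congr 1
    simp only [this]
    apply Continuous.abs
    apply Continuous.matrix_det
    fun_prop
  have hcomp : IsCompact (Set.pi univ (fun _ : Fin d => D)) := isCompact_univ_pi fun _ => hD
  have hne : (Set.pi univ (fun _ : Fin d => D)).Nonempty :=
    ⟨fun _ => 0, fun _ _ => interior_subset h0⟩
  obtain ⟨v, hv, hmax⟩ := hcomp.exists_isMaxOn hne hcont.continuousOn
  have hpos : e.det v ≠ 0 := by
    obtain ⟨r, hr, hball⟩ := Metric.isOpen_iff.mp isOpen_interior 0 h0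
    have hmem : (fun i => (r / 2) • e i) ∈ Set.pi univ (fun _ : Fin d => D) := by
      intro i _
      apply interior_subset
      apply hball
      simp [he, norm_smul, abs_of_pos hr]
      linarith
    have h := hmax hmem
    simp only [mem_ofPred_eq] at h
    have h2 : e.det (fun i => (r / 2) • e i) = (r/2)^d := by
      have := e.det.toMultilinearMap.map_smul_univ (fun _ => r/2) e
      simp only [AlternatingMap.coe_multilinearMap] at this
      rw [this, Module.Basis.det_self]
      simp [div_pow]
    rw [h2] at h
    have : 0 < |(r/2)^d| := by positivity
    intro h3
    rw [h3, abs_zero] at h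
    linarith
  obtain ⟨hli, hsp⟩ := e.is_basis_iff_det.mpr (isUnit_iff_ne_zero.mpr hpos)
  refine ⟨Module.Basis.mk hli hsp.ge, fun i => ?_, fun x hx i => ?_⟩
  · rw [Module.Basis.mk_apply]; exact hv i (mem_univ i)
  · have h1 := congrArg (fun f => f x) (e.det_smul_mk_coord_eq_det_update hli hsp.ge i)
    simp only [LinearMap.smul_apply, Module.Basis.coord_apply, smul_eq_mul,
      MultilinearMap.toLinearMap_apply, AlternatingMap.coe_multilinearMap] at h1
    have hmem : Function.update v i x ∈ Set.pi univ (fun _ : Fin d => D) := by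
      intro j _
      by_cases hj : j = i
      · subst hj; simpa using hx
      · simpa [hj] using hv j (mem_univ j)
    have h2 := hmax hmem
    simp only [mem_ofPred_eq] at h2
    rw [← h1, abs_mul] at h2
    have h3 : 0 < |e.det v| := abs_pos.mpr hpos
    by_contra hcon
    push Not at hcon
    nlinarith

lemma exists_normalize {d : ℕ} (hd : 0 < d) {K : Set (E d)} (hK : IsCompact K) (hc : Convex ℝ K)
    (hi : (interior K).Nonempty) :
    ∃ (L : E d ≃L[ℝ] E d) (b : E d),
      (∀ x : E d, (∀ i, |x i| ≤ 1 / (2 * d)) → x ∈ affMap L b '' K) ∧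
      (∀ x ∈ affMap L b '' K, ∀ i, |x i| ≤ 1) := by
  have hD : IsCompact (K - K) := by rw [sub_eq_add_neg]; exact hK.add hK.neg
  have h0 : (0 : E d) ∈ interior (K - K) := by
    obtain ⟨p, hp⟩ := hi
    have h1 : interior K - K ⊆ interior (K - K) := by
      apply interior_maximal
      · exact sub_subset_sub_right interior_subset
      · exact isOpen_interior.sub_right
    exact h1 ⟨p, hp, p, interior_subset hp, sub_self p⟩
  obtain ⟨v, hv, hcoord⟩ := exists_auerbach hD h0
  set e := (EuclideanSpace.basisFun (Fin d) ℝ).toBasis with he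
  set L : E d ≃L[ℝ] E d := (v.equiv e (Equiv.refl _)).toContinuousLinearEquiv with hL
  have hLx : ∀ x i, (L x) i = v.repr x i := by
    intro x i
    have : e.repr (L x) i = v.repr x i := by
      simp [hL, Module.Basis.equiv]
    simpa [he] using this
  have hLv : ∀ i, L (v i) = e i := by
    intro i
    simp [hL]
  choose p hp q hq hpq using hv
  simp only at hpq
  have hd' : (0:ℝ) < d := by exact_mod_cast hd
  let z : (Fin d → ℝ) → E d := fun t => ∑ i, (1 / (d:ℝ)) • (q i + t i • (p i - q i))
  have hz : ∀ t : Fin d → ℝ, (∀ i, 0 ≤ t i ∧ t i ≤ 1) → z t ∈ K := by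
    intro t ht
    apply hc.sum_mem
    · intro i _; positivity
    · simp; field_simp
    · intro i _
      exact hc.add_smul_sub_mem (hq i) (hp i) ⟨(ht i).1, (ht i).2⟩
  have hLz : ∀ t i, (L (z t)) i = L (∑ j, (1 / (d:ℝ)) • q j) i + t i / d := by
    intro t i
    simp only [z, hpq, smul_add, Finset.sum_add_distrib, map_add]
    simp only [PiLp.add_apply, add_right_inj]
    simp [map_sum, map_smul, hLv, he]
    rw [Finset.sum_eq_single i]
    · simp; ring
    · intro j _ hj; simp [Ne.symm hj]
    · simp
  set c := z (fun _ => 1/2) with hcdef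
  have hcK : c ∈ K := hz _ (fun i => by norm_num)
  refine ⟨L, - L c, ?_, ?_⟩
  · intro x hx
    refine ⟨z (fun i => d * x i + 1/2), hz _ (fun i => ?_), ?_⟩
    · have h := abs_le.mp (hx i)
      have e1 : (d:ℝ) * (1 / (2 * d)) = 1/2 := by field_simp
      constructor <;> nlinarith
    · ext i
      simp only [affMap, PiLp.add_apply, PiLp.neg_apply, hcdef, hLz]
      field_simp
      ring
  · rintro _ ⟨y, hy, rfl⟩ i
    have : affMap L (-L c) y = L (y - c) := by simp [affMap, sub_eq_add_neg]
    rw [this, hLx]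
    exact hcoord _ ⟨y, hy, c, hcK, rfl⟩ i

end


section

/-- drop the coordinate `i` -/
def dropCoord {m : ℕ} (i : Fin (m+1)) (x : E (m+1)) : Fin m → ℝ := fun j => x (i.succAbove j)

/-- slab over `A` around the graph of `f` -/
def slab {m : ℕ} (i : Fin (m+1)) (σ : ℝ) (A : Set (Fin m → ℝ)) (f : (Fin m → ℝ) → ℝ) (a b : ℝ) :
    Set (E (m+1)) :=
  {x | dropCoord i x ∈ A ∧ σ * x i - f (dropCoord i x) ∈ Icc a b}

lemma measurableSet_slab {m : ℕ} (i : Fin (m+1)) (σ : ℝ) {A : Set (Fin m → ℝ)}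
    (hA : MeasurableSet A) {f : (Fin m → ℝ) → ℝ} (hf : Measurable f) (a b : ℝ) :
    MeasurableSet (slab i σ A f a b) := by
  have h1 : Measurable (dropCoord (m := m) i) := by unfold dropCoord; fun_prop
  apply MeasurableSet.inter
  · exact h1 hA
  · have : Measurable (fun x : E (m+1) => σ * x i - f (dropCoord i x)) := by fun_prop
    exact this measurableSet_Icc

lemma volume_slab {m : ℕ} (i : Fin (m+1)) {σ : ℝ} (hσ : σ = 1 ∨ σ = -1) {A : Set (Fin m → ℝ)}
    (hA : MeasurableSet A) {f : (Fin m → ℝ) → ℝ} (hf : Measurable f) (a b : ℝ) :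
    volume (slab i σ A f a b) = volume A * ENNReal.ofReal (b - a) := by
  set S : Set (ℝ × (Fin m → ℝ)) := {p | p.2 ∈ A ∧ σ * p.1 - f p.2 ∈ Icc a b} with hS
  have hSm : MeasurableSet S := by
    apply MeasurableSet.inter
    · exact measurable_snd hA
    · have : Measurable (fun p : ℝ × (Fin m → ℝ) => σ * p.1 - f p.2) := by fun_prop
      exact this measurableSet_Icc
  have hpre : slab i σ A f a b = (MeasurableEquiv.toLp 2 (Fin (m+1) → ℝ)).symm ⁻¹'
      ((MeasurableEquiv.piFinSuccAbove (fun _ => ℝ) i) ⁻¹' S) := by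
    ext x; rfl
  rw [hpre, (EuclideanSpace.volume_preserving_symm_measurableEquiv_toLp _).measure_preimage_equiv,
    (volume_preserving_piFinSuccAbove (fun _ => ℝ) i).measure_preimage_equiv,
    Measure.volume_eq_prod, Measure.prod_apply_symm hSm]
  have : ∀ y : Fin m → ℝ, volume ((fun t : ℝ => (t, y)) ⁻¹' S) =
      A.indicator (fun _ => ENNReal.ofReal (b - a)) y := by
    intro y
    by_cases hy : y ∈ A
    · rw [indicator_of_mem hy]
      rcases hσ with rfl | rfl
      · have : (fun t : ℝ => (t, y)) ⁻¹' S = Icc (a + f y) (b + f y) := by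
          ext t
          simp only [hS, mem_preimage, mem_ofPred_eq, hy, true_and, mem_Icc]
          constructor <;> rintro ⟨h1, h2⟩ <;> constructor <;> linarith
        rw [this, Real.volume_Icc]; congr 1; ring
      · have : (fun t : ℝ => (t, y)) ⁻¹' S = Icc (- b - f y) (- a - f y) := by
          ext t
          simp only [hS, mem_preimage, mem_ofPred_eq, hy, true_and, mem_Icc]
          constructor <;> rintro ⟨h1, h2⟩ <;> constructor <;> linarith
        rw [this, Real.volume_Icc]; congr 1; ring
    · rw [indicator_of_notMem hy]
      have : (fun t : ℝ => (t, y)) ⁻¹' S = ∅ := by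
        ext t; simp [hS, hy]
      rw [this, measure_empty]
  simp only [this]
  rw [lintegral_indicator hA, setLIntegral_const, mul_comm]

lemma volume_box {m : ℕ} (a b : ℝ) (h : a ≤ b) :
    volume {x : E m | ∀ i, x i ∈ Icc a b} = ENNReal.ofReal ((b - a) ^ m) := by
  have hpre : {x : E m | ∀ i, x i ∈ Icc a b} = (MeasurableEquiv.toLp 2 (Fin m → ℝ)).symm ⁻¹'
      (Set.pi univ fun _ => Icc a b) := by
    ext x; simp [Pi.le_def, forall_and]
  rw [hpre, (EuclideanSpace.volume_preserving_symm_measurableEquiv_toLp _).measure_preimage_equiv,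
    volume_pi_pi]
  simp [ENNReal.ofReal_pow (sub_nonneg.mpr h)]

end


section

lemma lower_count {d n : ℕ} {K : Set (E d)} (h0 : volume K ≠ 0) (h1 : volume K ≠ ⊤)
    {V : Type} [Fintype V] (hV : 3 ≤ Fintype.card V) (C H : V → Set (E d))
    (hCm : ∀ v, MeasurableSet (C v)) (hH : ∀ v, Convex ℝ (H v))
    (hCH : ∀ v, ∀ x ∈ C v, x ∉ H v) (hCH' : ∀ v w, v ≠ w → C w ⊆ H v)
    {p : ℝ} (hp : 0 ≤ p) (hCp : ∀ v, p ≤ (unifOn d K).real (C v)) :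
    (n.descFactorial (Fintype.card V) : ℝ) * p ^ Fintype.card V ≤
      ∫ x, (numPolytopes d n x : ℝ) ∂(sampleMeasure d n K) := by
  classical
  have hpu := unifOn_prob h0 h1
  have hps := sample_prob (n := n) h0 h1
  let A : (V ↪ Fin n) → Set (Fin n → E d) := fun φ => {x | ∀ v, x (φ v) ∈ C v}
  have hApi : ∀ φ, A φ = Set.pi univ (fun i => {y : E d | ∀ v, φ v = i → y ∈ C v}) := by
    intro φ; ext x
    simp only [A, mem_ofPred_eq, Set.mem_pi, mem_univ, true_imp_iff]
    constructor
    · rintro h i v rfl; exact h v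
    · intro h v; exact h _ v rfl
  have hAm : ∀ φ, MeasurableSet (A φ) := by
    intro φ
    have : A φ = ⋂ v, (fun x : Fin n → E d => x (φ v)) ⁻¹' C v := by
      ext x; simp [A]
    rw [this]
    exact MeasurableSet.iInter fun v => (measurable_pi_apply _) (hCm v)
  have hAmeas : ∀ φ, p ^ Fintype.card V ≤ (sampleMeasure d n K).real (A φ) := by
    intro φ
    have e1 : (sampleMeasure d n K).real (A φ) = ∏ v, (unifOn d K).real (C v) := by
      rw [hApi, measureReal_def, sampleMeasure, Measure.pi_pi, ENNReal.toReal_prod]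
      symm
      rw [← Finset.prod_subset (Finset.subset_univ (Finset.univ.map φ)), Finset.prod_map]
      · refine Finset.prod_congr rfl fun v _ => ?_
        rw [measureReal_def]
        congr 2
        ext y
        simp
      · intro i _ hi
        have : {y : E d | ∀ v, φ v = i → y ∈ C v} = univ := by
          ext y
          simp only [mem_ofPred_eq, mem_univ, iff_true]
          intro v hv
          exact absurd (by simp [← hv]) hi
        rw [this]; simp
    rw [e1]
    calc p ^ Fintype.card V = ∏ _v : V, p := by simp
      _ ≤ _ := Finset.prod_le_prod (fun _ _ => hp) (fun v _ => hCp v)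
  have hpt : ∀ x, ∑ φ, (A φ).indicator (fun _ => (1:ℝ)) x ≤ (numPolytopes d n x : ℝ) := by
    intro x
    simp only [indicator_apply]
    rw [Finset.sum_boole, Nat.cast_le, numPolytopes, ← Set.ncard_coe_finset]
    refine Set.ncard_le_ncard_of_injOn (fun φ => Finset.univ.map φ) ?_ ?_ (toFinite _)
    · intro φ hφ
      simp only [Finset.coe_filter, Finset.mem_univ, true_and, mem_ofPred_eq] at hφ
      refine ⟨by simpa using hV, ?_⟩
      intro y hy
      simp only [Finset.coe_map, Finset.coe_univ, image_univ, mem_image, mem_range] at hy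
      obtain ⟨_, ⟨v, rfl⟩, rfl⟩ := hy
      intro hmem
      apply hCH v _ (hφ v)
      refine convexHull_min ?_ (hH v) hmem
      rintro y ⟨hy, hne⟩
      simp only [Finset.coe_map, Finset.coe_univ, image_univ, mem_image, mem_range] at hy
      obtain ⟨_, ⟨w, rfl⟩, rfl⟩ := hy
      apply hCH' v w
      · rintro rfl; exact hne rfl
      · exact hφ w
    · intro φ hφ ψ hψ heq
      simp only [Finset.coe_filter, Finset.mem_univ, true_and, mem_ofPred_eq] at hφ hψ
      ext v
      congr 1
      have : φ v ∈ Finset.univ.map ψ := by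
        have : φ v ∈ Finset.univ.map φ := by simp
        simpa [heq] using this
      simp only [Finset.mem_map, Finset.mem_univ, true_and] at this
      obtain ⟨w, hw⟩ := this
      by_cases hvw : v = w
      · subst hvw; exact hw.symm
      · exfalso
        apply hCH v _ (hφ v)
        apply hCH' v w hvw
        rw [← hw]
        exact hψ w
  calc (n.descFactorial (Fintype.card V) : ℝ) * p ^ Fintype.card V
      = ∑ _φ : (V ↪ Fin n), p ^ Fintype.card V := by
        simp [Fintype.card_embedding_eq]
    _ ≤ ∑ φ, (sampleMeasure d n K).real (A φ) := Finset.sum_le_sum fun φ _ => hAmeas φ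
    _ = ∫ x, ∑ φ, (A φ).indicator (fun _ => (1:ℝ)) x ∂(sampleMeasure d n K) := by
        rw [integral_finsetSum]
        · refine Finset.sum_congr rfl fun φ _ => ?_
          rw [integral_indicator_const _ (hAm φ)]; simp
        · intro φ _
          exact (integrable_const _).indicator (hAm φ)
    _ ≤ _ := by
        apply integral_mono _ (integrable_numPolytopes h0 h1) hpt
        refine integrable_finsetSum _ fun φ _ => (integrable_const _).indicator (hAm φ)

end


section

/-- tangent affine function of the paraboloid at `c` -/
def tang {m : ℕ} (c y : Fin m → ℝ) : ℝ := ∑ j, (2 * c j * y j - c j ^ 2)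

lemma tang_sub {m : ℕ} (c c' y : Fin m → ℝ) :
    tang c y - tang c' y = ∑ j, ((y j - c' j) ^ 2 - (y j - c j) ^ 2) := by
  unfold tang
  rw [← Finset.sum_sub_distrib]
  refine Finset.sum_congr rfl fun j _ => ?_
  ring

/-- the caps -/
def capSet {m : ℕ} (η : ℝ) (c : Fin m → ℝ) : Set (E (m+1)) :=
  slab 0 1 (Set.pi univ fun j => Icc (c j - η) (c j + η)) (tang c) (m * η ^ 2) (2 * m * η ^ 2)

lemma measurable_tang {m : ℕ} (c : Fin m → ℝ) : Measurable (tang c) := by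
  unfold tang; fun_prop

lemma volume_capSet {m : ℕ} {η : ℝ} (hη : 0 ≤ η) (c : Fin m → ℝ) :
    volume (capSet η c) = ENNReal.ofReal ((2 * η) ^ m * (m * η ^ 2)) := by
  unfold capSet
  rw [volume_slab 0 (Or.inl rfl) (MeasurableSet.univ_pi fun _ => measurableSet_Icc)
    (measurable_tang c), volume_pi_pi, ENNReal.ofReal_mul (by positivity)]
  congr 1
  · rw [ENNReal.ofReal_pow (by positivity)]
    simp only [Real.volume_Icc]
    rw [Finset.prod_congr rfl (g := fun _ => ENNReal.ofReal (2 * η))]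
    · simp
    · intro j _; congr 1; ring
  · congr 1; ring

lemma measurableSet_capSet {m : ℕ} (η : ℝ) (c : Fin m → ℝ) : MeasurableSet (capSet η c) :=
  measurableSet_slab _ _ (MeasurableSet.univ_pi fun _ => measurableSet_Icc) (measurable_tang c) _ _

/-- the half-spaces -/
def capHalf {m : ℕ} (η : ℝ) (c : Fin m → ℝ) : Set (E (m+1)) :=
  {x | 2 * m * η ^ 2 < x 0 - tang c (dropCoord 0 x)}

lemma convex_capHalf {m : ℕ} (η : ℝ) (c : Fin m → ℝ) : Convex ℝ (capHalf η c) := by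
  have hlin : IsLinearMap ℝ (fun x : E (m+1) => x 0 - ∑ j, 2 * c j * dropCoord 0 x j) := by
    constructor
    · intro x y
      simp only [dropCoord, PiLp.add_apply, mul_add, Finset.sum_add_distrib]; ring
    · intro a x
      simp only [dropCoord, PiLp.smul_apply, smul_eq_mul, mul_sub, Finset.mul_sum]
      congr 1
      refine Finset.sum_congr rfl fun j _ => ?_
      ring
  have := convex_halfSpace_gt hlin (2 * m * η ^ 2 - ∑ j, c j ^ 2)
  have heq : capHalf η c = {w : E (m+1) | 2 * m * η ^ 2 - ∑ j, c j ^ 2 <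
      w 0 - ∑ j, 2 * c j * dropCoord 0 w j} := by
    refine Set.ext fun x => ?_
    simp only [capHalf, mem_ofPred_eq, tang, Finset.sum_sub_distrib]
    constructor <;> intro h <;> linarith
  rw [heq]
  exact this

lemma cap_notMem {m : ℕ} (η : ℝ) (c : Fin m → ℝ) (x) (hx : x ∈ capSet η c) : x ∉ capHalf η c := by
  obtain ⟨_, _, h⟩ := hx
  simp only [one_mul] at h
  simp only [capHalf, mem_ofPred_eq, not_lt]
  exact h

lemma cap_subset {m : ℕ} {η : ℝ} (hm : 1 ≤ m) (hη : 0 < η) (c c' : Fin m → ℝ) (j : Fin m)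
    (hj : 4 * m * η ≤ |c j - c' j|) : capSet η c' ⊆ capHalf η c := by
  rintro x ⟨hy, h, _⟩
  simp only [one_mul] at h
  set y := dropCoord 0 x with hydef
  simp only [capHalf, mem_ofPred_eq]
  have hm' : (1:ℝ) ≤ m := by exact_mod_cast hm
  have e := tang_sub c' c y
  rw [Finset.sum_sub_distrib] at e
  have h1 : ∑ j, (y j - c' j) ^ 2 ≤ m * η ^ 2 := by
    calc ∑ j, (y j - c' j) ^ 2 ≤ ∑ _j : Fin m, η ^ 2 := by
          refine Finset.sum_le_sum fun j _ => ?_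
          have := hy j (mem_univ j)
          rw [mem_Icc] at this
          apply sq_le_sq'  <;> linarith
      _ = m * η ^ 2 := by simp
  have h2 : (y j - c j) ^ 2 ≤ ∑ j, (y j - c j) ^ 2 :=
    Finset.single_le_sum (f := fun j => (y j - c j) ^ 2) (fun _ _ => sq_nonneg _) (Finset.mem_univ j)
  have h3 : 3 * m * η ≤ |y j - c j| := by
    have := hy j (mem_univ j)
    rw [mem_Icc] at this
    have h4 : |y j - c' j| ≤ η := abs_le.mpr ⟨by linarith, by linarith⟩
    have h5 : |c j - c' j| ≤ |y j - c' j| + |y j - c j| := by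
      have : c j - c' j = (y j - c' j) - (y j - c j) := by ring
      rw [this]; exact abs_sub _ _
    nlinarith
  have h6 : (3 * m * η) ^ 2 ≤ (y j - c j) ^ 2 := by
    rw [← sq_abs (y j - c j)]
    gcongr
  have h7 : 2 * m * η ^ 2 < (3 * m * η) ^ 2 := by
    have : 0 < η ^ 2 := by positivity
    nlinarith
  linarith

lemma cap_subset_box {m : ℕ} (hm : 1 ≤ m) {ρ η : ℝ} (hρ : 0 < ρ) (hρm : ρ * (2 * (m + 1)) = 1) (hη : 0 < η)
    (hηρ : 8 * m * η ≤ ρ) (c : Fin m → ℝ) (hc : ∀ j, 0 ≤ c j ∧ c j ≤ ρ / 2) :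
    ∀ x ∈ capSet η c, ∀ i, |x i| ≤ ρ := by
  rintro x ⟨hy, h, h'⟩ i
  have hm' : (1:ℝ) ≤ m := by exact_mod_cast hm
  simp only [one_mul] at h h'
  have hyb : ∀ j, |dropCoord 0 x j| ≤ 5 / 8 * ρ := by
    intro j
    have := hy j (mem_univ j)
    rw [mem_Icc] at this
    have := hc j
    have h8 : 8 * η ≤ ρ := by nlinarith
    rw [abs_le]; constructor <;> linarith
  have ht : |tang c (dropCoord 0 x)| ≤ m * (7 / 8 * ρ ^ 2) := by
    unfold tang
    calc |∑ j, (2 * c j * dropCoord 0 x j - c j ^ 2)|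
        ≤ ∑ j, |2 * c j * dropCoord 0 x j - c j ^ 2| := Finset.abs_sum_le_sum_abs _ _
      _ ≤ ∑ _j : Fin m, (7 / 8 * ρ ^ 2) := by
          refine Finset.sum_le_sum fun j _ => ?_
          obtain ⟨h1, h2⟩ := hc j
          obtain ⟨h3, h4⟩ := abs_le.mp (hyb j)
          rw [abs_le]; constructor <;> nlinarith
      _ = _ := by simp
  refine Fin.cases ?_ (fun j => ?_) i
  · have h1 : m * ρ ≤ 1 / 2 := by nlinarith
    have h2 : m * η ^ 2 ≤ ρ * ρ / 64 := by
      have : 8 * η ≤ ρ := by nlinarith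
      nlinarith
    have h3 : ρ ≤ 1 / 4 := by nlinarith
    obtain ⟨h3, h4⟩ := abs_le.mp ht
    rw [abs_le]
    constructor <;> nlinarith
  · have := hyb j
    simp only [dropCoord, Fin.zero_succAbove] at this
    linarith

lemma lower_grid {m n Q : ℕ} (hm : 1 ≤ m) (hQ : 3 ≤ Q) {K : Set (E (m+1))}
    (hin : ∀ x : E (m+1), (∀ i, |x i| ≤ 1 / (2 * ((m + 1 : ℕ) : ℝ))) → x ∈ K)
    (hout : ∀ x ∈ K, ∀ i, |x i| ≤ 1) (η : ℝ) (hη : η * (16 * (m + 1) * m * Q) = 1) :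
    (n.descFactorial (Q ^ m) : ℝ) * ((2 * η) ^ m * (m * η ^ 2) / 2 ^ (m + 1)) ^ (Q ^ m) ≤
      ∫ x, (numPolytopes (m+1) n x : ℝ) ∂(sampleMeasure (m+1) n K) := by
  have hm' : (1:ℝ) ≤ m := by exact_mod_cast hm
  have hQ' : (3:ℝ) ≤ Q := by exact_mod_cast hQ
  set ρ : ℝ := 1 / (2 * ((m + 1 : ℕ) : ℝ)) with hρdef
  have hρ : 0 < ρ := by positivity
  have hρm : ρ * (2 * (m + 1)) = 1 := by rw [hρdef]; push_cast; field_simp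
  have hη0 : 0 < η := by
    by_contra hcon
    push Not at hcon
    have : (0:ℝ) < 16 * (m + 1) * m * Q := by positivity
    nlinarith
  have hηρ : 8 * m * η * Q = ρ := by
    have : (2 * ((m:ℝ) + 1)) ≠ 0 := by positivity
    apply mul_right_cancel₀ this
    rw [hρm]; linear_combination hη
  have hvK : volume K ≤ ENNReal.ofReal (2 ^ (m+1)) := by
    have : K ⊆ {x : E (m+1) | ∀ i, x i ∈ Icc (-1 : ℝ) 1} := fun x hx i => abs_le.mp (hout x hx i)
    refine (measure_mono this).trans ?_
    rw [volume_box _ _ (by norm_num)]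
    norm_num
  have h1 : volume K ≠ ⊤ := (hvK.trans_lt ENNReal.ofReal_lt_top).ne
  have hsub : ∀ c : Fin m → ℝ, (∀ j, 0 ≤ c j ∧ c j ≤ ρ / 2) → capSet η c ⊆ K := by
    intro c hc x hx
    exact hin x (cap_subset_box hm hρ hρm hη0 (by nlinarith [mul_pos (show (0:ℝ) < m by linarith) hη0]) c hc x hx)
  have h0 : volume K ≠ 0 := by
    have hle := measure_mono (μ := volume) (hsub (fun _ => 0) (fun _ => ⟨le_rfl, by positivity⟩))
    rw [volume_capSet hη0.le] at hle
    have : 0 < ENNReal.ofReal ((2 * η) ^ m * (m * η ^ 2)) := ENNReal.ofReal_pos.mpr (by positivity)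
    exact (this.trans_le hle).ne'
  let cen : (Fin m → Fin Q) → (Fin m → ℝ) := fun v j => 4 * m * η * (v j : ℕ)
  have hcen : ∀ v j, 0 ≤ cen v j ∧ cen v j ≤ ρ / 2 := by
    intro v j
    refine ⟨by positivity, ?_⟩
    have : ((v j : ℕ) : ℝ) ≤ Q := by exact_mod_cast (v j).2.le
    have h4 : 0 ≤ 4 * m * η := by positivity
    have := mul_le_mul_of_nonneg_left this h4
    simp only [cen]
    linarith
  have hcard : Fintype.card (Fin m → Fin Q) = Q ^ m := by simp
  have hQm : 3 ≤ Fintype.card (Fin m → Fin Q) := by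
    rw [hcard]; exact hQ.trans (Nat.le_self_pow (by omega) Q)
  have := lower_count (n := n) h0 h1 hQm (fun v => capSet η (cen v)) (fun v => capHalf η (cen v))
    (fun v => measurableSet_capSet _ _) (fun v => convex_capHalf _ _) (fun v => cap_notMem _ _)
    (fun v w hvw => ?_) (p := (2 * η) ^ m * (m * η ^ 2) / 2 ^ (m + 1)) (by positivity) (fun v => ?_)
  · rwa [hcard] at this
  · obtain ⟨j, hj⟩ := Function.ne_iff.mp hvw
    refine cap_subset hm hη0 _ _ j ?_
    have h3 : (1:ℝ) ≤ |((v j : ℕ) : ℝ) - ((w j : ℕ) : ℝ)| := by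
      have : ((v j : ℕ) : ℤ) - ((w j : ℕ) : ℤ) ≠ 0 := by
        intro h; apply hj; ext; omega
      have := Int.one_le_abs this
      exact_mod_cast this
    have h4 : cen v j - cen w j = 4 * m * η * (((v j : ℕ) : ℝ) - ((w j : ℕ) : ℝ)) := by
      simp only [cen]; ring
    have h5 : 0 ≤ 4 * m * η := by positivity
    rw [h4, abs_mul, abs_of_nonneg h5]
    nlinarith
  · have e1 : (unifOn (m+1) K).real (capSet η (cen v)) =
        ((2 * η) ^ m * (m * η ^ 2)) / (volume K).toReal := by
      rw [measureReal_def, unifOn, Measure.smul_apply, Measure.restrict_apply (measurableSet_capSet _ _),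
        inter_eq_self_of_subset_left (hsub _ (hcen v)), volume_capSet hη0.le, smul_eq_mul,
        ENNReal.toReal_mul, ENNReal.toReal_inv, ENNReal.toReal_ofReal (by positivity)]
      rw [div_eq_inv_mul]
    rw [e1]
    have h2 : 0 < (volume K).toReal := ENNReal.toReal_pos h0 h1
    have h3 : (volume K).toReal ≤ 2 ^ (m+1) := ENNReal.toReal_le_of_le_ofReal (by positivity) hvK
    gcongr

end


section

lemma lower_final (m : ℕ) (hm : 1 ≤ m) : ∃ c₁ : ℝ, 0 < c₁ ∧ ∃ N0 : ℕ, ∀ n : ℕ, N0 ≤ n →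
    ∀ K : Set (E (m+1)),
    (∀ x : E (m+1), (∀ i, |x i| ≤ 1 / (2 * ((m + 1 : ℕ) : ℝ))) → x ∈ K) →
    (∀ x ∈ K, ∀ i, |x i| ≤ 1) →
    0 < ∫ x, (numPolytopes (m+1) n x : ℝ) ∂(sampleMeasure (m+1) n K) ∧
    c₁ * (n : ℝ) ^ ((m : ℝ) / (m + 2)) ≤
      Real.log (∫ x, (numPolytopes (m+1) n x : ℝ) ∂(sampleMeasure (m+1) n K)) := by
  have hm' : (1:ℝ) ≤ m := by exact_mod_cast hm
  set θ : ℝ := 1 / (16 * (m + 1) * m) with hθ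
  have hθ0 : 0 < θ := by positivity
  have hθm : m * θ ≤ 1 := by
    rw [hθ, mul_one_div, div_le_one (by positivity)]; nlinarith
  have hθ1 : θ ≤ 1 / 32 := by
    rw [hθ]; apply one_div_le_one_div_of_le (by norm_num); nlinarith
  set κ : ℝ := (2 * θ) ^ m * (m * θ ^ 2) / 2 ^ (m + 1) with hκ
  have hκ0 : 0 < κ := by positivity
  have hκ1 : κ ≤ 1 := by
    have h1 : (2 * θ) ^ m ≤ 1 := pow_le_one₀ (by positivity) (by linarith)
    have h2 : m * θ ^ 2 ≤ 1 := by nlinarith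
    have h3 : (1:ℝ) ≤ 2 ^ (m+1) := one_le_pow₀ (by norm_num)
    rw [hκ, div_le_one (by positivity)]
    calc (2 * θ) ^ m * (m * θ ^ 2) ≤ 1 * 1 := by gcongr
      _ ≤ _ := by linarith
  refine ⟨(1/2) ^ m * (κ / 6) ^ ((m:ℝ) / (m + 2)), by positivity, ⌈6 ^ (m+2) * 6 / κ⌉₊, ?_⟩
  intro n hn K hin hout
  have hn' : 6 ^ (m+2) * 6 / κ ≤ n := (Nat.le_ceil _).trans (by exact_mod_cast hn)
  have hn0 : 0 < (n:ℝ) := lt_of_lt_of_le (by positivity) hn'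
  set β : ℝ := (n * (κ / 6)) ^ (1 / ((m:ℝ) + 2)) with hβ
  have hβ0 : 0 ≤ β := by positivity
  have hβpow : β ^ (m + 2) = n * (κ / 6) := by
    rw [hβ, ← Real.rpow_natCast, ← Real.rpow_mul (by positivity)]
    push_cast
    rw [one_div_mul_cancel (by positivity), Real.rpow_one]
  have hβ6 : 6 ≤ β := by
    have : (6:ℝ) ^ (m+2) ≤ β ^ (m+2) := by
      rw [hβpow]
      rw [div_le_iff₀ hκ0] at hn'
      linarith
    exact le_of_pow_le_pow_left₀ (by omega) hβ0 this
  set Q := ⌊β⌋₊ with hQdef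
  have hQβ : (Q:ℝ) ≤ β := Nat.floor_le hβ0
  have hβQ : β < Q + 1 := Nat.lt_floor_add_one β
  have hQ3 : 3 ≤ Q := by
    apply Nat.le_floor; norm_num; linarith
  have hQ0 : (0:ℝ) < Q := by have : 0 < Q := by omega
                             exact_mod_cast this
  have hlow := lower_grid (n := n) hm hQ3 hin hout (θ / Q) (by rw [hθ]; field_simp)
  set I := ∫ x, (numPolytopes (m+1) n x : ℝ) ∂(sampleMeasure (m+1) n K) with hI
  set M := Q ^ m with hM
  have hp : (2 * (θ / Q)) ^ m * (m * (θ / Q) ^ 2) / 2 ^ (m + 1) = κ / (Q:ℝ) ^ (m+2) := by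
    rw [hκ]; simp only [mul_pow, div_pow, pow_add]; field_simp
  rw [hp] at hlow
  have hQpow : (Q:ℝ) ^ (m+2) ≤ n * (κ / 6) := by
    rw [← hβpow]; gcongr
  have hMn : (M:ℝ) ≤ n / 2 := by
    have h1 : (M:ℝ) ≤ (Q:ℝ) ^ (m+2) := by
      rw [hM]; push_cast
      apply pow_le_pow_right₀
      · have : 1 ≤ Q := by omega
        exact_mod_cast this
      · omega
    nlinarith
  have hdesc : ((n:ℝ) / 2) ^ M ≤ (n.descFactorial M : ℝ) := by
    have h1 : ((n + 1 - M : ℕ) ^ M : ℕ) ≤ n.descFactorial M := Nat.pow_sub_le_descFactorial n M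
    have hle : M ≤ n + 1 := by
      have : (M:ℝ) ≤ ((n+1 : ℕ) : ℝ) := by push_cast; linarith
      exact_mod_cast this
    have h2 : ((n:ℝ) / 2) ≤ ((n + 1 - M : ℕ) : ℝ) := by
      rw [Nat.cast_sub hle]; push_cast; linarith
    calc ((n:ℝ) / 2) ^ M ≤ ((n + 1 - M : ℕ) : ℝ) ^ M := by gcongr
      _ ≤ _ := by exact_mod_cast h1
  have h3M : (3:ℝ) ^ M ≤ I := by
    refine le_trans ?_ hlow
    calc (3:ℝ) ^ M ≤ ((n:ℝ) / 2 * (κ / (Q:ℝ) ^ (m+2))) ^ M := by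
          gcongr
          rw [mul_div_assoc', le_div_iff₀ (by positivity)]
          linarith
      _ = ((n:ℝ) / 2) ^ M * (κ / (Q:ℝ) ^ (m+2)) ^ M := mul_pow _ _ _
      _ ≤ _ := by gcongr
  have hIpos : 0 < I := lt_of_lt_of_le (by positivity) h3M
  refine ⟨hIpos, ?_⟩
  have hlog : (M:ℝ) ≤ Real.log I := by
    rw [Real.le_log_iff_exp_le hIpos]
    refine le_trans ?_ h3M
    have : Real.exp (M:ℝ) = Real.exp 1 ^ M := by rw [← Real.exp_nat_mul, mul_one]
    rw [this]
    have := Real.exp_one_lt_d9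
    gcongr
    linarith
  refine le_trans ?_ hlog
  have h4 : (κ / 6) ^ ((m:ℝ) / (m + 2)) * (n : ℝ) ^ ((m : ℝ) / (m + 2)) = β ^ m := by
    rw [← Real.mul_rpow (by positivity) (by positivity), hβ, ← Real.rpow_natCast,
      ← Real.rpow_mul (by positivity)]
    congr 1
    · ring
    · field_simp
  rw [mul_assoc, h4, ← mul_pow, hM]
  push_cast
  gcongr
  linarith

end


section

/-- class of convex Lipschitz functions -/
def CF (m : ℕ) : Set ((Fin m → ℝ) → ℝ) :=
  {f | ConvexOn ℝ univ f ∧ (∀ y z, |f y - f z| ≤ m * ‖y - z‖) ∧ |f 0| ≤ m + 1}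

/-- grid points -/
def gp {m : ℕ} (N : ℕ) (v : Fin m → ℤ) : Fin m → ℝ := fun j => (v j : ℝ) / N

/-- grid point on a line -/
def linePt {k : ℕ} (N : ℕ) (w : Fin k → Fin (2*N+3)) (j : ℕ) : Fin (k+1) → ℤ :=
  Fin.cons ((j:ℤ) - (N+1)) (fun l => ((w l : ℕ) : ℤ) - (N+1))

/-- rounded values -/
def lineVal {k : ℕ} (N : ℕ) (f : (Fin (k+1) → ℝ) → ℝ) (w : Fin k → Fin (2*N+3)) (j : ℕ) : ℤ :=
  ⌊(N:ℝ)^2 * f (gp N (linePt N w j))⌋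

/-- increments made strictly monotone -/
def lineInc {k : ℕ} (N : ℕ) (f : (Fin (k+1) → ℝ) → ℝ) (w : Fin k → Fin (2*N+3))
    (j : Fin (2*N+1+1)) : ℤ :=
  lineVal N f w (j+1) - lineVal N f w j + 2 * (j : ℕ)

/-- the code of a function -/
def fcode {k : ℕ} (N : ℕ) (f : (Fin (k+1) → ℝ) → ℝ) (w : Fin k → Fin (2*N+3)) : ℤ × Finset ℤ :=
  (lineVal N f w 0, Finset.univ.image (lineInc N f w))

/-- the set of codes -/
def codes (k N : ℕ) : Finset ((Fin k → Fin (2*N+3)) → ℤ × Finset ℤ) :=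
  Fintype.piFinset fun _ =>
    (Finset.Icc (-((N^2 * (3*(k+1)+1) : ℕ) : ℤ)) ((N^2 * (3*(k+1)+1) : ℕ) : ℤ)) ×ˢ
    (Finset.Icc (-(((k+1)*N+1 : ℕ) : ℤ)) (((k+1)*N+1 + (4*N+2) : ℕ) : ℤ)).powerset

lemma card_codes (k N : ℕ) : (codes k N).card =
    ((2 * (N^2 * (3*(k+1)+1)) + 1) * 2 ^ (2 * ((k+1)*N+1) + (4*N+3))) ^ ((2*N+3)^k) := by
  unfold codes
  rw [Fintype.card_piFinset]
  simp only [Finset.card_product, Finset.card_powerset, Int.card_Icc, Finset.prod_const,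
    Finset.card_univ, Fintype.card_pi, Fintype.card_fin]
  congr 2
  · omega
  · congr 1; omega

lemma gp_diff {k N : ℕ} (hN : 1 ≤ N) (w : Fin k → Fin (2*N+3)) (j : ℕ) :
    ‖gp N (linePt N w (j+1)) - gp N (linePt N w j)‖ ≤ 1 / N := by
  rw [pi_norm_le_iff_of_nonneg (by positivity)]
  intro i
  refine Fin.cases ?_ (fun l => ?_) i
  · simp only [gp, linePt, Pi.sub_apply, Fin.cons_zero]
    rw [← sub_div]
    push_cast
    rw [show ((j:ℝ) + 1 - (N + 1) - (j - (N+1))) = 1 by ring]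
    simp
  · simp [gp, linePt]

lemma gp_norm {k N : ℕ} (hN : 1 ≤ N) (w : Fin k → Fin (2*N+3)) :
    ‖gp N (linePt N w 0)‖ ≤ 2 := by
  have hN' : (1:ℝ) ≤ N := by exact_mod_cast hN
  rw [pi_norm_le_iff_of_nonneg (by positivity)]
  intro i
  refine Fin.cases ?_ (fun l => ?_) i
  · simp only [gp, linePt, Fin.cons_zero, Real.norm_eq_abs]
    rw [abs_div, Nat.abs_cast, div_le_iff₀ (by positivity), abs_le]
    push_cast
    constructor <;> linarith
  · simp only [gp, linePt, Fin.cons_succ, Real.norm_eq_abs]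
    rw [abs_div, Nat.abs_cast, div_le_iff₀ (by positivity), abs_le]
    have : ((w l : ℕ) : ℝ) ≤ 2 * N + 2 := by
      have := (w l).2
      have h : (w l : ℕ) ≤ 2 * N + 2 := by omega
      exact_mod_cast h
    have h0 : (0:ℝ) ≤ ((w l : ℕ) : ℝ) := by positivity
    push_cast
    constructor <;> linarith

lemma fcode_mem {k N : ℕ} (hN : 1 ≤ N) {f : (Fin (k+1) → ℝ) → ℝ} (hf : f ∈ CF (k+1)) :
    fcode N f ∈ codes k N := by
  have hN' : (1:ℝ) ≤ N := by exact_mod_cast hN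
  obtain ⟨hc, hl, h0⟩ := hf
  unfold codes
  rw [Fintype.mem_piFinset]
  intro w
  rw [Finset.mem_product]
  constructor
  · simp only [fcode, lineVal, Finset.mem_Icc]
    have h1 := hl (gp N (linePt N w 0)) 0
    rw [sub_zero] at h1
    have h2 := gp_norm hN w
    have h3 : |f (gp N (linePt N w 0))| ≤ 3 * (k+1) + 1 := by
      have h4 : ((k+1 : ℕ):ℝ) * ‖gp N (linePt N w 0)‖ ≤ ((k+1 : ℕ):ℝ) * 2 := by gcongr
      push_cast at h1 h0 h4
      have h5 := abs_le.mp h1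
      have h6 := abs_le.mp h0
      rw [abs_le]
      constructor <;> linarith
    obtain ⟨h4, h5⟩ := abs_le.mp h3
    have hN2 : (0:ℝ) ≤ (N:ℝ)^2 := by positivity
    constructor
    · rw [Int.le_floor]; push_cast; nlinarith
    · rw [← Int.lt_add_one_iff, Int.floor_lt]; push_cast; nlinarith
  · simp only [fcode, Finset.mem_powerset]
    intro z hz
    simp only [Finset.mem_image, Finset.mem_univ, true_and] at hz
    obtain ⟨j, rfl⟩ := hz
    simp only [lineInc, lineVal, Finset.mem_Icc]
    have h1 := (hl (gp N (linePt N w (j+1))) (gp N (linePt N w j)))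
    have h2 := gp_diff hN w j
    have h3 : |(N:ℝ)^2 * f (gp N (linePt N w (j+1))) - (N:ℝ)^2 * f (gp N (linePt N w j))|
        ≤ (k+1) * N := by
      rw [← mul_sub, abs_mul, abs_of_nonneg (by positivity : (0:ℝ) ≤ (N:ℝ)^2)]
      calc (N:ℝ)^2 * _ ≤ (N:ℝ)^2 * (((k+1:ℕ):ℝ) * (1 / N)) := by
            gcongr
            exact h1.trans (by gcongr)
        _ = _ := by push_cast; field_simp
    obtain ⟨h4, h5⟩ := abs_le.mp h3
    set X := (N:ℝ)^2 * f (gp N (linePt N w (j+1)))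
    set Y := (N:ℝ)^2 * f (gp N (linePt N w j))
    have hX1 := Int.floor_le X
    have hX2 := Int.lt_floor_add_one X
    have hY1 := Int.floor_le Y
    have hY2 := Int.lt_floor_add_one Y
    have hj : (j:ℕ) ≤ 2*N+1 := by omega
    have h6 : ⌊X⌋ - ⌊Y⌋ ≤ (k+1) * N + 1 := by
      have : ((⌊X⌋ - ⌊Y⌋ : ℤ) : ℝ) ≤ (((k+1) * N + 1 : ℤ) : ℝ) := by
        push_cast; linarith
      exact_mod_cast this
    have h7 : -((k+1) * N + 1) ≤ ⌊X⌋ - ⌊Y⌋ := by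
      have : ((-((k+1) * N + 1) : ℤ) : ℝ) ≤ ((⌊X⌋ - ⌊Y⌋ : ℤ) : ℝ) := by
        push_cast; linarith
      exact_mod_cast this
    push_cast
    constructor
    · linarith [Int.natCast_nonneg (j:ℕ)]
    · have : ((j:ℕ):ℤ) ≤ 2*N+1 := by exact_mod_cast hj
      linarith

lemma lineInc_strictMono {k N : ℕ} {f : (Fin (k+1) → ℝ) → ℝ} (hf : f ∈ CF (k+1))
    (w : Fin k → Fin (2*N+3)) : StrictMono (lineInc N f w) := by
  obtain ⟨hc, hl, h0⟩ := hf
  rw [Fin.strictMono_iff_lt_succ]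
  intro i
  simp only [lineInc, Fin.val_castSucc, Fin.val_succ, lineVal]
  have hmid : f (gp N (linePt N w (i+1))) ≤
      (1/2:ℝ) * f (gp N (linePt N w (i+1+1))) + (1/2:ℝ) * f (gp N (linePt N w i)) := by
    have := hc.2 (mem_univ (gp N (linePt N w (i+1+1)))) (mem_univ (gp N (linePt N w i)))
      (by norm_num : (0:ℝ) ≤ 1/2) (by norm_num : (0:ℝ) ≤ 1/2) (by norm_num)
    simp only [smul_eq_mul] at this
    have heq : (1/2:ℝ) • gp N (linePt N w (i+1+1)) + (1/2:ℝ) • gp N (linePt N w i) =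
        gp N (linePt N w (i+1)) := by
      funext l
      refine Fin.cases ?_ (fun l => ?_) l
      · simp [gp, linePt]; ring
      · simp [gp, linePt]; ring
    rwa [heq] at this
  have hmid2 : 2 * ((N:ℝ)^2 * f (gp N (linePt N w (i+1)))) ≤
      (N:ℝ)^2 * f (gp N (linePt N w (i+1+1))) + (N:ℝ)^2 * f (gp N (linePt N w i)) := by
    have : (0:ℝ) ≤ (N:ℝ)^2 := by positivity
    nlinarith
  set X := (N:ℝ)^2 * f (gp N (linePt N w (i+1+1)))
  set Y := (N:ℝ)^2 * f (gp N (linePt N w (i+1)))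
  set Z := (N:ℝ)^2 * f (gp N (linePt N w i))
  have hX1 := Int.lt_floor_add_one X
  have hY1 := Int.floor_le Y
  have hZ1 := Int.lt_floor_add_one Z
  have : ((2 * ⌊Y⌋ : ℤ) : ℝ) < ((⌊X⌋ + ⌊Z⌋ + 2 : ℤ) : ℝ) := by push_cast; linarith
  have := Int.cast_lt.mp this
  push_cast
  linarith

lemma lineVal_eq {k N : ℕ} {f g : (Fin (k+1) → ℝ) → ℝ} (hf : f ∈ CF (k+1))
    (hg : g ∈ CF (k+1)) (hfg : fcode N f = fcode N g) (w : Fin k → Fin (2*N+3)) (j : ℕ)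
    (hj : j ≤ 2*N+2) : lineVal N f w j = lineVal N g w j := by
  have h := congrFun hfg w
  simp only [fcode, Prod.mk.injEq] at h
  obtain ⟨h1, h2⟩ := h
  have h3 : lineInc N f w = lineInc N g w := by
    apply ((lineInc_strictMono hf w).range_inj (lineInc_strictMono hg w)).mp
    have := congrArg (fun s : Finset ℤ => (s : Set ℤ)) h2
    simpa using this
  induction j with
  | zero => exact h1
  | succ j ih =>
    have h4 := congrFun h3 ⟨j, by omega⟩
    have h5 := ih (by omega)
    simp only [lineInc] at h4
    linarith

lemma grid_close {k N : ℕ} (hN : 1 ≤ N) {f g : (Fin (k+1) → ℝ) → ℝ} (hf : f ∈ CF (k+1))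
    (hg : g ∈ CF (k+1)) (hfg : fcode N f = fcode N g) (v : Fin (k+1) → ℤ)
    (hv : ∀ j, -((N:ℤ)+1) ≤ v j ∧ v j ≤ N+1) : |f (gp N v) - g (gp N v)| ≤ 1 / (N:ℝ)^2 := by
  have hN' : (1:ℝ) ≤ N := by exact_mod_cast hN
  let w : Fin k → Fin (2*N+3) := fun l => ⟨(v l.succ + (N+1)).toNat, by
    have := hv l.succ; omega⟩
  have hvw : v = linePt N w (v 0 + (N+1)).toNat := by
    ext i
    refine Fin.cases ?_ (fun l => ?_) i
    · have := hv 0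
      simp only [linePt, Fin.cons_zero]; omega
    · have := hv l.succ
      simp only [linePt, Fin.cons_succ, w]; omega
  have h := lineVal_eq hf hg hfg w (v 0 + (N+1)).toNat (by have := hv 0; omega)
  unfold lineVal at h
  rw [← hvw] at h
  have h1 := Int.abs_sub_lt_one_of_floor_eq_floor h
  rw [← mul_sub, abs_mul, abs_of_nonneg (by positivity : (0:ℝ) ≤ (N:ℝ)^2)] at h1
  rw [le_div_iff₀ (by positivity)]
  linarith

end


section

/-- indicator as integer vector -/
def ivec {m : ℕ} (τ : Finset (Fin m)) : Fin m → ℤ := fun j => if j ∈ τ then 1 else 0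

/-- second difference -/
def sdiff2 {m : ℕ} (N : ℕ) (f : (Fin m → ℝ) → ℝ) (v : Fin m → ℤ) (τ : Finset (Fin m)) : ℝ :=
  f (gp N (v + ivec τ)) + f (gp N (v - ivec τ)) - 2 * f (gp N v)

lemma ivec_range {m : ℕ} (τ : Finset (Fin m)) (j) : 0 ≤ ivec τ j ∧ ivec τ j ≤ 1 := by
  unfold ivec; split_ifs <;> simp

lemma sdiff2_nonneg {m N : ℕ} {f : (Fin m → ℝ) → ℝ} (hf : f ∈ CF m) (v : Fin m → ℤ)
    (τ : Finset (Fin m)) : 0 ≤ sdiff2 N f v τ := by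
  have := hf.1.2 (mem_univ (gp N (v + ivec τ))) (mem_univ (gp N (v - ivec τ)))
      (by norm_num : (0:ℝ) ≤ 1/2) (by norm_num : (0:ℝ) ≤ 1/2) (by norm_num)
  simp only [smul_eq_mul] at this
  have heq : (1/2:ℝ) • gp N (v + ivec τ) + (1/2:ℝ) • gp N (v - ivec τ) = gp N v := by
    funext l
    simp [gp]; ring
  rw [heq] at this
  unfold sdiff2
  linarith

/-- cell -/
def cellSet {m : ℕ} (N : ℕ) (v : Fin m → ℤ) : Set (Fin m → ℝ) :=
  Set.pi univ fun j => Icc ((v j : ℝ) / N) (((v j : ℝ) + 1) / N)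

lemma exists_vertex {m N : ℕ} {F : (Fin m → ℝ) → ℝ} (hF : ConvexOn ℝ univ F)
    (v : Fin m → ℤ) {y : Fin m → ℝ} (hy : y ∈ cellSet N v) :
    ∃ τ : Finset (Fin m), F y ≤ F (gp N (v + ivec τ)) := by
  classical
  have h1 : y ∈ convexHull ℝ (Set.pi univ fun j => ({(v j : ℝ) / N, ((v j : ℝ) + 1) / N} : Set ℝ)) := by
    rw [convexHull_pi]
    intro j _
    show y j ∈ convexHull ℝ ({(v j : ℝ) / N, ((v j : ℝ) + 1) / N} : Set ℝ)
    rw [convexHull_pair, segment_eq_Icc]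
    · exact hy j (mem_univ j)
    · gcongr; linarith
  obtain ⟨s, hs, hle⟩ := (hF.subset (subset_univ _) (convex_convexHull ℝ _)).exists_ge_of_mem_convexHull
    (subset_convexHull ℝ _) h1
  refine ⟨Finset.univ.filter (fun j => s j ≠ (v j : ℝ) / N), hle.trans_eq ?_⟩
  congr 1
  funext j
  have := hs j (mem_univ j)
  simp only [mem_insert_iff, mem_singleton_iff] at this
  by_cases h : s j = (v j : ℝ) / N
  · simp [gp, ivec, h]
  · have h2 := this.resolve_left h
    have h3 : j ∈ Finset.univ.filter (fun j => s j ≠ (v j : ℝ) / N) := by simp [h]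
    simp only [gp, ivec, Pi.add_apply, h3, if_true]
    rw [h2]; push_cast; rfl

lemma one_side {m N : ℕ} {f g h : (Fin m → ℝ) → ℝ} (hf : f ∈ CF m) (hg : g ∈ CF m)
    (hh : h ∈ CF m) {ε : ℝ} (v : Fin m → ℤ)
    (hfh : ∀ τ : Finset (Fin m), f (gp N (v + ivec τ)) ≤ h (gp N (v + ivec τ)) + ε)
    (hgh : ∀ τ : Finset (Fin m), g (gp N (v - ivec τ)) ≤ h (gp N (v - ivec τ)) + ε)
    (hv : h (gp N v) ≤ g (gp N v) + ε / 2)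
    {y : Fin m → ℝ} (hy : y ∈ cellSet N v) :
    f y - g y ≤ 3 * ε + ∑ τ, sdiff2 N h v τ := by
  have hconv : ConvexOn ℝ univ (fun y => f y + g ((2:ℝ) • gp N v - y)) := by
    refine ConvexOn.add hf.1 ?_
    refine ⟨convex_univ, fun y _ z _ a b ha hb hab => ?_⟩
    have := hg.1.2 (mem_univ ((2:ℝ) • gp N v - y)) (mem_univ ((2:ℝ) • gp N v - z)) ha hb hab
    convert this using 2
    have : (2:ℝ) • gp N v = (a + b) • ((2:ℝ) • gp N v) := by rw [hab, one_smul]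
    nth_rewrite 1 [this]
    module
  obtain ⟨τ, hτ⟩ := exists_vertex hconv v hy
  have e1 : (2:ℝ) • gp N v - gp N (v + ivec τ) = gp N (v - ivec τ) := by
    funext j; simp [gp]; ring
  simp only [e1] at hτ
  have h1 : 2 * g (gp N v) ≤ g y + g ((2:ℝ) • gp N v - y) := by
    have := hg.1.2 (mem_univ y) (mem_univ ((2:ℝ) • gp N v - y))
      (by norm_num : (0:ℝ) ≤ 1/2) (by norm_num : (0:ℝ) ≤ 1/2) (by norm_num)
    have e2 : (1/2:ℝ) • y + (1/2:ℝ) • ((2:ℝ) • gp N v - y) = gp N v := by module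
    rw [e2] at this
    simp only [smul_eq_mul] at this
    linarith
  have h2 : sdiff2 N h v τ ≤ ∑ τ, sdiff2 N h v τ :=
    Finset.single_le_sum (f := fun τ => sdiff2 N h v τ) (fun τ _ => sdiff2_nonneg hh v τ) (Finset.mem_univ τ)
  have h3 : sdiff2 N h v τ = h (gp N (v + ivec τ)) + h (gp N (v - ivec τ)) - 2 * h (gp N v) := rfl
  have := hfh τ
  have := hgh τ
  linarith

lemma cell_close {k N : ℕ} (hN : 1 ≤ N) {f g : (Fin (k+1) → ℝ) → ℝ} (hf : f ∈ CF (k+1))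
    (hg : g ∈ CF (k+1)) (hfg : fcode N f = fcode N g) (v : Fin (k+1) → ℤ)
    (hv : ∀ j, -(N:ℤ) ≤ v j ∧ v j < N) {y : Fin (k+1) → ℝ} (hy : y ∈ cellSet N v) :
    |g y - f y| ≤ 6 / (N:ℝ)^2 + ∑ τ, sdiff2 N f v τ := by
  have hN' : (1:ℝ) ≤ N := by exact_mod_cast hN
  have hgrid : ∀ u : Fin (k+1) → ℤ, (∀ j, -((N:ℤ)+1) ≤ u j ∧ u j ≤ N+1) →
      f (gp N u) - g (gp N u) ≤ 1 / (N:ℝ)^2 ∧ g (gp N u) - f (gp N u) ≤ 1 / (N:ℝ)^2 := by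
    intro u hu
    have := abs_le.mp (grid_close hN hf hg hfg u hu)
    constructor <;> linarith
  have hp : ∀ τ : Finset (Fin (k+1)), ∀ j, -((N:ℤ)+1) ≤ (v + ivec τ) j ∧ (v + ivec τ) j ≤ N+1 := by
    intro τ j
    have := hv j
    have := ivec_range τ j
    simp only [Pi.add_apply]; omega
  have hq : ∀ τ : Finset (Fin (k+1)), ∀ j, -((N:ℤ)+1) ≤ (v - ivec τ) j ∧ (v - ivec τ) j ≤ N+1 := by
    intro τ j
    have := hv j
    have := ivec_range τ j
    simp only [Pi.sub_apply]; omega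
  have h0 : ∀ j, -((N:ℤ)+1) ≤ v j ∧ v j ≤ N+1 := by
    intro j; have := hv j; omega
  have hpos : 0 ≤ 1 / (N:ℝ)^2 := by positivity
  have e6 : 6 / (N:ℝ)^2 = 3 * (2 * (1 / (N:ℝ)^2)) := by ring
  rw [e6, abs_le]
  constructor
  · have := one_side (N := N) (ε := 2 * (1 / (N:ℝ)^2)) hf hg hf v (fun τ => by linarith)
      (fun τ => by have := (hgrid _ (hq τ)).2; linarith)
      (by have := (hgrid _ h0).1; linarith) hy
    linarith
  · exact one_side (N := N) (ε := 2 * (1 / (N:ℝ)^2)) hg hf hf v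
      (fun τ => by have := (hgrid _ (hp τ)).2; linarith) (fun τ => by linarith) (by linarith) hy

/-- box of cells -/
def cellBox (m N : ℕ) : Finset (Fin m → ℤ) := Fintype.piFinset fun _ => Finset.Ico (-(N:ℤ)) N

lemma card_cellBox (m N : ℕ) : (cellBox m N).card = (2 * N) ^ m := by
  unfold cellBox
  rw [Fintype.card_piFinset]
  simp
  congr 1; omega

lemma sum_sdiff2 {m N : ℕ} (hN : 1 ≤ N) {f : (Fin m → ℝ) → ℝ} (hf : f ∈ CF m)
    (τ : Finset (Fin m)) : ∑ v ∈ cellBox m N, sdiff2 N f v τ ≤ m ^ 2 * 2 ^ m * (N:ℝ) ^ m / N ^ 2 := by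
  classical
  have hN' : (1:ℝ) ≤ N := by exact_mod_cast hN
  let h : (Fin m → ℤ) → ℝ := fun v => f (gp N (v + ivec τ)) - f (gp N v)
  have hh : ∀ v, |h v| ≤ m / N := by
    intro v
    refine (hf.2.1 _ _).trans ?_
    rw [div_eq_mul_one_div]
    gcongr
    rw [pi_norm_le_iff_of_nonneg (by positivity)]
    intro j
    have := ivec_range τ j
    simp only [gp, Pi.sub_apply, Pi.add_apply, Real.norm_eq_abs]
    rw [← sub_div, abs_div, Nat.abs_cast]
    gcongr
    push_cast
    rw [add_sub_cancel_left, abs_le]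
    constructor
    · have : (0:ℝ) ≤ ivec τ j := by exact_mod_cast this.1
      linarith
    · exact_mod_cast this.2
  have e1 : ∀ v, sdiff2 N f v τ = h v - h (v - ivec τ) := by
    intro v; simp only [sdiff2, h, sub_add_cancel]; ring
  let V := cellBox m N
  let V' := V.image (fun v => v - ivec τ)
  let W : Finset (Fin m → ℤ) := Fintype.piFinset fun _ => Finset.Ico (-(N:ℤ)) (N - 1)
  have hinj : Set.InjOn (fun v : Fin m → ℤ => v - ivec τ) V := fun a _ b _ hab => by
    simpa using hab
  have e2 : ∑ v ∈ V, h (v - ivec τ) = ∑ v ∈ V', h v := by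
    rw [Finset.sum_image hinj]
  have hWV : W ⊆ V := by
    intro v hv
    simp only [W, V, cellBox, Fintype.mem_piFinset, Finset.mem_Ico] at hv ⊢
    intro j; have := hv j; omega
  have hWV' : W ⊆ V' := by
    intro v hv
    simp only [V', Finset.mem_image]
    refine ⟨v + ivec τ, ?_, by simp⟩
    simp only [W, V, cellBox, Fintype.mem_piFinset, Finset.mem_Ico] at hv ⊢
    intro j; have := hv j; have := ivec_range τ j; simp only [Pi.add_apply]; omega
  have hcV : V.card = (2 * N) ^ m := card_cellBox m N
  have hcV' : V'.card = (2 * N) ^ m := by rw [Finset.card_image_of_injOn hinj, hcV]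
  have hcW : W.card = (2 * N - 1) ^ m := by
    simp only [W]
    rw [Fintype.card_piFinset]
    simp
    congr 1; omega
  have hbd : ∀ S : Finset (Fin m → ℤ), |∑ v ∈ S, h v| ≤ S.card * (m / N) := by
    intro S
    refine (Finset.abs_sum_le_sum_abs _ _).trans ?_
    calc ∑ v ∈ S, |h v| ≤ ∑ _v ∈ S, ((m:ℝ) / N) := Finset.sum_le_sum fun v _ => hh v
      _ = _ := by simp
  have hcard : ∀ S : Finset (Fin m → ℤ), W ⊆ S → S.card = (2 * N) ^ m →
      ((S \ W).card : ℝ) ≤ m * (2 * N) ^ m / (2 * N) := by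
    intro S hS hSc
    rw [Finset.card_sdiff_of_subset hS, hSc, hcW, Nat.cast_sub (Nat.pow_le_pow_left (by omega) m)]
    have h2N : (0:ℝ) < 2 * N := by positivity
    have hb := one_add_mul_le_pow (a := -(1 / (2 * (N:ℝ)))) (by
      have : 1 / (2 * (N:ℝ)) ≤ 1 := by rw [div_le_one h2N]; linarith
      linarith) m
    have e3 : ((2 * N - 1 : ℕ) : ℝ) = (2 * N) * (1 + -(1 / (2 * (N:ℝ)))) := by
      rw [Nat.cast_sub (by omega)]; push_cast; field_simp; ring
    have e4 : ((2 * N : ℕ) : ℝ) = 2 * N := by push_cast; rfl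
    rw [Nat.cast_pow, Nat.cast_pow, e3, e4, mul_pow (2 * (N:ℝ)) (1 + -(1 / (2 * (N:ℝ))))]
    have h3 : (0:ℝ) < (2 * N) ^ m := by positivity
    have h4 := mul_le_mul_of_nonneg_left hb h3.le
    have h5 : (2 * (N:ℝ)) ^ m * (1 + m * -(1 / (2 * (N:ℝ)))) =
      (2 * N) ^ m - m * (2 * N) ^ m / (2 * N) := by field_simp; ring
    linarith
  have e3 : ∑ v ∈ cellBox m N, sdiff2 N f v τ = ∑ v ∈ V \ W, h v - ∑ v ∈ V' \ W, h v := by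
    simp only [e1]
    rw [Finset.sum_sub_distrib, e2, ← Finset.sum_sdiff hWV, ← Finset.sum_sdiff hWV']
    ring
  rw [e3]
  have b1 := (abs_le.mp (hbd (V \ W))).2
  have b2 := (abs_le.mp (hbd (V' \ W))).1
  have c1 := hcard V hWV hcV
  have c2 := hcard V' hWV' hcV'
  have d0 : (0:ℝ) ≤ m / N := by positivity
  have d1 := mul_le_mul_of_nonneg_right c1 d0
  have d2 := mul_le_mul_of_nonneg_right c2 d0
  have d3 : m * (2 * (N:ℝ)) ^ m / (2 * N) * (m / N) * 2 = m ^ 2 * 2 ^ m * (N:ℝ) ^ m / N ^ 2 := by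
    rw [mul_pow]; field_simp
  linarith

/-- strip around the graph of `f` -/
def strip {m : ℕ} (i : Fin (m+1)) (σ : ℝ) (N : ℕ) (f : (Fin m → ℝ) → ℝ) : Set (E (m+1)) :=
  ⋃ v ∈ cellBox m N, slab i σ (cellSet N v) f (-(6 / (N:ℝ)^2 + ∑ τ, sdiff2 N f v τ))
    (6 / (N:ℝ)^2 + ∑ τ, sdiff2 N f v τ)

lemma CF_measurable {m : ℕ} {f : (Fin m → ℝ) → ℝ} (hf : f ∈ CF m) : Measurable f := by
  have : LipschitzWith m f := by
    apply LipschitzWith.of_dist_le_mul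
    intro x y
    rw [Real.dist_eq, dist_eq_norm]
    exact_mod_cast hf.2.1 x y
  exact this.continuous.measurable

lemma volume_cell {m N : ℕ} (v : Fin m → ℤ) :
    volume (cellSet N v) = ENNReal.ofReal ((1 / (N:ℝ)) ^ m) := by
  unfold cellSet
  rw [volume_pi_pi, ENNReal.ofReal_pow (by positivity)]
  simp only [Real.volume_Icc]
  rw [Finset.prod_congr rfl (g := fun _ => ENNReal.ofReal (1 / (N:ℝ)))]
  · simp
  · intro j _; congr 1; ring

lemma volume_strip {m N : ℕ} (hN : 1 ≤ N) (i : Fin (m+1)) {σ : ℝ} (hσ : σ = 1 ∨ σ = -1)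
    {f : (Fin m → ℝ) → ℝ} (hf : f ∈ CF m) :
    volume (strip i σ N f) ≤ ENNReal.ofReal ((12 * 2 ^ m + 2 * (m ^ 2 * 4 ^ m)) / (N:ℝ) ^ 2) := by
  have hN' : (1:ℝ) ≤ N := by exact_mod_cast hN
  have hnn : ∀ v, 0 ≤ ∑ τ, sdiff2 N f v τ := fun v => Finset.sum_nonneg fun τ _ => sdiff2_nonneg hf v τ
  unfold strip
  refine (measure_biUnion_finset_le _ _).trans ?_
  have e1 : ∀ v, volume (slab i σ (cellSet N v) f (-(6 / (N:ℝ)^2 + ∑ τ, sdiff2 N f v τ))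
      (6 / (N:ℝ)^2 + ∑ τ, sdiff2 N f v τ)) =
      ENNReal.ofReal ((1 / (N:ℝ)) ^ m * (2 * (6 / (N:ℝ)^2 + ∑ τ, sdiff2 N f v τ))) := by
    intro v
    have hcm : MeasurableSet (cellSet N v) := MeasurableSet.univ_pi fun _ => measurableSet_Icc
    rw [volume_slab i hσ hcm (CF_measurable hf),
      volume_cell, ENNReal.ofReal_mul (by positivity)]
    congr 2; ring
  simp only [e1]
  rw [← ENNReal.ofReal_sum_of_nonneg]
  · apply ENNReal.ofReal_le_ofReal
    rw [← Finset.mul_sum, ← Finset.mul_sum, Finset.sum_add_distrib, Finset.sum_comm]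
    have h1 : ∑ τ, ∑ v ∈ cellBox m N, sdiff2 N f v τ ≤
        2 ^ m * (m ^ 2 * 2 ^ m * (N:ℝ) ^ m / N ^ 2) := by
      calc ∑ τ, ∑ v ∈ cellBox m N, sdiff2 N f v τ ≤
          ∑ _τ : Finset (Fin m), (m ^ 2 * 2 ^ m * (N:ℝ) ^ m / N ^ 2) :=
            Finset.sum_le_sum fun τ _ => sum_sdiff2 hN hf τ
        _ = _ := by simp
    have h2 : ∑ _v ∈ cellBox m N, 6 / (N:ℝ)^2 = (2 * N) ^ m * (6 / (N:ℝ)^2) := by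
      rw [Finset.sum_const, card_cellBox]; simp
    rw [h2]
    calc (1 / (N:ℝ)) ^ m * (2 * ((2 * N) ^ m * (6 / (N:ℝ)^2) + ∑ τ, ∑ v ∈ cellBox m N, sdiff2 N f v τ))
        ≤ (1 / (N:ℝ)) ^ m * (2 * ((2 * N) ^ m * (6 / (N:ℝ)^2) +
          2 ^ m * (m ^ 2 * 2 ^ m * (N:ℝ) ^ m / N ^ 2))) := by gcongr
      _ = _ := by
        have : (4:ℝ) ^ m = 2 ^ m * 2 ^ m := by rw [← mul_pow]; norm_num
        rw [this, mul_pow, div_pow]; field_simp; ring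
  · intro v _
    have := hnn v
    positivity

lemma graph_subset_strip {k N : ℕ} (hN : 1 ≤ N) (i : Fin (k+1+1)) (σ : ℝ)
    {f g : (Fin (k+1) → ℝ) → ℝ} (hf : f ∈ CF (k+1))
    (hg : g ∈ CF (k+1)) (hfg : fcode N f = fcode N g) (x : E (k+1+1)) (hx : ∀ j, |x j| ≤ 1)
    (hxg : σ * x i = g (dropCoord i x)) : x ∈ strip i σ N f := by
  have hN' : (1:ℝ) ≤ N := by exact_mod_cast hN
  set y := dropCoord i x with hy
  have hyb : ∀ j, -1 ≤ y j ∧ y j ≤ 1 := fun j => abs_le.mp (hx (i.succAbove j))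
  let v : Fin (k+1) → ℤ := fun j => min ⌊(N:ℝ) * y j⌋ (N - 1)
  have hv : ∀ j, -(N:ℤ) ≤ v j ∧ v j < N := by
    intro j
    refine ⟨le_min ?_ (by omega), lt_of_le_of_lt (min_le_right _ _) (by omega)⟩
    rw [Int.le_floor]; push_cast; nlinarith [(hyb j).1]
  have hcell : y ∈ cellSet N v := by
    intro j _
    have h1 := Int.floor_le ((N:ℝ) * y j)
    have h2 := Int.lt_floor_add_one ((N:ℝ) * y j)
    rw [mem_Icc, div_le_iff₀ (by positivity), le_div_iff₀ (by positivity)]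
    constructor
    · have : (v j : ℝ) ≤ ⌊(N:ℝ) * y j⌋ := by exact_mod_cast min_le_left _ _
      linarith
    · rcases min_choice ⌊(N:ℝ) * y j⌋ ((N:ℤ) - 1) with h | h
      · simp only [v, h]; linarith
      · simp only [v, h]; push_cast; nlinarith [(hyb j).2]
  unfold strip
  simp only [mem_iUnion]
  refine ⟨v, ?_, hcell, ?_⟩
  · simp only [cellBox, Fintype.mem_piFinset, Finset.mem_Ico]; exact hv
  · rw [hxg]
    exact abs_le.mp (cell_close hN hf hg hfg v hv hcell)

end


section

/-- sign attached to a boolean -/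
def sgn (b : Bool) : ℝ := if b then 1 else -1

lemma sgn_eq (b : Bool) : sgn b = 1 ∨ sgn b = -1 := by
  cases b <;> simp [sgn]

lemma exists_support {m : ℕ} {X : Set (E (m+1))} (hX : X.Finite) (hcp : ConvexPosition X)
    {p : E (m+1)} (hp : p ∈ X) : ∃ e : Fin (m+1) × Bool, ∃ g : Fin m → ℝ, (∀ j, |g j| ≤ 1) ∧
      ∀ q ∈ X, sgn e.2 * p e.1 + ∑ j, g j * (dropCoord e.1 q j - dropCoord e.1 p j) ≤
        sgn e.2 * q e.1 := by
  have hcl : IsClosed (convexHull ℝ (X \ {p})) := 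
    ((hX.subset sdiff_subset).isCompact_convexHull (𝕜 := ℝ)).isClosed
  obtain ⟨f, u, hfp, hfq⟩ := geometric_hahn_banach_point_closed (convex_convexHull ℝ (X \ {p})) hcl
    (hcp p hp)
  let w : E (m+1) := (InnerProductSpace.toDual ℝ (E (m+1))).symm f
  have hw : ∀ q : E (m+1), f q = ∑ i, w i * q i := by
    intro q
    have h1 : f q = inner ℝ w q := by simp [w]
    rw [h1, PiLp.inner_apply]
    simp [mul_comm]
  have hle : ∀ q ∈ X, f p ≤ f q := by
    intro q hq
    by_cases h : q = p
    · rw [h]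
    · have := hfq q (subset_convexHull ℝ _ ⟨hq, h⟩)
      linarith
  by_cases hw0 : ∀ i, w i = 0
  · refine ⟨(0, true), 0, by simp, fun q hq => ?_⟩
    have hqp : q = p := by
      by_contra h
      have h2 := hfq q (subset_convexHull ℝ _ ⟨hq, h⟩)
      rw [hw] at h2 hfp
      simp [hw0] at h2 hfp
      linarith
    rw [hqp]; simp
  · push Not at hw0
    obtain ⟨i₀, hi₀⟩ := hw0
    obtain ⟨i, -, hi⟩ := Finset.exists_max_image (Finset.univ : Finset (Fin (m+1))) (fun i => |w i|)
      ⟨i₀, Finset.mem_univ _⟩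
    have hpos : 0 < |w i| := lt_of_lt_of_le (abs_pos.mpr hi₀) (hi i₀ (Finset.mem_univ _))
    obtain ⟨b, hb⟩ : ∃ b : Bool, w i = sgn b * |w i| := by
      rcases le_total 0 (w i) with h | h
      · exact ⟨true, by rw [abs_of_nonneg h]; simp [sgn]⟩
      · exact ⟨false, by rw [abs_of_nonpos h]; simp [sgn]⟩
    refine ⟨(i, b), fun j => -(w (i.succAbove j)) / |w i|, fun j => ?_, fun q hq => ?_⟩
    · rw [abs_div, abs_neg, abs_abs, div_le_one hpos]
      exact hi _ (Finset.mem_univ _)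
    · have h := hle q hq
      rw [hw, hw, Fin.sum_univ_succAbove _ i, Fin.sum_univ_succAbove _ i] at h
      simp only [dropCoord]
      have e1 : ∑ j, -(w (i.succAbove j)) / |w i| * (q (i.succAbove j) - p (i.succAbove j)) =
          (∑ j, w (i.succAbove j) * p (i.succAbove j) - ∑ j, w (i.succAbove j) * q (i.succAbove j))
            / |w i| := by
        rw [← Finset.sum_sub_distrib, Finset.sum_div]
        refine Finset.sum_congr rfl fun j _ => ?_
        ring
      rw [e1]
      have e2 : (∑ j, w (i.succAbove j) * p (i.succAbove j) - ∑ j, w (i.succAbove j) * q (i.succAbove j))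
            / |w i| ≤ sgn b * q i - sgn b * p i := by
        rw [div_le_iff₀ hpos]
        have e3 : (sgn b * q i - sgn b * p i) * |w i| = w i * q i - w i * p i := by
          linear_combination (p i - q i) * hb
        rw [e3]; linarith
      linarith

lemma sup_CF {ι : Type*} {m : ℕ} (P : Finset ι) (hP : P.Nonempty) (c : ι → ℝ) (g : ι → Fin m → ℝ)
    (hg : ∀ p ∈ P, ∀ j, |g p j| ≤ 1) (hc : ∀ p ∈ P, |c p| ≤ m + 1) :
    (fun y : Fin m → ℝ => P.sup' hP (fun p => c p + ∑ j, g p j * y j)) ∈ CF m := by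
  have hone : ∀ y z : Fin m → ℝ, P.sup' hP (fun p => c p + ∑ j, g p j * y j) ≤
      P.sup' hP (fun p => c p + ∑ j, g p j * z j) + m * ‖y - z‖ := by
    intro y z
    apply Finset.sup'_le
    intro p hp
    have h1 := Finset.le_sup' (fun p => c p + ∑ j, g p j * z j) hp
    have h2 : ∑ j, g p j * y j - ∑ j, g p j * z j ≤ m * ‖y - z‖ := by
      rw [← Finset.sum_sub_distrib]
      calc ∑ j, (g p j * y j - g p j * z j) ≤ ∑ _j : Fin m, ‖y - z‖ := by
            refine Finset.sum_le_sum fun j _ => ?_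
            rw [← mul_sub]
            refine (le_abs_self _).trans ?_
            rw [abs_mul]
            have h3 : |y j - z j| ≤ ‖y - z‖ := norm_le_pi_norm (y - z) j
            have h4 := hg p hp j
            have := abs_nonneg (g p j)
            have := abs_nonneg (y j - z j)
            nlinarith
        _ = _ := by simp
    linarith
  refine ⟨⟨convex_univ, fun y _ z _ a b ha hb hab => ?_⟩, fun y z => ?_, ?_⟩
  · apply Finset.sup'_le
    intro p hp
    have h1 := Finset.le_sup' (fun p => c p + ∑ j, g p j * y j) hp
    have h2 := Finset.le_sup' (fun p => c p + ∑ j, g p j * z j) hp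
    have h3 := mul_le_mul_of_nonneg_left h1 ha
    have h4 := mul_le_mul_of_nonneg_left h2 hb
    have e : c p + ∑ j, g p j * (a • y + b • z) j =
        a * (c p + ∑ j, g p j * y j) + b * (c p + ∑ j, g p j * z j) := by
      have : ∑ j, g p j * (a • y + b • z) j = a * ∑ j, g p j * y j + b * ∑ j, g p j * z j := by
        rw [Finset.mul_sum, Finset.mul_sum, ← Finset.sum_add_distrib]
        refine Finset.sum_congr rfl fun j _ => ?_
        simp; ring
      rw [this]
      have : c p = (a + b) * c p := by rw [hab, one_mul]
      linear_combination this
    rw [e]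
    simp only [smul_eq_mul]
    exact add_le_add h3 h4
  · rw [abs_le]
    have h1 := hone y z
    have h2 := hone z y
    rw [norm_sub_rev] at h2
    constructor <;> linarith
  · obtain ⟨p, hp⟩ := hP
    rw [abs_le]
    constructor
    · have h1 := Finset.le_sup' (fun p => c p + ∑ j, g p j * (0 : Fin m → ℝ) j) hp
      have h2 := (abs_le.mp (hc p hp)).1
      refine le_trans ?_ h1
      simpa using h2
    · apply Finset.sup'_le
      intro q hq
      have h2 := (abs_le.mp (hc q hq)).2
      simpa using h2

lemma zero_CF (m : ℕ) : (fun _ => 0 : (Fin m → ℝ) → ℝ) ∈ CF m := by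
  refine ⟨convexOn_const 0 convex_univ, fun y z => ?_, ?_⟩
  · simp; positivity
  · simp; positivity

lemma exists_funcs {m : ℕ} {X : Set (E (m+1))} (hX : X.Finite) (hcp : ConvexPosition X)
    (hb : ∀ p ∈ X, ∀ j, |p j| ≤ 1) : ∃ F : Fin (m+1) × Bool → (Fin m → ℝ) → ℝ,
      (∀ e, F e ∈ CF m) ∧ ∀ p ∈ X, ∃ e, sgn e.2 * p e.1 = F e (dropCoord e.1 p) := by
  classical
  choose! e g hg hs using fun p (hp : p ∈ X) => exists_support hX hcp hp
  let P : Fin (m+1) × Bool → Finset (E (m+1)) := fun a => hX.toFinset.filter (fun p => e p = a)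
  let c : Fin (m+1) × Bool → E (m+1) → ℝ := fun a p => sgn a.2 * p a.1 - ∑ j, g p j * dropCoord a.1 p j
  have hPX : ∀ a p, p ∈ P a → p ∈ X ∧ e p = a := by
    intro a p hp; simpa [P] using hp
  refine ⟨fun a => if h : (P a).Nonempty then
      fun y => (P a).sup' h (fun p => c a p + ∑ j, g p j * y j) else fun _ => 0, fun a => ?_, fun p hp => ?_⟩
  · by_cases h : (P a).Nonempty
    · simp only [h, dif_pos]
      refine sup_CF (P a) h (c a) g (fun p hp => hg p (hPX a p hp).1) (fun p hp => ?_)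
      have hpX := (hPX a p hp).1
      have h1 : |sgn a.2 * p a.1| ≤ 1 := by
        rw [abs_mul]
        rcases sgn_eq a.2 with h | h <;> rw [h] <;> simp [hb p hpX a.1]
      have h2 : |∑ j, g p j * dropCoord a.1 p j| ≤ m := by
        refine (Finset.abs_sum_le_sum_abs _ _).trans ?_
        calc ∑ j, |g p j * dropCoord a.1 p j| ≤ ∑ _j : Fin m, (1:ℝ) := by
              refine Finset.sum_le_sum fun j _ => ?_
              rw [abs_mul]
              exact mul_le_one₀ (hg p hpX j) (abs_nonneg _) (hb p hpX _)
          _ = m := by simp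
      simp only [c]
      refine (abs_sub _ _).trans ?_
      linarith
    · simp only [h, dif_neg, not_false_eq_true]
      exact zero_CF m
  · have hpP : p ∈ P (e p) := by simp [P, hp]
    have h : (P (e p)).Nonempty := ⟨p, hpP⟩
    refine ⟨e p, ?_⟩
    simp only [h, dif_pos]
    apply le_antisymm
    · refine le_trans ?_ (Finset.le_sup' (fun q => c (e p) q + ∑ j, g q j * dropCoord (e p).1 p j) hpP)
      simp [c]
    · apply Finset.sup'_le
      intro q hq
      obtain ⟨hqX, hqe⟩ := hPX _ _ hq
      have h3 := hs q hqX p hp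
      rw [hqe] at h3
      simp only [c]
      simp only [mul_sub, Finset.sum_sub_distrib] at h3
      linarith

/-- region attached to a code -/
def region (k N : ℕ) (c : Fin (k+1+1) × Bool → ((Fin k → Fin (2*N+3)) → ℤ × Finset ℤ)) :
    Set (E (k+1+1)) :=
  ⋃ e : Fin (k+1+1) × Bool, {x | ∃ h : ∃ f, f ∈ CF (k+1) ∧ fcode N f = c e,
    x ∈ strip e.1 (sgn e.2) N h.choose}

lemma measurableSet_strip {m N : ℕ} (i : Fin (m+1)) (σ : ℝ) {f : (Fin m → ℝ) → ℝ} (hf : f ∈ CF m) :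
    MeasurableSet (strip i σ N f) := by
  unfold strip
  refine Finset.measurableSet_biUnion _ fun v _ => ?_
  have hcm : MeasurableSet (cellSet N v) := MeasurableSet.univ_pi fun _ => measurableSet_Icc
  exact measurableSet_slab i σ hcm (CF_measurable hf) _ _

lemma measurableSet_region (k N : ℕ) (c) : MeasurableSet (region k N c) := by
  refine MeasurableSet.iUnion fun e => ?_
  by_cases h : ∃ f, f ∈ CF (k+1) ∧ fcode N f = c e
  · simp only [h, exists_true_left]
    exact measurableSet_strip _ _ h.choose_spec.1
  · simp [h]

lemma volume_region {k N : ℕ} (hN : 1 ≤ N) (c) : volume (region k N c) ≤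
    ENNReal.ofReal (2 * (k+2) * ((12 * 2 ^ (k+1) + 2 * ((k+1) ^ 2 * 4 ^ (k+1))) / (N:ℝ) ^ 2)) := by
  refine (measure_iUnion_fintype_le _ _).trans ?_
  have h1 : ∀ e : Fin (k+1+1) × Bool, volume {x | ∃ h : ∃ f, f ∈ CF (k+1) ∧ fcode N f = c e,
    x ∈ strip e.1 (sgn e.2) N h.choose} ≤
      ENNReal.ofReal ((12 * 2 ^ (k+1) + 2 * ((k+1) ^ 2 * 4 ^ (k+1))) / (N:ℝ) ^ 2) := by
    intro e
    by_cases h : ∃ f, f ∈ CF (k+1) ∧ fcode N f = c e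
    · simp only [h, exists_true_left]
      have := volume_strip hN e.1 (sgn_eq e.2) h.choose_spec.1
      push_cast at this
      exact this
    · simp [h]
  refine (Finset.sum_le_sum fun e _ => h1 e).trans_eq ?_
  rw [Finset.sum_const, nsmul_eq_mul, ENNReal.ofReal_mul (by positivity)]
  congr 1
  simp only [Finset.card_univ, Fintype.card_prod, Fintype.card_fin, Fintype.card_bool]
  rw [← ENNReal.ofReal_natCast]
  congr 1
  push_cast; ring

lemma exists_code_s4 {k N : ℕ} (hN : 1 ≤ N) {X : Set (E (k+1+1))} (hX : X.Finite)
    (hcp : ConvexPosition X) (hb : ∀ p ∈ X, ∀ j, |p j| ≤ 1) :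
    ∃ c ∈ Fintype.piFinset (fun _ : Fin (k+1+1) × Bool => codes k N), X ⊆ region k N c := by
  obtain ⟨F, hF, hFX⟩ := exists_funcs hX hcp hb
  refine ⟨fun e => fcode N (F e), ?_, fun p hp => ?_⟩
  · rw [Fintype.mem_piFinset]; exact fun e => fcode_mem hN (hF e)
  · obtain ⟨e, he⟩ := hFX p hp
    have h : ∃ f, f ∈ CF (k+1) ∧ fcode N f = fcode N (F e) := ⟨F e, hF e, rfl⟩
    refine mem_iUnion.mpr ⟨e, h, ?_⟩
    exact graph_subset_strip hN e.1 _ h.choose_spec.1 (hF e) h.choose_spec.2 p (hb p hp) he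

end


section

lemma measureReal_all {d n : ℕ} {K : Set (E d)} (h0 : volume K ≠ 0) (h1 : volume K ≠ ⊤)
    (s : Finset (Fin n)) (R : Set (E d)) :
    (sampleMeasure d n K).real {x | ∀ i ∈ s, x i ∈ R} = (unifOn d K).real R ^ s.card := by
  classical
  have hpu := unifOn_prob h0 h1
  have e0 : {x : Fin n → E d | ∀ i ∈ s, x i ∈ R} =
      Set.pi univ (fun i => if i ∈ s then R else univ) := by
    refine Set.ext fun x => ?_
    simp only [mem_ofPred_eq, Set.mem_pi, mem_univ, true_imp_iff]
    refine forall_congr' fun i => ?_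
    by_cases h : i ∈ s <;> simp [h]
  rw [e0, measureReal_def, sampleMeasure, Measure.pi_pi, ENNReal.toReal_prod]
  have e1 : ∀ i : Fin n, (unifOn d K (if i ∈ s then R else univ)).toReal =
      if i ∈ s then (unifOn d K).real R else 1 := by
    intro i
    by_cases h : i ∈ s <;> simp [h, measureReal_def]
  simp only [e1]
  rw [Finset.prod_ite]
  simp

lemma upper_count {k n N : ℕ} (hN : 1 ≤ N) {K : Set (E (k+1+1))} (hK : MeasurableSet K)
    (h0 : volume K ≠ 0) (h1 : volume K ≠ ⊤) (hb : ∀ x ∈ K, ∀ i, |x i| ≤ 1) {p : ℝ}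
    (hp : ∀ c, (unifOn (k+1+1) K).real (region k N c) ≤ p) :
    ∫ x, (numPolytopes (k+1+1) n x : ℝ) ∂(sampleMeasure (k+1+1) n K) ≤
      ((codes k N).card : ℝ) ^ (2 * (k+2)) * (1 + p) ^ n := by
  classical
  have hpu := unifOn_prob h0 h1
  have hps := sample_prob (n := n) h0 h1
  set CC := Fintype.piFinset (fun _ : Fin (k+1+1) × Bool => codes k N) with hCC
  have hae : ∀ᵐ x ∂(sampleMeasure (k+1+1) n K), ∀ i, x i ∈ K := by
    rw [ae_all_iff]
    intro i
    have h2 : ∀ᵐ y ∂(unifOn (k+1+1) K), y ∈ K := by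
      unfold unifOn
      exact Measure.ae_smul_measure (ae_restrict_mem hK) _
    exact (Measure.tendsto_eval_ae_ae (μ := fun _ : Fin n => unifOn (k+1+1) K) (i := i)).eventually h2
  have hm : ∀ (c) (s : Finset (Fin n)), MeasurableSet {x : Fin n → E (k+1+1) | ∀ i ∈ s, x i ∈ region k N c} := by
    intro c s
    have : {x : Fin n → E (k+1+1) | ∀ i ∈ s, x i ∈ region k N c} =
        ⋂ i ∈ s, (fun x : Fin n → E (k+1+1) => x i) ⁻¹' region k N c := by
      refine Set.ext fun x => ?_
      simp
    rw [this]
    exact Finset.measurableSet_biInter _ fun i _ => (measurable_pi_apply i) (measurableSet_region k N c)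
  have hintg : ∀ (c) (s : Finset (Fin n)), Integrable (indicator {x : Fin n → E (k+1+1) |
      ∀ i ∈ s, x i ∈ region k N c} (fun _ => (1:ℝ))) (sampleMeasure (k+1+1) n K) := fun c s =>
    (integrable_const 1).indicator (hm c s)
  have hle : ∀ᵐ x ∂(sampleMeasure (k+1+1) n K), (numPolytopes (k+1+1) n x : ℝ) ≤
      ∑ c ∈ CC, ∑ s : Finset (Fin n), indicator {x : Fin n → E (k+1+1) |
        ∀ i ∈ s, x i ∈ region k N c} (fun _ => (1:ℝ)) x := by
    filter_upwards [hae] with x hx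
    rw [numPolytopes_eq_sum, Finset.sum_comm]
    refine Finset.sum_le_sum fun s _ => ?_
    have hnn : ∀ c ∈ CC, 0 ≤ indicator {x : Fin n → E (k+1+1) |
        ∀ i ∈ s, x i ∈ region k N c} (fun _ => (1:ℝ)) x := fun c _ =>
      indicator_nonneg (fun _ _ => zero_le_one) _
    by_cases h : x ∈ {x : Fin n → E (k+1+1) | 3 ≤ s.card ∧ ConvexPosition (x '' ↑s)}
    · rw [indicator_of_mem h]
      obtain ⟨c, hc, hcs⟩ := exists_code_s4 hN ((s.finite_toSet).image x) h.2 (by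
        rintro _ ⟨i, _, rfl⟩
        exact hb _ (hx i))
      refine le_trans ?_ (Finset.single_le_sum hnn hc)
      rw [indicator_of_mem]
      intro i hi
      exact hcs ⟨i, hi, rfl⟩
    · rw [indicator_of_notMem h]
      exact Finset.sum_nonneg hnn
  have hp0 : 0 ≤ p := le_trans measureReal_nonneg (hp (fun _ _ => (0, ∅)))
  calc ∫ x, (numPolytopes (k+1+1) n x : ℝ) ∂(sampleMeasure (k+1+1) n K)
      ≤ ∫ x, ∑ c ∈ CC, ∑ s : Finset (Fin n), indicator {x : Fin n → E (k+1+1) |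
        ∀ i ∈ s, x i ∈ region k N c} (fun _ => (1:ℝ)) x ∂(sampleMeasure (k+1+1) n K) :=
        integral_mono_ae (integrable_numPolytopes h0 h1)
          (integrable_finsetSum _ fun c _ => integrable_finsetSum _ fun s _ => hintg c s) hle
    _ = ∑ c ∈ CC, ∑ s : Finset (Fin n), (unifOn (k+1+1) K).real (region k N c) ^ s.card := by
        rw [integral_finsetSum _ fun c _ => integrable_finsetSum _ fun s _ => hintg c s]
        refine Finset.sum_congr rfl fun c _ => ?_
        rw [integral_finsetSum _ fun s _ => hintg c s]
        refine Finset.sum_congr rfl fun s _ => ?_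
        rw [integral_indicator_const _ (hm c s), measureReal_all h0 h1]
        simp
    _ ≤ ∑ _c ∈ CC, (1 + p) ^ n := by
        refine Finset.sum_le_sum fun c _ => ?_
        have h2 := Fintype.sum_pow_mul_eq_add_pow (Fin n) ((unifOn (k+1+1) K).real (region k N c)) 1
        simp only [one_pow, mul_one, Fintype.card_fin] at h2
        rw [h2, add_comm]
        gcongr
        exact hp c
    _ = _ := by
        rw [Finset.sum_const, hCC, Fintype.card_piFinset]
        simp only [nsmul_eq_mul, Finset.prod_const, Finset.card_univ, Fintype.card_prod,
          Fintype.card_fin, Fintype.card_bool]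
        push_cast
        congr 2
        ring

/-- dimensional constant -/
def upA (k : ℕ) : ℝ := (k+2) ^ (k+2) * (2 * (k+2) * (12 * 2 ^ (k+1) + 2 * ((k+1) ^ 2 * 4 ^ (k+1))))

lemma upA_pos (k : ℕ) : 0 < upA k := by unfold upA; positivity

lemma unif_region {k N : ℕ} (hN : 1 ≤ N) {K : Set (E (k+1+1))}
    (hin : ∀ x : E (k+1+1), (∀ i, |x i| ≤ 1 / (2 * ((k + 1 + 1 : ℕ) : ℝ))) → x ∈ K) (c) :
    (unifOn (k+1+1) K).real (region k N c) ≤ upA k / (N:ℝ)^2 := by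
  have hvol : ENNReal.ofReal ((1 / ((k:ℝ) + 2)) ^ (k+2)) ≤ volume K := by
    have h1 := volume_box (m := k+1+1) (-(1 / (2 * ((k + 1 + 1 : ℕ) : ℝ)))) (1 / (2 * ((k + 1 + 1 : ℕ) : ℝ)))
      (by have : 0 ≤ (1 / (2 * ((k + 1 + 1 : ℕ) : ℝ))) := by positivity
          linarith)
    have e : (1 / (2 * ((k + 1 + 1 : ℕ) : ℝ))) - -(1 / (2 * ((k + 1 + 1 : ℕ) : ℝ))) = 1 / ((k:ℝ) + 2) := by
      push_cast; field_simp; ring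
    rw [e] at h1
    rw [← h1]
    refine measure_mono fun x hx => hin x fun i => abs_le.mpr (hx i)
  have hR := volume_region hN c
  have h2 : unifOn (k+1+1) K (region k N c) ≤ ENNReal.ofReal (upA k / (N:ℝ)^2) := by
    unfold unifOn
    rw [Measure.smul_apply, smul_eq_mul]
    calc (volume K)⁻¹ * (volume.restrict K) (region k N c)
        ≤ (ENNReal.ofReal ((1 / ((k:ℝ) + 2)) ^ (k+2)))⁻¹ * volume (region k N c) :=
          mul_le_mul' (ENNReal.inv_le_inv.mpr hvol) (Measure.restrict_apply_le _ _)
      _ ≤ (ENNReal.ofReal ((1 / ((k:ℝ) + 2)) ^ (k+2)))⁻¹ * _ := mul_le_mul' le_rfl hR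
      _ = _ := by
        rw [← ENNReal.ofReal_inv_of_pos (by positivity), ← ENNReal.ofReal_mul (by positivity)]
        congr 1
        unfold upA
        rw [one_div, inv_pow, inv_inv]
        ring
  rw [measureReal_def]
  exact ENNReal.toReal_le_of_le_ofReal (div_nonneg (upA_pos k).le (by positivity)) h2

lemma log_card_codes {k N : ℕ} (hN : 1 ≤ N) :
    Real.log (codes k N).card ≤ 5 ^ k * (8 * k + 22) * (N:ℝ) ^ (k+1) := by
  have hN' : (1:ℝ) ≤ N := by exact_mod_cast hN
  rw [card_codes]
  push_cast
  rw [Real.log_pow, Real.log_mul (by positivity) (by positivity), Real.log_pow]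
  have h1 : Real.log (2 * ((N:ℝ)^2 * (3 * (k+1) + 1)) + 1) ≤ (6 * k + 11) * N := by
    calc Real.log (2 * ((N:ℝ)^2 * (3 * (k+1) + 1)) + 1) ≤ Real.log ((6 * k + 9) * (N:ℝ)^2) := by
          apply Real.log_le_log (by positivity)
          nlinarith
      _ = Real.log (6 * k + 9) + 2 * Real.log N := by
          rw [Real.log_mul (by positivity) (by positivity), Real.log_pow]; norm_num
      _ ≤ (6 * k + 9) + 2 * N := by
          have := Real.log_le_self (show (0:ℝ) ≤ 6 * k + 9 by positivity)
          have := Real.log_le_self (show (0:ℝ) ≤ N by positivity)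
          linarith
      _ ≤ _ := by
          have : (0:ℝ) ≤ k := by positivity
          nlinarith
  have h2 : ((2 * ((k+1) * N + 1) + (4 * N + 3) : ℕ) : ℝ) * Real.log 2 ≤ (2 * k + 11) * N := by
    have hl : Real.log 2 ≤ 1 := by have := Real.log_two_lt_d9; linarith
    have hl0 : 0 ≤ Real.log 2 := Real.log_nonneg (by norm_num)
    calc ((2 * ((k+1) * N + 1) + (4 * N + 3) : ℕ) : ℝ) * Real.log 2
        ≤ ((2 * ((k+1) * N + 1) + (4 * N + 3) : ℕ) : ℝ) * 1 := by gcongr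
      _ ≤ _ := by push_cast; nlinarith
  push_cast at h2 ⊢
  calc (2 * (N:ℝ) + 3) ^ k * (Real.log (2 * ((N:ℝ)^2 * (3 * (k+1) + 1)) + 1) +
        (2 * ((k+1) * N + 1) + (4 * N + 3)) * Real.log 2)
      ≤ (5 * (N:ℝ)) ^ k * ((6 * k + 11) * N + (2 * k + 11) * N) := by
        have hpos : 0 ≤ Real.log (2 * ((N:ℝ)^2 * (3 * (k+1) + 1)) + 1) :=
          Real.log_nonneg (by have : 0 ≤ (N:ℝ)^2 * (3 * (k+1) + 1) := by positivity
                              linarith)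
        gcongr
        linarith
    _ = _ := by rw [mul_pow]; ring

lemma upper_final (k : ℕ) : ∃ c₂ : ℝ, 0 < c₂ ∧ ∀ n : ℕ, 1 ≤ n → ∀ K : Set (E (k+1+1)),
    MeasurableSet K → volume K ≠ 0 → volume K ≠ ⊤ →
    (∀ x : E (k+1+1), (∀ i, |x i| ≤ 1 / (2 * ((k + 1 + 1 : ℕ) : ℝ))) → x ∈ K) →
    (∀ x ∈ K, ∀ i, |x i| ≤ 1) →
    0 < ∫ x, (numPolytopes (k+1+1) n x : ℝ) ∂(sampleMeasure (k+1+1) n K) →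
    Real.log (∫ x, (numPolytopes (k+1+1) n x : ℝ) ∂(sampleMeasure (k+1+1) n K)) ≤
      c₂ * (n : ℝ) ^ (((k+1 : ℕ) : ℝ) / ((k+1 : ℕ) + 2)) := by
  refine ⟨2 * (k+2) * (5 ^ k * (8 * k + 22) * 2 ^ (k+1)) + upA k, by have := upA_pos k; positivity, ?_⟩
  intro n hn K hK h0 h1 hin hb hpos
  have hn' : (1:ℝ) ≤ n := by exact_mod_cast hn
  set t : ℝ := (n:ℝ) ^ ((1:ℝ) / (k + 3)) with ht
  have ht1 : 1 ≤ t := Real.one_le_rpow hn' (by positivity)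
  have htn : t ^ (k+3) = n := by
    rw [ht, ← Real.rpow_natCast, ← Real.rpow_mul (by positivity)]
    push_cast
    rw [one_div, inv_mul_cancel₀ (by positivity), Real.rpow_one]
  have htm : (n : ℝ) ^ (((k+1 : ℕ) : ℝ) / ((k+1 : ℕ) + 2)) = t ^ (k+1) := by
    rw [ht, ← Real.rpow_natCast, ← Real.rpow_mul (by positivity)]
    congr 1
    push_cast
    rw [one_div_mul_eq_div]
    congr 1; ring
  rw [htm]
  set N : ℕ := ⌈t⌉₊ with hNdef
  have hN : 1 ≤ N := Nat.one_le_ceil_iff.mpr (by linarith)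
  have hN1 : t ≤ N := Nat.le_ceil t
  have hN2 : (N:ℝ) ≤ 2 * t := by
    have := Nat.ceil_lt_add_one (show 0 ≤ t by linarith)
    linarith
  have hup := upper_count (n := n) hN hK h0 h1 hb (fun c => unif_region hN hin c)
  have hA := upA_pos k
  have hcpos : (0:ℝ) < (codes k N).card := by rw [card_codes]; positivity
  have hN0 : (0:ℝ) < N := by linarith
  have hlog1 : Real.log (1 + upA k / (N:ℝ)^2) ≤ upA k / (N:ℝ)^2 := by
    have := Real.log_le_sub_one_of_pos (show 0 < 1 + upA k / (N:ℝ)^2 by positivity)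
    linarith
  calc Real.log (∫ x, (numPolytopes (k+1+1) n x : ℝ) ∂(sampleMeasure (k+1+1) n K))
      ≤ Real.log (((codes k N).card : ℝ) ^ (2 * (k+2)) * (1 + upA k / (N:ℝ)^2) ^ n) :=
        Real.log_le_log hpos hup
    _ = (2 * (k+2)) * Real.log (codes k N).card + n * Real.log (1 + upA k / (N:ℝ)^2) := by
        rw [Real.log_mul (by positivity) (by positivity), Real.log_pow, Real.log_pow]
        push_cast; rfl
    _ ≤ (2 * (k+2)) * (5 ^ k * (8 * k + 22) * (N:ℝ) ^ (k+1)) + n * (upA k / (N:ℝ)^2) := by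
        gcongr
        exact log_card_codes hN
    _ ≤ (2 * (k+2)) * (5 ^ k * (8 * k + 22) * (2 * t) ^ (k+1)) + n * (upA k / t^2) := by
        gcongr
    _ = _ := by
        rw [← htn, mul_pow]
        field_simp
        ring

theorem main_thm (d : ℕ) (hd : 2 ≤ d) :
    ∃ c₁ c₂ : ℝ, 0 < c₁ ∧ 0 < c₂ ∧
      ∀ (K : Set (E d)), IsCompact K → Convex ℝ K → (interior K).Nonempty →
        ∃ N : ℕ, ∀ n : ℕ, N ≤ n →
          c₁ * (n : ℝ) ^ (((d : ℝ) - 1) / ((d : ℝ) + 1)) ≤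
              Real.log (∫ x, (numPolytopes d n x : ℝ) ∂(sampleMeasure d n K)) ∧
          Real.log (∫ x, (numPolytopes d n x : ℝ) ∂(sampleMeasure d n K)) ≤
              c₂ * (n : ℝ) ^ (((d : ℝ) - 1) / ((d : ℝ) + 1)) := by
  obtain ⟨k, rfl⟩ : ∃ k, d = k + 1 + 1 := ⟨d - 2, by omega⟩
  obtain ⟨c₁, hc₁, N0, hlow⟩ := lower_final (k+1) (by omega)
  obtain ⟨c₂, hc₂, hupp⟩ := upper_final k
  refine ⟨c₁, c₂, hc₁, hc₂, fun K hK hc hi => ⟨max N0 1, fun n hn => ?_⟩⟩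
  have hn0 : N0 ≤ n := le_trans (le_max_left _ _) hn
  have hn1 : 1 ≤ n := le_trans (le_max_right _ _) hn
  obtain ⟨L, b, hin, hb⟩ := exists_normalize (by omega) hK hc hi
  have h0 : volume K ≠ 0 := by
    have := isOpen_interior.measure_pos volume hi
    exact (lt_of_lt_of_le this (measure_mono interior_subset)).ne'
  have h1 : volume K ≠ ⊤ := hK.measure_lt_top.ne
  have hK' : IsCompact (affMap L b '' K) := by
    refine hK.image ?_
    unfold affMap
    fun_prop
  have h1' : volume (affMap L b '' K) ≠ ⊤ := hK'.measure_lt_top.ne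
  have h0' : volume (affMap L b '' K) ≠ 0 := by
    have hop : IsOpenMap (affMap L b) :=
      (Homeomorph.addRight b).isOpenMap.comp L.toHomeomorph.isOpenMap
    have := (hop _ isOpen_interior).measure_pos volume (hi.image (affMap L b))
    exact (lt_of_lt_of_le this (measure_mono (image_mono interior_subset))).ne'
  have hintg := integral_affMap (n := n) L b h0 h1
  obtain ⟨hpos, hl⟩ := hlow n hn0 _ hin hb
  have hu := hupp n hn1 _ hK'.measurableSet h0' h1' hin hb hpos
  rw [hintg] at hl hu
  have e : (((k + 1 + 1 : ℕ) : ℝ) - 1) / (((k + 1 + 1 : ℕ) : ℝ) + 1) =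
      ((k+1 : ℕ) : ℝ) / ((k+1 : ℕ) + 2) := by
    push_cast; congr 1 <;> ring
  rw [e]
  exact ⟨hl, hu⟩

end

/-- For every convex body `K ⊆ ℝ^d` there are constants `c₁, c₂ > 0` depending only on `d`
with `c₁ n^{(d-1)/(d+1)} ≤ log E|Q(X_n)| ≤ c₂ n^{(d-1)/(d+1)}` for all large `n`. -/
theorem log_expected_number_of_polytopes (d : ℕ) (hd : 2 ≤ d) :
    ∃ c₁ c₂ : ℝ, 0 < c₁ ∧ 0 < c₂ ∧
      ∀ (K : Set (E d)), IsCompact K → Convex ℝ K → (interior K).Nonempty →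
        ∃ N : ℕ, ∀ n : ℕ, N ≤ n →
          c₁ * (n : ℝ) ^ (((d : ℝ) - 1) / ((d : ℝ) + 1)) ≤
              Real.log (∫ x, (numPolytopes d n x : ℝ) ∂(sampleMeasure d n K)) ∧
          Real.log (∫ x, (numPolytopes d n x : ℝ) ∂(sampleMeasure d n K)) ≤
              c₂ * (n : ℝ) ^ (((d : ℝ) - 1) / ((d : ℝ) + 1)) := by
  exact main_thm d hd
end
end
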